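/- arXiv:2512.14966 — 5 statements merged into one kernel-verified Lean document; each statement's English description precedes it below -/
import Mathlib

section
/- Let d ∈ ℕ with d ≥ 1. Then for every k ≥ 19^(2d−1) + 1 and every homeomorphism F : S_{ℓ∞^k} → S_{ℓ1^k} that does not increase support size, one has ω_F(1/d) ≥ 1/2, i.e., there exist x, y ∈ S_{ℓ∞^k} with ‖x − y‖_∞ ≤ 1/d and ‖F(x) − F(y)‖_1 ≥ 1/2. -/
/-- The sup norm (`ℓ∞` norm) on `ℝ^k`. -/
noncomputable def supNorm {k : ℕ} (x : Fin k → ℝ) : ℝ := ⨆ i, |x i|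

/-- The `ℓ1` norm on `ℝ^k`. -/
noncomputable def l1Norm {k : ℕ} (x : Fin k → ℝ) : ℝ := ∑ i, |x i|

open Filter Topology

/-- The sign `1` or `-1` encoded by a Boolean. -/
def boolSign (b : Bool) : ℝ := if b then 1 else -1

lemma boolSign_mul_self (b : Bool) : boolSign b * boolSign b = 1 := by
  cases b <;> simp [boolSign]

lemma abs_boolSign (b : Bool) : |boolSign b| = 1 := by
  cases b <;> simp [boolSign]

/-- The closed orthant of `ℝ^k` with the given signs. -/
def closedOrthant {k : ℕ} (ε : Fin k → Bool) : Set (Fin k → ℝ) :=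
  {x | ∀ i, 0 ≤ boolSign (ε i) * x i}

section Orthants

variable {k : ℕ}

lemma boolSign_decide_mul_nonneg (a : ℝ) : 0 ≤ boolSign (decide (0 ≤ a)) * a := by
  by_cases h : 0 ≤ a
  · simp [boolSign, h]
  · simp only [boolSign, h, decide_false, Bool.false_eq_true, if_false]
    linarith

lemma exists_mem_closedOrthant (x : Fin k → ℝ) : ∃ ε, x ∈ closedOrthant ε :=
  ⟨fun i => decide (0 ≤ x i), fun i => boolSign_decide_mul_nonneg (x i)⟩

lemma abs_eq_boolSign_mul {b : Bool} {a : ℝ} (h : 0 ≤ boolSign b * a) :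
    |a| = boolSign b * a := by
  rw [← abs_of_nonneg h, abs_mul, abs_boolSign, one_mul]

lemma closedOrthant_unique {x : Fin k → ℝ} (hx : ∀ i, x i ≠ 0) {ε δ : Fin k → Bool}
    (hε : x ∈ closedOrthant ε) (hδ : x ∈ closedOrthant δ) : ε = δ := by
  funext i
  have h1 := hε i
  have h2 := hδ i
  have h3 := hx i
  cases h : ε i <;> cases h' : δ i <;> simp [boolSign, h, h'] at h1 h2 ⊢ <;>
    exact h3 (le_antisymm (by assumption) (by assumption))

lemma supNorm_eq_one_iff [NeZero k] (x : Fin k → ℝ) :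
    supNorm x = 1 ↔ (∀ i, |x i| ≤ 1) ∧ ∃ i, |x i| = 1 := by
  have hb : BddAbove (Set.range fun i => |x i|) := (Set.finite_range _).bddAbove
  constructor
  · intro h
    refine ⟨fun i => h ▸ le_ciSup hb i, ?_⟩
    obtain ⟨i, hi⟩ := exists_eq_ciSup_of_finite (f := fun i => |x i|)
    exact ⟨i, hi.trans h⟩
  · rintro ⟨h, i, hi⟩
    exact le_antisymm (ciSup_le h) (hi ▸ le_ciSup hb i)

/-- A map continuous on `S` whose values along the segment issuing from `y ∈ S` lie in a
closed orthant takes a value in that orthant at `y`. -/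
lemma mem_closedOrthant_of_segment {S : Set (Fin k → ℝ)} {H : (Fin k → ℝ) → Fin k → ℝ}
    (hH : ContinuousOn H S) {y u : Fin k → ℝ} (hy : y ∈ S) {δ : Fin k → Bool}
    (h : ∀ t : ℝ, 0 < t → t ≤ 1 →
      (1 - t) • y + t • u ∈ S ∧ H ((1 - t) • y + t • u) ∈ closedOrthant δ) :
    H y ∈ closedOrthant δ := by
  have hlim : Tendsto (fun t : ℝ => (1 - t) • y + t • u) (𝓝[>] 0) (𝓝 y) := by
    have : Continuous fun t : ℝ => (1 - t) • y + t • u := by fun_prop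
    have h0 := this.tendsto 0
    simp only [sub_zero, one_smul, zero_smul, add_zero] at h0
    exact h0.mono_left nhdsWithin_le_nhds
  have hev : ∀ᶠ t : ℝ in 𝓝[>] 0, 0 < t ∧ t ≤ 1 := by
    filter_upwards [Ioc_mem_nhdsGT (zero_lt_one' ℝ)] with t ht using ht
  have hlimS : Tendsto (fun t : ℝ => (1 - t) • y + t • u) (𝓝[>] 0) (𝓝[S] y) :=
    tendsto_nhdsWithin_iff.2 ⟨hlim, hev.mono fun t ht => (h t ht.1 ht.2).1⟩
  have hHlim := (hH y hy).tendsto.comp hlimS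
  intro i
  have hi := ((tendsto_pi_nhds.1 hHlim) i).const_mul (boolSign (δ i))
  exact ge_of_tendsto hi (hev.mono fun t ht => (h t ht.1 ht.2).2 i)

/-- A map on the `ℓ1` sphere that preserves full support maps each closed orthant into a
closed orthant. -/
lemma exists_closedOrthant_image [NeZero k] {G : (Fin k → ℝ) → Fin k → ℝ}
    (hGcont : ContinuousOn G {y | l1Norm y = 1})
    (hfull : ∀ y, l1Norm y = 1 → (∀ i, y i ≠ 0) → ∀ i, G y i ≠ 0) (ε : Fin k → Bool) :
    ∃ δ, ∀ y, l1Norm y = 1 → y ∈ closedOrthant ε → G y ∈ closedOrthant δ := by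
  set U : Set (Fin k → ℝ) :=
    {y | (∀ i, 0 < boolSign (ε i) * y i) ∧ ∑ i, boolSign (ε i) * y i = 1} with hU
  have hk : (0 : ℝ) < k := by exact_mod_cast Nat.pos_of_ne_zero (NeZero.ne k)
  have hUS : U ⊆ {y | l1Norm y = 1} := by
    rintro y ⟨h1, h2⟩
    rw [Set.mem_ofPred_eq, l1Norm, ← h2]
    exact Finset.sum_congr rfl fun i _ => abs_eq_boolSign_mul (h1 i).le
  have hUfull : ∀ y ∈ U, ∀ i, G y i ≠ 0 := fun y hy =>
    hfull y (hUS hy) fun i h0 => by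
      have := hy.1 i
      simp [h0] at this
  have hconv : Convex ℝ U := by
    rintro y ⟨hy1, hy2⟩ z ⟨hz1, hz2⟩ a b ha hb hab
    constructor
    · intro i
      have h1 := hy1 i
      have h2 := hz1 i
      have e : boolSign (ε i) * (a • y + b • z) i =
          a * (boolSign (ε i) * y i) + b * (boolSign (ε i) * z i) := by
        simp only [Pi.add_apply, Pi.smul_apply, smul_eq_mul]; ring
      rw [e]
      rcases ha.eq_or_lt with h | h
      · obtain rfl : b = 1 := by linarith
        simpa [← h] using h2
      · have := mul_pos h h1
        have := mul_nonneg hb h2.le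
        linarith
    · calc ∑ i, boolSign (ε i) * (a • y + b • z) i
          = a * ∑ i, boolSign (ε i) * y i + b * ∑ i, boolSign (ε i) * z i := by
            rw [Finset.mul_sum, Finset.mul_sum, ← Finset.sum_add_distrib]
            refine Finset.sum_congr rfl fun i _ => ?_
            simp only [Pi.add_apply, Pi.smul_apply, smul_eq_mul]; ring
        _ = 1 := by rw [hy2, hz2]; linarith
  set u : Fin k → ℝ := fun i => boolSign (ε i) / k with hu
  have hui : ∀ i, boolSign (ε i) * u i = 1 / k := fun i => by
    simp only [hu]
    rw [← mul_div_assoc, boolSign_mul_self]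
  have huU : u ∈ U := by
    refine ⟨fun i => by rw [hui]; positivity, ?_⟩
    simp only [hui, Finset.sum_const, Finset.card_univ, Fintype.card_fin, nsmul_eq_mul]
    field_simp
  refine ⟨fun i => decide (0 ≤ G u i), ?_⟩
  have hopen : ∀ y ∈ U, G y ∈ closedOrthant fun i => decide (0 ≤ G u i) := by
    intro y hy i
    have hpre : IsPreconnected ((fun z => G z i) '' U) :=
      hconv.isPreconnected.image _
        ((continuous_apply i).comp_continuousOn (hGcont.mono hUS))
    have hord := hpre.ordConnected
    have h0 : (0 : ℝ) ∉ (fun z => G z i) '' U := by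
      rintro ⟨z, hz, hz0⟩
      exact hUfull z hz i hz0
    by_cases h : 0 ≤ G u i
    · simp only [h, decide_true, boolSign, if_true, one_mul]
      by_contra! hneg
      exact h0 (hord.out ⟨y, hy, rfl⟩ ⟨u, huU, rfl⟩ ⟨hneg.le, h⟩)
    · simp only [h, decide_false, boolSign, Bool.false_eq_true, if_false]
      by_contra! hneg
      exact h0 (hord.out ⟨u, huU, rfl⟩ ⟨y, hy, rfl⟩
        ⟨(not_le.1 h).le, by simp only; linarith⟩)
  intro y hy1 hyε
  refine mem_closedOrthant_of_segment hGcont (u := u) hy1 fun t ht0 ht1 => ?_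
  have hmem : (1 - t) • y + t • u ∈ U := by
    have e : ∀ i, boolSign (ε i) * ((1 - t) • y + t • u) i =
        (1 - t) * (boolSign (ε i) * y i) + t * (boolSign (ε i) * u i) := fun i => by
      simp only [Pi.add_apply, Pi.smul_apply, smul_eq_mul]; ring
    constructor
    · intro i
      rw [e]
      have := mul_nonneg (sub_nonneg.2 ht1) (hyε i)
      have := mul_pos ht0 (huU.1 i)
      linarith
    · simp only [e]
      rw [Finset.sum_add_distrib, ← Finset.mul_sum, ← Finset.mul_sum, huU.2]
      have : ∑ i, boolSign (ε i) * y i = 1 := by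
        rw [← hy1, l1Norm]
        exact Finset.sum_congr rfl fun i _ => (abs_eq_boolSign_mul (hyε i)).symm
      rw [this]; ring
  exact ⟨hUS hmem, hopen _ hmem⟩

/-- A homeomorphism between the spheres that does not increase support size permutes the
closed orthants. -/
lemma exists_orthant_bijection [NeZero k] {F G : (Fin k → ℝ) → Fin k → ℝ}
    (hFmaps : ∀ x, supNorm x = 1 → l1Norm (F x) = 1)
    (hGmaps : ∀ y, l1Norm y = 1 → supNorm (G y) = 1)
    (hFcont : ContinuousOn F {x | supNorm x = 1})
    (hGcont : ContinuousOn G {y | l1Norm y = 1})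
    (hGF : ∀ x, supNorm x = 1 → G (F x) = x)
    (hFG : ∀ y, l1Norm y = 1 → F (G y) = y)
    (hsupp : ∀ x, supNorm x = 1 → {i | F x i ≠ 0}.ncard ≤ {i | x i ≠ 0}.ncard) :
    ∃ φ : (Fin k → Bool) → (Fin k → Bool), Function.Surjective φ ∧
      ∀ ε x, supNorm x = 1 → (F x ∈ closedOrthant ε ↔ x ∈ closedOrthant (φ ε)) := by
  have hfull : ∀ y, l1Norm y = 1 → (∀ i, y i ≠ 0) → ∀ i, G y i ≠ 0 := by
    intro y hy hne i
    have h := hsupp (G y) (hGmaps y hy)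
    rw [hFG y hy] at h
    have h1 : {i | y i ≠ 0} = Set.univ := Set.eq_univ_of_forall hne
    have h2 := Set.eq_of_subset_of_ncard_le (Set.subset_univ _) (h1 ▸ h) (Set.toFinite _)
    have : i ∈ {i | G y i ≠ 0} := h2 ▸ Set.mem_univ i
    exact this
  choose φ hφ using exists_closedOrthant_image hGcont hfull
  have hvert : ∀ ε : Fin k → Bool, supNorm (fun i => boolSign (ε i)) = 1 := fun ε =>
    (supNorm_eq_one_iff _).2
      ⟨fun i => (abs_boolSign _).le, 0, abs_boolSign _⟩
  have hFφ : ∀ x δ, supNorm x = 1 → F x ∈ closedOrthant δ → x ∈ closedOrthant (φ δ) := by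
    intro x δ hx h
    have := hφ δ (F x) (hFmaps x hx) h
    rwa [hGF x hx] at this
  have hsurj : Function.Surjective φ := by
    intro ε'
    obtain ⟨ε, hε⟩ := exists_mem_closedOrthant (F fun i => boolSign (ε' i))
    refine ⟨ε, closedOrthant_unique (fun i => ?_) (hFφ _ _ (hvert ε') hε) fun i => ?_⟩
    · intro h
      have := abs_boolSign (ε' i)
      rw [h] at this
      simp at this
    · rw [boolSign_mul_self]; exact zero_le_one
  have hinj : Function.Injective φ := Finite.injective_iff_surjective.2 hsurj
  refine ⟨φ, hsurj, fun ε x hx => ⟨hFφ x ε hx, fun hxε => ?_⟩⟩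
  have hopen : ∀ z, supNorm z = 1 → (∀ i, z i ≠ 0) → z ∈ closedOrthant (φ ε) →
      F z ∈ closedOrthant ε := by
    intro z hz hne hzε
    obtain ⟨δ, hδ⟩ := exists_mem_closedOrthant (F z)
    have := closedOrthant_unique hne (hFφ z δ hz hδ) hzε
    rwa [← hinj this]
  refine mem_closedOrthant_of_segment hFcont (u := fun i => boolSign (φ ε i)) hx
    fun t ht0 ht1 => ?_
  set z : Fin k → ℝ := (1 - t) • x + t • fun i => boolSign (φ ε i) with hz
  have e : ∀ i, boolSign (φ ε i) * z i = (1 - t) * |x i| + t := fun i => by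
    rw [abs_eq_boolSign_mul (hxε i)]
    simp only [hz, Pi.add_apply, Pi.smul_apply, smul_eq_mul]
    linear_combination t * boolSign_mul_self (φ ε i)
  have hpos : ∀ i, 0 < boolSign (φ ε i) * z i := fun i => by
    rw [e]
    have := mul_nonneg (sub_nonneg.2 ht1) (abs_nonneg (x i))
    linarith
  have habs : ∀ i, |z i| = (1 - t) * |x i| + t := fun i => by
    rw [abs_eq_boolSign_mul (hpos i).le, e]
  have hzS : supNorm z = 1 := by
    obtain ⟨h1, i, hi⟩ := (supNorm_eq_one_iff x).1 hx
    refine (supNorm_eq_one_iff z).2 ⟨fun j => ?_, i, ?_⟩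
    · rw [habs]
      nlinarith [h1 j]
    · rw [habs, hi]; ring
  refine ⟨hzS, hopen z hzS (fun i h0 => ?_) fun i => (hpos i).le⟩
  have := hpos i
  simp [h0] at this

/-- Up to a permutation of coordinates, a homeomorphism between the spheres that does not
increase support size maps nonnegative vectors to vectors with smaller support. -/
lemma exists_perm_support [NeZero k] {F G : (Fin k → ℝ) → Fin k → ℝ}
    (hFmaps : ∀ x, supNorm x = 1 → l1Norm (F x) = 1)
    (hGmaps : ∀ y, l1Norm y = 1 → supNorm (G y) = 1)
    (hFcont : ContinuousOn F {x | supNorm x = 1})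
    (hGcont : ContinuousOn G {y | l1Norm y = 1})
    (hGF : ∀ x, supNorm x = 1 → G (F x) = x)
    (hFG : ∀ y, l1Norm y = 1 → F (G y) = y)
    (hsupp : ∀ x, supNorm x = 1 → {i | F x i ≠ 0}.ncard ≤ {i | x i ≠ 0}.ncard) :
    ∃ π : Equiv.Perm (Fin k), ∀ x, supNorm x = 1 → (∀ i, 0 ≤ x i) →
      ∀ i, x i = 0 → F x (π i) = 0 := by
  obtain ⟨φ, hsurj, hφ⟩ :=
    exists_orthant_bijection hFmaps hGmaps hFcont hGcont hGF hFG hsupp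
  set e : Fin k → Fin k → ℝ := fun i => Pi.single i 1 with he
  have heS : ∀ i, supNorm (e i) = 1 := fun i => by
    refine (supNorm_eq_one_iff _).2 ⟨fun j => ?_, i, by simp [he]⟩
    by_cases h : j = i
    · subst h; simp [he]
    · simp [he, h]
  have hp : ∀ i, ∃ p, ∀ j, j ≠ p → F (e i) j = 0 := by
    intro i
    have h := hsupp (e i) (heS i)
    have h1 : {j | e i j ≠ 0} = {i} := by
      ext j
      by_cases h : j = i
      · subst h; simp [he]
      · simp [he, h]
    rw [h1, Set.ncard_singleton, Set.ncard_le_one] at h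
    by_cases hex : ∃ p, F (e i) p ≠ 0
    · obtain ⟨p, hp⟩ := hex
      exact ⟨p, fun j hj => by_contra fun hne => hj (h j hne p hp)⟩
    · push Not at hex
      exact ⟨i, fun j _ => hex j⟩
  choose p hp using hp
  have hval : ∀ i, |F (e i) (p i)| = 1 := by
    intro i
    rw [← hFmaps (e i) (heS i), l1Norm,
      Finset.sum_eq_single (p i) (fun j _ hj => by rw [hp i j hj, abs_zero]) (by simp)]
  have hinj : Function.Injective p := by
    intro i j hij
    obtain ⟨ε, hε⟩ := hsurj fun _ => true
    have hmem : ∀ l, F (e l) ∈ closedOrthant ε := fun l => by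
      rw [hφ ε _ (heS l), hε]
      intro m
      by_cases h : m = l
      · subst h; simp [he, boolSign]
      · simp [he, h]
    have hFe : F (e i) = F (e j) := by
      funext m
      by_cases hm : m = p i
      · have h1 := abs_eq_boolSign_mul (hmem i (p i))
        have h2 := abs_eq_boolSign_mul (hmem j (p i))
        have h3 := hval j
        rw [← hij, h2] at h3
        rw [hval i] at h1
        have hne : boolSign (ε (p i)) ≠ 0 := fun h0 => by simp [h0] at h1
        rw [hm]
        exact mul_left_cancel₀ hne (h1.symm.trans h3.symm)
      · rw [hp i m hm, hp j m (hij ▸ hm)]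
    have hee : e i = e j := by rw [← hGF _ (heS i), hFe, hGF _ (heS j)]
    by_contra hne
    have := congrFun hee i
    simp [he, hne] at this
  refine ⟨Equiv.ofBijective p (Finite.injective_iff_bijective.1 hinj), ?_⟩
  set π := Equiv.ofBijective p (Finite.injective_iff_bijective.1 hinj) with hπ
  intro x hx hx0 i hi
  have key : ∀ b, 0 ≤ boolSign b * F x (π i) := by
    intro b
    set ε : Fin k → Bool :=
      Function.update (fun j => decide (0 ≤ F (e (π.symm j)) j)) (π i) b with hε
    have hmem : x ∈ closedOrthant (φ ε) := by
      intro j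
      by_cases hj : x j = 0
      · simp [hj]
      · have hji : π j ≠ π i := fun h => hj (π.injective h ▸ hi)
        have hFe : F (e j) ∈ closedOrthant ε := by
          intro m
          by_cases hm : m = π j
          · subst hm
            rw [hε, Function.update_of_ne hji]
            simp only [Equiv.symm_apply_apply]
            exact boolSign_decide_mul_nonneg _
          · rw [hp j m hm, mul_zero]
        have := (hφ ε _ (heS j)).1 hFe j
        simp only [he, Pi.single_eq_same, mul_one] at this
        exact mul_nonneg this (hx0 j)
    have := (hφ ε x hx).2 hmem (π i)
    rwa [hε, Function.update_self] at this
  have h1 := key true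
  have h2 := key false
  simp only [boolSign, if_true, Bool.false_eq_true, if_false] at h1 h2
  linarith

end Orthants

/-- Summing over all relabellings, two positions carrying the same value of `g` receive the
same total weight. -/
lemma sum_perm_apply_eq {α : Type*} [Fintype α] [DecidableEq α] (Φ : (α → ℝ) → α → ℝ)
    (g : α → ℝ) {p q : α} (h : g p = g q) :
    ∑ σ : Equiv.Perm α, Φ (g ∘ σ.symm) (σ p) = ∑ σ : Equiv.Perm α, Φ (g ∘ σ.symm) (σ q) := by
  rw [← Equiv.sum_comp (Equiv.mulRight (Equiv.swap p q))]
  refine Finset.sum_congr rfl fun σ _ => ?_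
  have hg : g ∘ (σ * Equiv.swap p q).symm = g ∘ σ.symm := by
    funext i
    have : (σ * Equiv.swap p q).symm i = Equiv.swap p q (σ.symm i) := by
      rw [Equiv.symm_apply_eq]; simp
    simp only [Function.comp_apply, this]
    rcases eq_or_ne (σ.symm i) p with h1 | h1
    · rw [h1, Equiv.swap_apply_left, h]
    rcases eq_or_ne (σ.symm i) q with h2 | h2
    · rw [h2, Equiv.swap_apply_right, h]
    · rw [Equiv.swap_apply_of_ne_of_ne h1 h2]
  simp only [Equiv.coe_mulRight, hg]
  simp

/-- If the two children `2n+1`, `2n+2` of every node `n` in `T` lie outside `T` and weigh at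
least as much as `n`, then `T` carries at most a third of the total weight. -/
lemma three_mul_sum_filter_le {k : ℕ} {w : ℕ → ℝ} (hw : ∀ n, 0 ≤ w n)
    (hk : ∀ n, k ≤ n → w n = 0) (T : ℕ → Prop) [DecidablePred T]
    (h1 : ∀ n, T n → ¬ T (2 * n + 1) ∧ w n ≤ w (2 * n + 1))
    (h2 : ∀ n, T n → ¬ T (2 * n + 2) ∧ w n ≤ w (2 * n + 2)) :
    3 * ∑ n ∈ Finset.range k with T n, w n ≤ ∑ n ∈ Finset.range k, w n := by
  set f : ℕ → ℝ := fun n => if ¬ T n then w n else 0 with hf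
  have hf0 : ∀ n, 0 ≤ f n := fun n => by
    simp only [hf]; split_ifs <;> simp [hw n]
  have hind : ∀ m, 2 * ∑ n ∈ Finset.range m, (if T n then w n else 0) ≤
      ∑ n ∈ Finset.range (2 * m + 1), f n := by
    intro m
    induction m with
    | zero => simpa using hf0 0
    | succ m ih =>
      rw [Finset.sum_range_succ, show 2 * (m + 1) + 1 = 2 * m + 1 + 1 + 1 by ring,
        Finset.sum_range_succ _ (2 * m + 1 + 1), Finset.sum_range_succ _ (2 * m + 1)]
      have : 2 * (if T m then w m else 0) ≤ f (2 * m + 1) + f (2 * m + 1 + 1) := by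
        by_cases hT : T m
        · have a := h1 m hT
          have b := h2 m hT
          simp only [hf, hT, if_true, a.1, b.1, not_false_eq_true]
          linarith [a.2, b.2]
        · simp only [hT, if_false, mul_zero]
          linarith [hf0 (2 * m + 1), hf0 (2 * m + 1 + 1)]
      linarith
  have htail : ∑ n ∈ Finset.range (2 * k + 1), f n = ∑ n ∈ Finset.range k, f n := by
    symm
    refine Finset.sum_subset (Finset.range_mono (by omega)) fun n _ hn => ?_
    have : w n = 0 := hk n (by simpa using hn)
    simp [hf, this]
  have h := hind k
  rw [htail, ← Finset.sum_filter, hf, ← Finset.sum_filter] at h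
  have := Finset.sum_filter_add_sum_filter_not (Finset.range k) T w
  linarith

/-- The version of `three_mul_sum_filter_le` for the weight that a map `Φ` gives to
positions, averaged over all relabellings of the coordinates. -/
lemma three_mul_sum_perm_le {k : ℕ} (Φ : (Fin k → ℝ) → Fin k → ℝ) (hΦ : ∀ x i, 0 ≤ Φ x i)
    (g : ℕ → ℝ)
    (hone : ∀ σ : Equiv.Perm (Fin k), ∑ i, Φ ((fun n : Fin k => g n) ∘ σ.symm) i = 1)
    (hzero : ∀ (σ : Equiv.Perm (Fin k)) (p : Fin k), g p = 0 →
      Φ ((fun n : Fin k => g n) ∘ σ.symm) (σ p) = 0)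
    (T : ℕ → Prop) [DecidablePred T]
    (h1 : ∀ n, T n → ¬ T (2 * n + 1) ∧ g n = g (2 * n + 1))
    (h2 : ∀ n, T n → ¬ T (2 * n + 2) ∧ g n = g (2 * n + 2))
    (hk : ∀ n, T n → g n ≠ 0 → 2 * n + 2 < k) :
    3 * ∑ σ : Equiv.Perm (Fin k), ∑ p : Fin k with T (Fin.val p),
      Φ ((fun n : Fin k => g n) ∘ σ.symm) (σ p) ≤ Fintype.card (Equiv.Perm (Fin k)) := by
  set u : Fin k → ℝ := fun p => ∑ σ : Equiv.Perm (Fin k),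
    Φ ((fun n : Fin k => g n) ∘ σ.symm) (σ p) with hu
  have hu0 : ∀ p, 0 ≤ u p := fun p => Finset.sum_nonneg fun σ _ => hΦ _ _
  set w : ℕ → ℝ := fun n => if h : n < k then u ⟨n, h⟩ else 0 with hw
  have hw0 : ∀ n, 0 ≤ w n := fun n => by
    simp only [hw]; split_ifs
    · exact hu0 _
    · exact le_rfl
  have hchild : ∀ n m, T n → m ≤ 2 * n + 2 → g n = g m → w n ≤ w m := by
    intro n m hT hm hg
    by_cases hn : n < k
    · by_cases hz : g n = 0
      · have : w n = 0 := by
          simp only [hw, hn, dif_pos, hu]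
          exact Finset.sum_eq_zero fun σ _ => hzero σ ⟨n, hn⟩ hz
        rw [this]; exact hw0 m
      · have hmk : m < k := hm.trans_lt (hk n hT hz)
        simp only [hw, hn, hmk, dif_pos]
        exact (sum_perm_apply_eq Φ (fun n : Fin k => g n)
          (p := ⟨n, hn⟩) (q := ⟨m, hmk⟩) hg).le
    · have : w n = 0 := by simp [hw, hn]
      rw [this]; exact hw0 m
  have h := three_mul_sum_filter_le hw0 (k := k)
    (fun n hn => by simp [hw, not_lt.2 hn]) T
    (fun n hT => ⟨(h1 n hT).1, hchild n _ hT (by omega) (h1 n hT).2⟩)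
    (fun n hT => ⟨(h2 n hT).1, hchild n _ hT (by omega) (h2 n hT).2⟩)
  rw [Finset.sum_filter, Finset.sum_range, Finset.sum_range] at h
  have hwu : ∀ p : Fin k, w p = u p := fun p => by simp [hw]
  simp only [hwu] at h
  have htot : ∑ p, u p = Fintype.card (Equiv.Perm (Fin k)) := by
    simp only [hu]
    rw [Finset.sum_comm]
    have : ∀ σ : Equiv.Perm (Fin k),
        ∑ p, Φ ((fun n : Fin k => g n) ∘ σ.symm) (σ p) = 1 := fun σ => by
      rw [Equiv.sum_comp σ (Φ ((fun n : Fin k => g n) ∘ σ.symm)), hone]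
    simp [this]
  rw [htot, ← Finset.sum_filter] at h
  rw [Finset.sum_comm]
  exact h

/-- A nonnegative step profile relabelled by a permutation lies on the `ℓ∞` sphere. -/
lemma supNorm_relabel_eq_one {k : ℕ} [NeZero k] (g : ℕ → ℝ) (h0 : g 0 = 1)
    (hg : ∀ n, 0 ≤ g n ∧ g n ≤ 1) (σ : Equiv.Perm (Fin k)) :
    supNorm ((fun n : Fin k => g n) ∘ σ.symm) = 1 := by
  refine (supNorm_eq_one_iff _).2 ⟨fun i => ?_, σ 0, ?_⟩
  · simp only [Function.comp_apply]
    rw [abs_of_nonneg (hg _).1]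
    exact (hg _).2
  · simp [h0]

lemma natLog_two_children (n : ℕ) :
    Nat.log 2 (2 * n + 1 + 1) = Nat.log 2 (n + 1) + 1 ∧
      Nat.log 2 (2 * n + 2 + 1) = Nat.log 2 (n + 1) + 1 := by
  constructor
  · rw [Nat.log_of_one_lt_of_le (by norm_num) (by omega)]
    congr 2; omega
  · rw [Nat.log_of_one_lt_of_le (by norm_num) (by omega)]
    congr 2; omega

/-- For `d ≥ 1`, `k ≥ 19^(2d-1) + 1`, and any homeomorphism `F` from the unit
sphere of `ℓ∞^k` onto the unit sphere of `ℓ1^k` (with inverse `G`) that does not increase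
support size, there are `x, y` on the sphere with `‖x - y‖_∞ ≤ 1/d` and
`‖F x - F y‖_1 ≥ 1/2`. -/
theorem stmt_0 (d : ℕ) (hd : 1 ≤ d) (k : ℕ) (hk : 19 ^ (2 * d - 1) + 1 ≤ k)
    (F G : (Fin k → ℝ) → (Fin k → ℝ))
    (hFmaps : ∀ x, supNorm x = 1 → l1Norm (F x) = 1)
    (hGmaps : ∀ y, l1Norm y = 1 → supNorm (G y) = 1)
    (hFcont : ContinuousOn F {x | supNorm x = 1})
    (hGcont : ContinuousOn G {y | l1Norm y = 1})
    (hGF : ∀ x, supNorm x = 1 → G (F x) = x)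
    (hFG : ∀ y, l1Norm y = 1 → F (G y) = y)
    (hsupp : ∀ x, supNorm x = 1 → {i | F x i ≠ 0}.ncard ≤ {i | x i ≠ 0}.ncard) :
    ∃ x y : Fin k → ℝ, supNorm x = 1 ∧ supNorm y = 1 ∧
      supNorm (x - y) ≤ 1 / (d : ℝ) ∧ 1 / 2 ≤ l1Norm (F x - F y) := by
  have : NeZero k := ⟨((Nat.succ_pos _).trans_le hk).ne'⟩
  have hd0 : (0 : ℝ) < d := by exact_mod_cast hd
  have hpow : 2 ^ (2 * d) ≤ k := by
    calc 2 ^ (2 * d) = 2 * 2 ^ (2 * d - 1) := by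
          rw [← pow_succ', show 2 * d - 1 + 1 = 2 * d by omega]
      _ ≤ 9 ^ (2 * d - 1) * 2 ^ (2 * d - 1) := by
          gcongr
          exact le_trans (by norm_num) (Nat.le_self_pow (by omega) 9)
      _ = 18 ^ (2 * d - 1) := by rw [← mul_pow]; norm_num
      _ ≤ 19 ^ (2 * d - 1) := by gcongr; norm_num
      _ ≤ k := by omega
  obtain ⟨π, hπ⟩ := exists_perm_support hFmaps hGmaps hFcont hGcont hGF hFG hsupp
  set Φ : (Fin k → ℝ) → Fin k → ℝ := fun x i => |F x (π i)| with hΦdef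
  have hΦ : ∀ x i, 0 ≤ Φ x i := fun x i => abs_nonneg _
  have hΦone : ∀ x, supNorm x = 1 → ∑ i, Φ x i = 1 := fun x hx => by
    rw [← hFmaps x hx, l1Norm]
    exact Equiv.sum_comp π fun i => |F x i|
  -- The profiles have level `j / d` on pairs of consecutive dyadic shells; the two pairings
  -- are shifted by one shell.
  set L : ℕ → ℕ := fun n => Nat.log 2 (n + 1) with hL
  set a : ℕ → ℝ := fun n => ((d - (L n + 1) / 2 : ℕ) : ℝ) / d with ha
  set b : ℕ → ℝ := fun n => ((d - L n / 2 : ℕ) : ℝ) / d with hb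
  have hlevel : ∀ m : ℕ, 0 ≤ ((d - m : ℕ) : ℝ) / d ∧ ((d - m : ℕ) : ℝ) / d ≤ 1 := fun m => by
    refine ⟨by positivity, ?_⟩
    rw [div_le_one hd0]
    exact_mod_cast Nat.sub_le d m
  have hlevel0 : ∀ m : ℕ, ((d - m : ℕ) : ℝ) / d ≠ 0 → m < d := fun m h => by
    by_contra! hc
    simp [Nat.sub_eq_zero_of_le hc] at h
  have hS : ∀ g : ℕ → ℝ, g 0 = 1 → (∀ n, 0 ≤ g n ∧ g n ≤ 1) →
      (∀ σ : Equiv.Perm (Fin k), ∑ i, Φ ((fun n : Fin k => g n) ∘ σ.symm) i = 1) ∧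
      (∀ (σ : Equiv.Perm (Fin k)) (p : Fin k), g p = 0 →
        Φ ((fun n : Fin k => g n) ∘ σ.symm) (σ p) = 0) := by
    intro g h0 hg
    refine ⟨fun σ => hΦone _ (supNorm_relabel_eq_one g h0 hg σ), fun σ p hp => ?_⟩
    simp only [hΦdef]
    rw [hπ _ (supNorm_relabel_eq_one g h0 hg σ) (fun i => (hg _).1) (σ p) (by simp [hp]),
      abs_zero]
  have ha0 : a 0 = 1 := by simp [ha, hL, hd0.ne']
  have hb0 : b 0 = 1 := by simp [hb, hL, hd0.ne']
  have hchildren : ∀ n, L (2 * n + 1) = L n + 1 ∧ L (2 * n + 2) = L n + 1 :=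
    natLog_two_children
  have hbound : ∀ n, L n + 2 ≤ 2 * d → 2 * n + 2 < k := by
    intro n hn
    have h1 : n + 1 < 2 ^ (L n + 1) := Nat.lt_pow_succ_log_self (by norm_num) (n + 1)
    have h2 : 2 ^ (L n + 2) ≤ 2 ^ (2 * d) := Nat.pow_le_pow_right (by norm_num) hn
    have h3 : 2 ^ (L n + 2) = 2 * 2 ^ (L n + 1) := by ring
    omega
  have hA := three_mul_sum_perm_le Φ hΦ a (hS a ha0 fun n => hlevel _).1
    (hS a ha0 fun n => hlevel _).2 (fun n => L n % 2 = 1)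
    (fun n hn => by
      have := (hchildren n).1
      refine ⟨by omega, ?_⟩
      simp only [ha, this]
      rw [show (L n + 1) / 2 = (L n + 1 + 1) / 2 by omega])
    (fun n hn => by
      have := (hchildren n).2
      refine ⟨by omega, ?_⟩
      simp only [ha, this]
      rw [show (L n + 1) / 2 = (L n + 1 + 1) / 2 by omega])
    (fun n hn h => hbound n (by have := hlevel0 _ h; omega))
  have hB := three_mul_sum_perm_le Φ hΦ b (hS b hb0 fun n => hlevel _).1
    (hS b hb0 fun n => hlevel _).2 (fun n => ¬ L n % 2 = 1)
    (fun n hn => by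
      have := (hchildren n).1
      refine ⟨by omega, ?_⟩
      simp only [hb, this]
      rw [show L n / 2 = (L n + 1) / 2 by omega])
    (fun n hn => by
      have := (hchildren n).2
      refine ⟨by omega, ?_⟩
      simp only [hb, this]
      rw [show L n / 2 = (L n + 1) / 2 by omega])
    (fun n hn h => hbound n (by have := hlevel0 _ h; omega))
  obtain ⟨σ, -, hσ⟩ : ∃ σ ∈ (Finset.univ : Finset (Equiv.Perm (Fin k))),
      (∑ p : Fin k with L (Fin.val p) % 2 = 1, Φ ((fun n : Fin k => a n) ∘ σ.symm) (σ p)) +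
        (∑ p : Fin k with ¬ L (Fin.val p) % 2 = 1, Φ ((fun n : Fin k => b n) ∘ σ.symm) (σ p)) ≤
          2 / 3 := by
    refine Finset.exists_le_of_sum_le Finset.univ_nonempty ?_
    rw [Finset.sum_add_distrib, Finset.sum_const, nsmul_eq_mul, Finset.card_univ]
    linarith
  set x : Fin k → ℝ := (fun n : Fin k => a n) ∘ σ.symm with hx
  set y : Fin k → ℝ := (fun n : Fin k => b n) ∘ σ.symm with hy
  have hxS : supNorm x = 1 := supNorm_relabel_eq_one a ha0 (fun n => hlevel _) σ
  have hyS : supNorm y = 1 := supNorm_relabel_eq_one b hb0 (fun n => hlevel _) σ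
  refine ⟨x, y, hxS, hyS, ciSup_le fun i => ?_, ?_⟩
  · simp only [hx, hy, Pi.sub_apply, Function.comp_apply, ha, hb]
    rw [← sub_div, abs_div, abs_of_pos hd0]
    gcongr
    set m := L (σ.symm i)
    have h1 : d - (m + 1) / 2 ≤ d - m / 2 := by omega
    have h2 : d - m / 2 ≤ d - (m + 1) / 2 + 1 := by omega
    have h1' : ((d - (m + 1) / 2 : ℕ) : ℝ) ≤ (d - m / 2 : ℕ) := by exact_mod_cast h1
    have h2' : ((d - m / 2 : ℕ) : ℝ) ≤ (d - (m + 1) / 2 : ℕ) + 1 := by exact_mod_cast h2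
    rw [abs_le]
    constructor <;> linarith
  · have hsum : l1Norm (F x - F y) = ∑ p, |F x (π (σ p)) - F y (π (σ p))| := by
      rw [l1Norm, ← Equiv.sum_comp (σ.trans π)]
      rfl
    have htx : ∑ p, Φ x (σ p) = 1 := by rw [Equiv.sum_comp σ (Φ x), hΦone x hxS]
    have hty : ∑ p, Φ y (σ p) = 1 := by rw [Equiv.sum_comp σ (Φ y), hΦone y hyS]
    rw [← Finset.sum_filter_add_sum_filter_not _ (fun p : Fin k => L p % 2 = 1)] at htx hty hsum
    have hodd : ∑ p : Fin k with L (Fin.val p) % 2 = 1, (Φ y (σ p) - Φ x (σ p)) ≤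
        ∑ p : Fin k with L (Fin.val p) % 2 = 1, |F x (π (σ p)) - F y (π (σ p))| :=
      Finset.sum_le_sum fun p _ => by
        rw [abs_sub_comm]; exact abs_sub_abs_le_abs_sub _ _
    have heven : ∑ p : Fin k with ¬ L (Fin.val p) % 2 = 1, (Φ x (σ p) - Φ y (σ p)) ≤
        ∑ p : Fin k with ¬ L (Fin.val p) % 2 = 1, |F x (π (σ p)) - F y (π (σ p))| :=
      Finset.sum_le_sum fun p _ => abs_sub_abs_le_abs_sub _ _
    rw [Finset.sum_sub_distrib] at hodd heven
    linarith
end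

section
/- Let d ∈ ℕ with d ≥ 1. Then for every k ≥ 19^(2d−1) + 1 and every support preserving map F : S_{ℓ∞^k} → S_{ℓ1^k} (not assumed continuous or injective), one has ω_F(1/d) ≥ 1/2, i.e., there exist x, y ∈ S_{ℓ∞^k} with ‖x − y‖_∞ ≤ 1/d and ‖F(x) − F(y)‖_1 ≥ 1/2. -/
open Finset in
/-- An injection of `S` onto a set disjoint from `S` extends to a permutation exchanging `S` with
its image and fixing everything else. -/
theorem exists_perm_exchange {α : Type*} [DecidableEq α] (c : α → α) (S : Finset α)
    (hinj : Set.InjOn c S) (hdisj : ∀ i ∈ S, ∀ j ∈ S, c i ≠ j) :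
    ∃ π : Equiv.Perm α, (∀ i ∈ S, π i = c i ∧ π (c i) = i) ∧
      ∀ i, i ∉ S → i ∉ S.image c → π i = i := by
  induction S using Finset.induction_on with
  | empty => exact ⟨1, by simp⟩
  | insert a S ha ih =>
    obtain ⟨π, h₁, h₂⟩ := ih (hinj.mono (by simp))
      (fun i hi j hj => hdisj i (mem_insert_of_mem hi) j (mem_insert_of_mem hj))
    have hca : ∀ i ∈ S, c i ≠ c a := fun i hi h =>
      ha (hinj (by simp [hi]) (by simp) h ▸ hi)
    have haS : ∀ i ∈ S, c i ≠ a := fun i hi =>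
      hdisj i (mem_insert_of_mem hi) a (mem_insert_self a S)
    have hcS : c a ∉ S := fun h => hdisj a (mem_insert_self a S) _ (mem_insert_of_mem h) rfl
    have hπa : π a = a := h₂ a ha (by simpa using haS)
    have hπca : π (c a) = c a := h₂ _ hcS (by simpa using hca)
    refine ⟨π * Equiv.swap a (c a), fun i hi => ?_, fun i hi hi' => ?_⟩
    · rcases mem_insert.1 hi with rfl | hi
      · simp [hπa, hπca]
      · have hia : i ≠ a := fun h => ha (h ▸ hi)
        have hica : i ≠ c a := fun h => hcS (h ▸ hi)
        simp [Equiv.swap_apply_of_ne_of_ne hia hica,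
          Equiv.swap_apply_of_ne_of_ne (haS i hi) (hca i hi), h₁ i hi]
    · simp only [mem_insert, image_insert, not_or] at hi hi'
      simp [Equiv.swap_apply_of_ne_of_ne hi.1 hi'.1, h₂ i hi.2 hi'.2]

theorem supNorm_comp_perm {k : ℕ} (x : Fin k → ℝ) (σ : Equiv.Perm (Fin k)) :
    supNorm (x ∘ σ) = supNorm x :=
  σ.iSup_comp (g := fun i => |x i|)

/-- The mass that `|F|` puts at `i`, summed over all rearrangements of `x`. -/
noncomputable def orbitMass {k : ℕ} (F : (Fin k → ℝ) → (Fin k → ℝ)) (x : Fin k → ℝ)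
    (i : Fin k) : ℝ :=
  ∑ σ : Equiv.Perm (Fin k), |F (x ∘ σ) (σ.symm i)|

section orbitMass

variable {k : ℕ} {F : (Fin k → ℝ) → (Fin k → ℝ)} {x : Fin k → ℝ}

theorem orbitMass_nonneg (i : Fin k) : 0 ≤ orbitMass F x i :=
  Finset.sum_nonneg fun _ _ => abs_nonneg _

theorem sum_orbitMass (h : ∀ σ : Equiv.Perm (Fin k), l1Norm (F (x ∘ σ)) = 1) :
    ∑ i, orbitMass F x i = k.factorial := by
  unfold orbitMass
  rw [Finset.sum_comm]
  have (σ : Equiv.Perm (Fin k)) : ∑ i, |F (x ∘ σ) (σ.symm i)| = 1 := by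
    rw [← h σ]
    exact Equiv.sum_comp σ.symm (fun i => |F (x ∘ σ) i|)
  simp [this, Fintype.card_perm]

theorem orbitMass_eq_zero {i : Fin k}
    (h : ∀ σ : Equiv.Perm (Fin k), F (x ∘ σ) (σ.symm i) = 0) : orbitMass F x i = 0 := by
  simp [orbitMass, h]

theorem sum_abs_orbitMass_sub_lt {ε : ℝ} (π : Equiv.Perm (Fin k))
    (h : ∀ σ : Equiv.Perm (Fin k), l1Norm (F (x ∘ σ) - F (x ∘ π ∘ σ)) < ε) :
    ∑ i, |orbitMass F x i - orbitMass F x (π i)| < k.factorial * ε := by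
  have hπ (i : Fin k) : orbitMass F x (π i) = ∑ σ : Equiv.Perm (Fin k),
      |F (x ∘ π ∘ σ) (σ.symm i)| := by
    unfold orbitMass
    rw [← Equiv.sum_comp (Equiv.mulLeft π)]
    simp [Equiv.Perm.mul_def]
  calc ∑ i, |orbitMass F x i - orbitMass F x (π i)|
      ≤ ∑ i, ∑ σ : Equiv.Perm (Fin k), |(F (x ∘ σ) - F (x ∘ π ∘ σ)) (σ.symm i)| := by
        refine Finset.sum_le_sum fun i _ => ?_
        rw [hπ, orbitMass, ← Finset.sum_sub_distrib]
        exact (Finset.abs_sum_le_sum_abs _ _).trans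
          (Finset.sum_le_sum fun σ _ => abs_abs_sub_abs_le _ _)
    _ = ∑ σ : Equiv.Perm (Fin k), l1Norm (F (x ∘ σ) - F (x ∘ π ∘ σ)) := by
        rw [Finset.sum_comm]
        exact Finset.sum_congr rfl fun σ _ =>
          Equiv.sum_comp σ.symm (fun i => |(F (x ∘ σ) - F (x ∘ π ∘ σ)) i|)
    _ < ∑ _σ : Equiv.Perm (Fin k), ε :=
        Finset.sum_lt_sum_of_nonempty Finset.univ_nonempty fun σ _ => h σ
    _ = k.factorial * ε := by simp [Fintype.card_perm]

end orbitMass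

open Finset in
theorem two_mul_sum_sub_le_sum_abs {α : Type*} [Fintype α] [DecidableEq α] (G : α → ℝ)
    (c : α → α) (S : Finset α) (hinj : Set.InjOn c S) (hdisj : ∀ i ∈ S, ∀ j ∈ S, c i ≠ j)
    (π : Equiv.Perm α) (hπ : ∀ i ∈ S, π i = c i ∧ π (c i) = i) :
    2 * ∑ i ∈ S, (G i - G (c i)) ≤ ∑ i, |G i - G (π i)| := by
  have hd : Disjoint S (S.image c) := by
    rw [Finset.disjoint_left]
    intro i hi hi'
    obtain ⟨j, hj, rfl⟩ := mem_image.1 hi'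
    exact hdisj j hj _ hi rfl
  refine le_trans ?_ (sum_le_univ_sum_of_nonneg (s := S ∪ S.image c) fun _ => abs_nonneg _)
  rw [sum_union hd, sum_image hinj, ← sum_add_distrib, mul_sum]
  refine sum_le_sum fun i hi => ?_
  rw [(hπ i hi).1, (hπ i hi).2, abs_sub_comm (G (c i))]
  linarith [le_abs_self (G i - G (c i))]

theorem sum_range_children (g : ℕ → ℝ) (N : ℕ) :
    g 0 + ∑ n ∈ Finset.range N, (g (2 * n + 1) + g (2 * n + 2)) =
      ∑ n ∈ Finset.range (2 * N + 1), g n := by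
  induction N with
  | zero => simp
  | succ N ih =>
    rw [Finset.sum_range_succ, ← add_assoc, ih, show 2 * (N + 1) + 1 = 2 * N + 1 + 1 + 1 by ring,
      Finset.sum_range_succ _ (2 * N + 1 + 1), Finset.sum_range_succ _ (2 * N + 1)]
    ring

theorem log_two_child {e : ℕ} (he : e ≤ 1) (n : ℕ) :
    Nat.log 2 (2 * n + 1 + e + 1) = Nat.log 2 (n + 1) + 1 := by
  rw [Nat.log_of_one_lt_of_le (by norm_num) (by omega)]
  congr 2
  omega

/-- The vector taking the value `1 - t / d` on the `2 ^ t` coordinates of depth `t` in the binary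
tree in which `i` has children `2 * i + 1` and `2 * i + 2`, cut off at depth `d`. -/
noncomputable def treeVector (d k : ℕ) (i : Fin k) : ℝ :=
  ((d - Nat.log 2 (i.val + 1) : ℕ) : ℝ) / d

theorem supNorm_treeVector {d k : ℕ} (hd : 1 ≤ d) (hk : 0 < k) :
    supNorm (treeVector d k) = 1 := by
  have : Nonempty (Fin k) := ⟨⟨0, hk⟩⟩
  have hd' : (0 : ℝ) < d := by exact_mod_cast hd
  apply le_antisymm
  · refine ciSup_le fun i => ?_
    rw [treeVector, abs_of_nonneg (by positivity), div_le_one hd']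
    exact_mod_cast Nat.sub_le _ _
  · refine le_trans ?_ (le_ciSup (f := fun i => |treeVector d k i|)
      (Set.finite_range _).bddAbove ⟨0, hk⟩)
    simp [treeVector, hd'.ne']

theorem treeVector_eq_zero {d k : ℕ} {i : Fin k} (hi : 2 ^ d ≤ i.val + 1) :
    treeVector d k i = 0 := by
  have : d ≤ Nat.log 2 (i.val + 1) := Nat.le_log_of_pow_le (by norm_num) hi
  simp [treeVector, Nat.sub_eq_zero_of_le this]

theorem abs_treeVector_sub_le {d k : ℕ} {i j : Fin k}
    (h : Nat.log 2 (j.val + 1) = Nat.log 2 (i.val + 1) + 1) :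
    |treeVector d k i - treeVector d k j| ≤ 1 / d := by
  rw [treeVector, treeVector, h, ← sub_div, abs_div, Nat.abs_cast]
  gcongr
  generalize Nat.log 2 (i.val + 1) = t
  rcases le_or_gt d t with hdt | hdt
  · simp [Nat.sub_eq_zero_of_le hdt, Nat.sub_eq_zero_of_le (hdt.trans t.le_succ)]
  · rw [Nat.cast_sub hdt.le, Nat.cast_sub hdt, abs_le]
    push_cast
    constructor <;> linarith

open Finset in
/-- Exchanging the nodes whose depth has parity `p` with their children on the side `e` moves
`treeVector d k` by at most `1 / d`. -/
theorem two_mul_sum_orbitMass_sub_lt {d k : ℕ} (hk : 2 ^ (d + 1) ≤ k)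
    {F : (Fin k → ℝ) → (Fin k → ℝ)} {ε : ℝ}
    (hF : ∀ π : Equiv.Perm (Fin k), supNorm (treeVector d k - treeVector d k ∘ π) ≤ 1 / d →
      ∑ i, |orbitMass F (treeVector d k) i - orbitMass F (treeVector d k) (π i)| < ε)
    {g : ℕ → ℝ} (hg : ∀ i : Fin k, g i = orbitMass F (treeVector d k) i)
    (p : ℕ) {e : ℕ} (he : e ≤ 1) :
    2 * ∑ n ∈ range (2 ^ d - 1) with Nat.log 2 (n + 1) % 2 = p, (g n - g (2 * n + 1 + e)) < ε := by
  have : Nonempty (Fin k) := ⟨⟨0, lt_of_lt_of_le (by positivity) hk⟩⟩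
  rw [pow_succ] at hk
  set c : Fin k → Fin k := fun i =>
    if h : 2 * i.val + 1 + e < k then ⟨2 * i.val + 1 + e, h⟩ else i with hc
  set S : Finset (Fin k) := {i | i.val < 2 ^ d - 1 ∧ Nat.log 2 (i.val + 1) % 2 = p} with hS
  have hcS : ∀ i ∈ S, (c i).val = 2 * i.val + 1 + e := by
    intro i hi
    have : i.val < 2 ^ d - 1 := (mem_filter.1 hi).2.1
    rw [hc]
    dsimp only
    rw [dif_pos (by omega)]
  have hlog : ∀ i ∈ S, Nat.log 2 ((c i).val + 1) = Nat.log 2 (i.val + 1) + 1 := fun i hi => by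
    rw [hcS i hi, log_two_child he]
  have hinj : Set.InjOn c S := fun i hi j hj hij => by
    have := congrArg Fin.val hij
    rw [hcS i hi, hcS j hj] at this
    exact Fin.ext (by omega)
  have hdisj : ∀ i ∈ S, ∀ j ∈ S, c i ≠ j := by
    rintro i hi j hj rfl
    have h₁ := (mem_filter.1 hi).2.2
    have h₂ := (mem_filter.1 hj).2.2
    rw [hlog i hi] at h₂
    omega
  obtain ⟨π, hπ, hfix⟩ := exists_perm_exchange c S hinj hdisj
  have hdist : supNorm (treeVector d k - treeVector d k ∘ π) ≤ 1 / d := by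
    refine ciSup_le fun i => ?_
    simp only [Pi.sub_apply, Function.comp_apply]
    by_cases hi : i ∈ S
    · rw [(hπ i hi).1]
      exact abs_treeVector_sub_le (hlog i hi)
    · by_cases hi' : i ∈ S.image c
      · obtain ⟨j, hj, rfl⟩ := mem_image.1 hi'
        rw [(hπ j hj).2, abs_sub_comm]
        exact abs_treeVector_sub_le (hlog j hj)
      · rw [hfix i hi hi']
        simp
  refine lt_of_eq_of_lt ?_ ((two_mul_sum_sub_le_sum_abs _ c S hinj hdisj π hπ).trans_lt
    (hF π hdist))
  congr 1
  symm
  refine sum_bij (fun i _ => i.val) (fun i hi => ?_) (fun i _ j _ h => Fin.ext h)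
    (fun n hn => ?_) (fun i hi => ?_)
  · simpa [hS] using hi
  · simp only [mem_filter, mem_range] at hn
    exact ⟨⟨n, by omega⟩, by simpa [hS] using hn, rfl⟩
  · rw [← hcS i hi, hg, hg]

/-- Theorem 4.4 of the paper: for `d ≥ 1`, `k ≥ 19^(2d-1) + 1` and any
support preserving map `F : S_{ℓ∞^k} → S_{ℓ1^k}` (not assumed continuous or injective),
there are `x, y` on the sphere with `‖x - y‖_∞ ≤ 1/d` and `‖F x - F y‖_1 ≥ 1/2`. -/
theorem stmt_11 (d : ℕ) (hd : 1 ≤ d) (k : ℕ) (hk : 19 ^ (2 * d - 1) + 1 ≤ k)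
    (F : (Fin k → ℝ) → (Fin k → ℝ))
    (hFmaps : ∀ x, supNorm x = 1 → l1Norm (F x) = 1)
    (hsupp : ∀ x, supNorm x = 1 → ∀ i, (F x i ≠ 0 ↔ x i ≠ 0)) :
    ∃ x y : Fin k → ℝ, supNorm x = 1 ∧ supNorm y = 1 ∧
      supNorm (x - y) ≤ 1 / (d : ℝ) ∧ 1 / 2 ≤ l1Norm (F x - F y) := by
  by_contra! H
  have hk' : 2 ^ (d + 1) ≤ k := by
    have h₁ : 19 ^ d ≤ 19 ^ (2 * d - 1) := Nat.pow_le_pow_right (by norm_num) (by omega)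
    have h₂ : 2 ^ (d + 1) ≤ 19 ^ d := by
      calc 2 ^ (d + 1) ≤ 2 ^ (4 * d) := Nat.pow_le_pow_right (by norm_num) (by omega)
        _ = 16 ^ d := by rw [pow_mul]; norm_num
        _ ≤ 19 ^ d := Nat.pow_le_pow_left (by norm_num) d
    omega
  have hk0 : 0 < k := lt_of_lt_of_le (by positivity) hk'
  set x := treeVector d k
  have hxσ (σ : Equiv.Perm (Fin k)) : supNorm (x ∘ σ) = 1 := by
    rw [supNorm_comp_perm, supNorm_treeVector hd hk0]
  have hF (π : Equiv.Perm (Fin k)) (hπ : supNorm (x - x ∘ π) ≤ 1 / d) :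
      ∑ i, |orbitMass F x i - orbitMass F x (π i)| < k.factorial * (1 / 2) := by
    refine sum_abs_orbitMass_sub_lt π fun σ =>
      H _ _ (hxσ σ) (by simpa [Equiv.Perm.coe_mul] using hxσ (π * σ)) ?_
    exact (supNorm_comp_perm (x - x ∘ π) σ).trans_le hπ
  set g : ℕ → ℝ := fun n => if h : n < k then orbitMass F x ⟨n, h⟩ else 0 with hg
  have hgi (i : Fin k) : g i = orbitMass F x i := by simp [hg]
  have hg0 (n : ℕ) : 0 ≤ g n := by
    simp only [hg]
    split_ifs
    · exact orbitMass_nonneg _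
    · exact le_rfl
  have hgtop (n : ℕ) (hn : 2 ^ d - 1 ≤ n) : g n = 0 := by
    simp only [hg]
    split_ifs with h
    · refine orbitMass_eq_zero fun σ => ?_
      by_contra hne
      refine (hsupp _ (hxσ σ) _).1 hne ?_
      simpa using treeVector_eq_zero (i := (⟨n, h⟩ : Fin k)) (show 2 ^ d ≤ n + 1 by omega)
    · rfl
  have htail {M : ℕ} (hM : 2 ^ d - 1 ≤ M) :
      ∑ n ∈ Finset.range M, g n = ∑ n ∈ Finset.range (2 ^ d - 1), g n :=
    (Finset.sum_subset (Finset.range_mono hM) fun n _ hn =>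
      hgtop n (by simpa using hn)).symm
  have hmass : ∑ n ∈ Finset.range (2 ^ d - 1), g n = k.factorial := by
    rw [← htail (show 2 ^ d - 1 ≤ k by rw [pow_succ] at hk'; omega), Finset.sum_range,
      ← sum_orbitMass fun σ => hFmaps _ (hxσ σ)]
    exact Finset.sum_congr rfl fun i _ => hgi i
  have hside {e : ℕ} (he : e ≤ 1) :
      2 * ∑ n ∈ Finset.range (2 ^ d - 1), (g n - g (2 * n + 1 + e)) < k.factorial := by
    have h₀ := two_mul_sum_orbitMass_sub_lt hk' hF hgi 0 he
    have h₁ := two_mul_sum_orbitMass_sub_lt hk' hF hgi 1 he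
    rw [← Finset.sum_filter_add_sum_filter_not _ (fun n => Nat.log 2 (n + 1) % 2 = 0)]
    simp only [Nat.mod_two_ne_zero]
    linarith
  have hl := hside (e := 0) (by norm_num)
  have hr := hside (e := 1) le_rfl
  have hchildren := sum_range_children g (2 ^ d - 1)
  rw [htail (show 2 ^ d - 1 ≤ 2 * (2 ^ d - 1) + 1 by omega), hmass,
    Finset.sum_add_distrib] at hchildren
  rw [Finset.sum_sub_distrib, hmass] at hl hr
  simp only [add_zero, add_assoc, Nat.reduceAdd] at hl hr
  linarith [hg0 0]
end

section
/- Let k ∈ ℕ with k ≥ 1 and let E and F be k-dimensional real normed vector spaces. Then every continuous injective map from the unit sphere of E to the unit sphere of F is surjective. -/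
open MeasureTheory Metric Set Filter Topology

section NormedSpace

variable {V : Type*} [NormedAddCommGroup V] [NormedSpace ℝ V]

variable (V) in
theorem exists_forall_norm_lt_det_one_add_pos :
    ∃ δ > 0, ∀ A : V →L[ℝ] V, ‖A‖ < δ → 0 < (1 + A).det := by
  have hc : Continuous fun A : V →L[ℝ] V => (1 + A).det :=
    ContinuousLinearMap.continuous_det.comp (continuous_const.add continuous_id)
  have h0 : (0 : V →L[ℝ] V) ∈ {A : V →L[ℝ] V | 0 < (1 + A).det} := by
    simp [ContinuousLinearMap.det]
  obtain ⟨δ, hδ, h⟩ := Metric.isOpen_iff.1 (isOpen_lt continuous_const hc) 0 h0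
  exact ⟨δ, hδ, fun A hA => h (by simpa using hA)⟩

variable [FiniteDimensional ℝ V]

theorem sum_lagrange_basis_mul_det_one_add_smul (A : V →L[ℝ] V) {v : ℕ → ℝ}
    (hv : InjOn v (Finset.range (Module.finrank ℝ V + 1))) :
    ∑ i ∈ Finset.range (Module.finrank ℝ V + 1),
      (Lagrange.basis (Finset.range (Module.finrank ℝ V + 1)) v i).eval 1 *
        (1 + v i • A).det = (1 + A).det := by
  let b := Module.finBasis ℝ V
  let M := LinearMap.toMatrix b b (A : V →ₗ[ℝ] V)
  let p : Polynomial ℝ :=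
    Matrix.det ((Polynomial.X : Polynomial ℝ) • M.map Polynomial.C +
      (1 : Matrix _ _ ℝ).map Polynomial.C)
  have hp (t : ℝ) : p.eval t = (1 + t • A).det := by
    have h1 : (1 + t • A).det = (t • M + 1).det := by
      rw [ContinuousLinearMap.det, ← LinearMap.det_toMatrix b]
      congr 1
      simp only [M, ContinuousLinearMap.toLinearMap_add, ContinuousLinearMap.toLinearMap_smul,
        map_add, map_smul]
      rw [add_comm]
      congr 1
      exact LinearMap.toMatrix_one b
    rw [h1]
    simp only [p]
    rw [← Polynomial.coe_evalRingHom, RingHom.map_det]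
    congr 1
    ext i j
    rcases eq_or_ne i j with rfl | hij
    · simp [Matrix.map_apply, mul_comm t]
    · simp [Matrix.map_apply, hij, mul_comm t]
  have hdeg : p.degree < (Finset.range (Module.finrank ℝ V + 1)).card := by
    refine Polynomial.degree_le_natDegree.trans_lt ?_
    have := Polynomial.natDegree_det_X_add_C_le M 1
    rw [Fintype.card_fin] at this
    rw [Finset.card_range]
    exact_mod_cast Nat.lt_succ_of_le this
  have h := congrArg (Polynomial.eval 1) (Lagrange.eq_interpolate hv hdeg)
  rw [hp, one_smul] at h
  rw [h, Lagrange.interpolate_apply, Polynomial.eval_finsetSum]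
  refine Finset.sum_congr rfl fun i _ => ?_
  simp [hp, mul_comm]

variable [MeasurableSpace V] [BorelSpace V] (μ : Measure V) [μ.IsAddHaarMeasure]

theorem exists_forall_integral_det_one_add_smul_fderiv_eq {g : V → V} (hg : ContDiff ℝ 1 g)
    (hsph : ∀ x ∈ sphere (0 : V) 1, g x = 0)
    (hball : ∀ x ∈ closedBall (0 : V) 1, x + g x ∈ closedBall (0 : V) 1) :
    ∃ δ > 0, ∀ t ∈ Ioo (0 : ℝ) δ,
      ∫ x in ball (0 : V) 1, (1 + t • fderiv ℝ g x).det ∂μ = μ.real (ball (0 : V) 1) := by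
  obtain ⟨δ, hδ, hdet⟩ := exists_forall_norm_lt_det_one_add_pos V
  have hdiff : Differentiable ℝ g := hg.differentiable one_ne_zero
  obtain ⟨C, hC⟩ := (isCompact_closedBall (0 : V) 1).exists_bound_of_continuousOn
    (hg.continuous_fderiv one_ne_zero).continuousOn
  have hC0 : 0 ≤ C := (norm_nonneg _).trans (hC 0 (by simp))
  refine ⟨min 1 (min 1 δ / (C + 1)), by positivity, fun t ht => ?_⟩
  obtain ⟨ht0, ht⟩ := ht
  have ht1 : t < 1 := ht.trans_le (min_le_left _ _)
  have ht2 : t * (C + 1) < min 1 δ :=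
    (lt_div_iff₀ (by positivity)).1 (ht.trans_le (min_le_right _ _))
  have htC : t * C < 1 := by nlinarith [min_le_left 1 δ]
  have htδ : t * C < δ := by nlinarith [min_le_right 1 δ]
  set G : V → V := fun x => x + t • g x with hG
  have hpos : ∀ x ∈ closedBall (0 : V) 1, 0 < (1 + t • fderiv ℝ g x).det := fun x hx => by
    apply hdet
    rw [norm_smul, Real.norm_of_nonneg ht0.le]
    exact (mul_le_mul_of_nonneg_left (hC x hx) ht0.le).trans_lt htδ
  have hG' (x : V) : HasStrictFDerivAt G (1 + t • fderiv ℝ g x) x :=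
    (hasStrictFDerivAt_id x).add ((hg.contDiffAt.hasStrictFDerivAt one_ne_zero).const_smul t)
  have hinj : InjOn G (closedBall 0 1) := fun x hx y hy hxy => by
    have h1 : ‖g y - g x‖ ≤ C * ‖y - x‖ :=
      (convex_closedBall (0 : V) 1).norm_image_sub_le_of_norm_fderiv_le
        (fun z _ => hdiff z) hC hx hy
    have h2 : x - y = t • (g y - g x) := by
      have : x + t • g x = y + t • g y := hxy
      rw [smul_sub, sub_eq_sub_iff_add_eq_add, this, add_comm]
    have h3 : ‖y - x‖ = t * ‖g y - g x‖ := by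
      rw [norm_sub_rev, h2, norm_smul, Real.norm_of_nonneg ht0.le]
    have h4 : ‖y - x‖ ≤ 0 := by
      nlinarith [norm_nonneg (y - x), mul_le_mul_of_nonneg_left h1 ht0.le]
    exact (sub_eq_zero.1 (norm_le_zero_iff.1 h4)).symm
  have hmaps : MapsTo G (closedBall 0 1) (closedBall 0 1) := fun x hx => by
    have := (convex_closedBall (0 : V) 1) hx (hball x hx) (sub_nonneg.2 ht1.le) ht0.le (by ring)
    convert this using 1
    simp only [hG]
    module
  have hopen : IsOpen (G '' ball 0 1) := by
    rw [isOpen_iff_mem_nhds]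
    rintro _ ⟨x, hx, rfl⟩
    have hx' := (hpos x (ball_subset_closedBall hx)).ne'
    rw [← (hG' x).map_nhds_eq_of_equiv
      (f' := (1 + t • fderiv ℝ g x).toContinuousLinearEquivOfDetNeZero hx')]
    exact image_mem_map (isOpen_ball.mem_nhds hx)
  have hsub : G '' ball 0 1 ⊆ ball 0 1 := by
    intro y hy
    have : G '' ball 0 1 ⊆ closedBall 0 1 :=
      (image_mono ball_subset_closedBall).trans hmaps.image_subset
    have h2 := interior_maximal this hopen
    rw [interior_closedBall _ one_ne_zero] at h2
    exact h2 hy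
  have hGc : Continuous G := continuous_id.add (hg.continuous.const_smul t)
  have hball_eq : G '' ball 0 1 = ball 0 1 := by
    refine hsub.antisymm ?_
    have hcl : IsClosed (G '' closedBall 0 1) :=
      ((isCompact_closedBall 0 1).image hGc).isClosed
    refine (convex_ball (0 : V) 1).isPreconnected.subset_left_of_subset_union hopen
      hcl.isOpen_compl (disjoint_compl_right_iff_subset.2 (image_mono ball_subset_closedBall))
      ?_ ?_
    · intro y hy
      by_cases h : y ∈ G '' closedBall 0 1
      · obtain ⟨x, hx, rfl⟩ := h
        by_cases hx1 : x ∈ ball (0 : V) 1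
        · exact Or.inl ⟨x, hx1, rfl⟩
        · have hxs : x ∈ sphere (0 : V) 1 := by
            simp only [mem_closedBall, mem_ball, mem_sphere] at *
            linarith
          have : G x = x := by simp [hG, hsph x hxs]
          exact absurd (this ▸ hy) hx1
      · exact Or.inr h
    · exact ⟨G 0, hsub ⟨0, by simp, rfl⟩, 0, by simp, rfl⟩
  have key := integral_image_eq_integral_abs_det_fderiv_smul μ measurableSet_ball
    (fun x _ => (hG' x).hasFDerivAt.hasFDerivWithinAt) (hinj.mono ball_subset_closedBall)
    (fun _ => (1 : ℝ))
  rw [hball_eq] at key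
  simp only [smul_eq_mul, mul_one, integral_const, MeasurableSet.univ, measureReal_restrict_apply,
    univ_inter] at key
  rw [key]
  exact setIntegral_congr_fun measurableSet_ball fun x hx =>
    (abs_of_pos (hpos x (ball_subset_closedBall hx))).symm

theorem integral_det_one_add_fderiv_eq {g : V → V} (hg : ContDiff ℝ 1 g)
    (hsph : ∀ x ∈ sphere (0 : V) 1, g x = 0)
    (hball : ∀ x ∈ closedBall (0 : V) 1, x + g x ∈ closedBall (0 : V) 1) :
    ∫ x in ball (0 : V) 1, (1 + fderiv ℝ g x).det ∂μ = μ.real (ball (0 : V) 1) := by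
  obtain ⟨δ, hδ, h⟩ := exists_forall_integral_det_one_add_smul_fderiv_eq μ hg hsph hball
  set s := Finset.range (Module.finrank ℝ V + 1)
  let v : ℕ → ℝ := fun i => δ / (i + 2)
  have hv : ∀ i, v i ∈ Ioo 0 δ := fun i =>
    ⟨by positivity, by
      have : (0 : ℝ) ≤ i := i.cast_nonneg
      exact div_lt_self hδ (by linarith)⟩
  have hinj : InjOn v s := fun i _ j _ hij => by
    have hi : (0 : ℝ) < i + 2 := by positivity
    have hj : (0 : ℝ) < j + 2 := by positivity
    simp only [v] at hij
    rw [div_eq_div_iff hi.ne' hj.ne'] at hij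
    have := mul_left_cancel₀ hδ.ne' hij
    exact_mod_cast (by linarith : (i : ℝ) = j)
  have hint (t : ℝ) : IntegrableOn (fun x => (1 + t • fderiv ℝ g x).det) (ball (0 : V) 1) μ := by
    have hc : Continuous fun x => (1 + t • fderiv ℝ g x).det :=
      ContinuousLinearMap.continuous_det.comp
        (continuous_const.add ((hg.continuous_fderiv one_ne_zero).const_smul t))
    exact (hc.continuousOn.integrableOn_compact (isCompact_closedBall 0 1)).mono_set
      ball_subset_closedBall
  have hsum : (fun x => (1 + fderiv ℝ g x).det) = fun x =>
      ∑ i ∈ s, (Lagrange.basis s v i).eval 1 * (1 + v i • fderiv ℝ g x).det :=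
    funext fun x => (sum_lagrange_basis_mul_det_one_add_smul _ hinj).symm
  rw [hsum, integral_finsetSum _ fun i _ => (hint (v i)).const_mul _]
  simp_rw [integral_const_mul, h _ (hv _)]
  rw [← Finset.sum_mul, ← Polynomial.eval_finsetSum,
    Lagrange.sum_basis hinj Finset.nonempty_range_add_one]
  simp

end NormedSpace

section InnerProductSpace

variable {V : Type*} [NormedAddCommGroup V] [InnerProductSpace ℝ V] [FiniteDimensional ℝ V]

theorem det_fderiv_eq_zero_of_norm_eq_one {K : V → V} (hK : Differentiable ℝ K)
    (hnorm : ∀ x, ‖K x‖ = 1) (x : V) : (fderiv ℝ K x).det = 0 := by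
  by_contra hdet
  have hconst : (fun y => inner ℝ (K y) (K y)) = fun _ => (1 : ℝ) :=
    funext fun y => by rw [real_inner_self_eq_norm_sq, hnorm, one_pow]
  let e := (fderiv ℝ K x).toContinuousLinearEquivOfDetNeZero hdet
  have he : fderiv ℝ K x (e.symm (K x)) = K x := e.apply_symm_apply (K x)
  have h := fderiv_inner_apply ℝ (hK x) (hK x) (e.symm (K x))
  rw [hconst, he, real_inner_self_eq_norm_sq, hnorm] at h
  simp at h
  norm_num at h

/-- There is no `C¹` retraction onto the unit sphere. -/
theorem not_retraction_sphere_of_contDiff {K : V → V} (hK : ContDiff ℝ 1 K)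
    (hnorm : ∀ x, ‖K x‖ = 1) (hsph : ∀ x ∈ sphere (0 : V) 1, K x = x) : False := by
  borelize V
  let μ : Measure V := volume
  have hg : ContDiff ℝ 1 fun x => K x - x := hK.sub contDiff_id
  have h := integral_det_one_add_fderiv_eq μ hg (fun x hx => sub_eq_zero.2 (hsph x hx))
    (fun x _ => by simp [hnorm])
  have hd : Differentiable ℝ K := hK.differentiable one_ne_zero
  have hdet (x : V) : (1 + fderiv ℝ (fun x => K x - x) x).det = 0 := by
    rw [fderiv_fun_sub (hd x) differentiableAt_fun_id, fderiv_fun_id,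
      ← det_fderiv_eq_zero_of_norm_eq_one hd hnorm x]
    congr 1
    exact add_sub_cancel _ _
  simp_rw [hdet, integral_zero] at h
  exact (ENNReal.toReal_pos (measure_ball_pos μ (0 : V) one_pos).ne' measure_ball_lt_top.ne).ne h

theorem exists_eq_zero_of_contDiff {h : V → V} (hh : ContDiff ℝ 1 h)
    (hsph : ∀ x ∈ sphere (0 : V) 1, ‖h x - x‖ < 1) : ∃ x, h x = 0 := by
  by_contra! hne
  obtain ⟨r, hr0, hr1, hr⟩ : ∃ r, 0 < r ∧ r < 1 ∧
      ∀ x : V, r < ‖x‖ → ‖x‖ ≤ 1 → ‖h x - x‖ < ‖x‖ := by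
    have hc : IsCompact (closedBall (0 : V) 1 ∩ {x | ‖x‖ ≤ ‖h x - x‖}) :=
      (isCompact_closedBall 0 1).inter_right
        (isClosed_le continuous_norm (hh.continuous.sub continuous_id).norm)
    rcases eq_empty_or_nonempty (closedBall (0 : V) 1 ∩ {x | ‖x‖ ≤ ‖h x - x‖}) with he | hne
    · refine ⟨1 / 2, by norm_num, by norm_num, fun x _ hx => ?_⟩
      by_contra! hlt
      exact (he ▸ (⟨by simpa using hx, hlt⟩ : x ∈ closedBall (0 : V) 1 ∩ _) : x ∈ (∅ : Set V))
    · obtain ⟨m, ⟨hm1, hm2⟩, hmax⟩ := hc.exists_isMaxOn hne continuous_norm.continuousOn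
      have hm : ‖m‖ < 1 := by
        refine lt_of_le_of_ne (by simpa using hm1) fun heq => ?_
        have := hsph m (by simpa using heq)
        change ‖m‖ ≤ ‖h m - m‖ at hm2
        linarith
      refine ⟨(‖m‖ + 1) / 2, by positivity, by linarith, fun x hx hx1 => ?_⟩
      by_contra! hlt
      have : ‖x‖ ≤ ‖m‖ := hmax ⟨by simpa using hx1, hlt⟩
      linarith
  let ψ : ContDiffBump (0 : V) := ⟨r, 1, hr0, hr1⟩
  let H : V → V := fun x => x + ψ x • (h x - x)
  have hH : ContDiff ℝ 1 H := contDiff_id.add (ψ.contDiff.smul (hh.sub contDiff_id))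
  have hH1 (x : V) (hx : 1 ≤ ‖x‖) : H x = x := by
    have : ψ x = 0 := ψ.zero_of_le_dist (by simpa using hx)
    simp [H, this]
  have hH0 (x : V) : H x ≠ 0 := by
    rcases le_or_gt ‖x‖ r with hxr | hxr
    · have : ψ x = 1 := ψ.one_of_mem_closedBall (by simpa using hxr)
      simpa [H, this] using hne x
    rcases le_or_gt 1 ‖x‖ with hx1 | hx1
    · rw [hH1 x hx1]
      exact norm_pos_iff.1 (one_pos.trans_le hx1)
    · intro h0
      have h1 : ‖x‖ = ψ x * ‖h x - x‖ := by
        rw [← norm_neg, neg_eq_of_add_eq_zero_right h0, norm_smul, Real.norm_of_nonneg ψ.nonneg]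
      have h2 := hr x hxr hx1.le
      nlinarith [ψ.le_one (x := x), norm_nonneg (h x - x)]
  refine not_retraction_sphere_of_contDiff (K := fun x => ‖H x‖⁻¹ • H x)
    (((hH.norm ℝ hH0).inv fun x => norm_ne_zero_iff.2 (hH0 x)).smul hH)
    (fun x => norm_smul_inv_norm (𝕜 := ℝ) (hH0 x)) fun x hx => ?_
  have hx1 : ‖x‖ = 1 := by simpa using hx
  simp [hH1 x hx1.ge, hx1]

/-- A continuous map moving every point of the unit sphere by less than `1` has a zero. -/
theorem exists_eq_zero_of_norm_sub_lt_one {h : V → V} (hh : Continuous h)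
    (hsph : ∀ x ∈ sphere (0 : V) 1, ‖h x - x‖ < 1) : ∃ x, h x = 0 := by
  by_contra! hne
  obtain ⟨g, hg, hgh, -⟩ := hh.exists_contDiff_approx 1
    (ε := fun x => min ‖h x‖ (|1 - ‖x‖| + max 0 (1 - ‖h x - x‖))) (by fun_prop) (fun x => by
      refine lt_min (norm_pos_iff.2 (hne x)) ?_
      rcases eq_or_ne ‖x‖ 1 with hx | hx
      · have := hsph x (by simpa using hx)
        exact add_pos_of_nonneg_of_pos (abs_nonneg _) (lt_max_of_lt_right (by linarith))
      · exact add_pos_of_pos_of_nonneg (abs_pos.2 (sub_ne_zero.2 hx.symm)) (le_max_left _ _))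
  obtain ⟨x, hx⟩ := exists_eq_zero_of_contDiff hg fun x hx => by
    have h1 := (hgh x).trans_le (min_le_right _ _)
    have h2 := hsph x hx
    have hx1 : ‖x‖ = 1 := by simpa using hx
    rw [hx1, sub_self, abs_zero, zero_add, max_eq_right (by linarith), dist_eq_norm] at h1
    calc ‖g x - x‖ ≤ ‖g x - h x‖ + ‖h x - x‖ := norm_sub_le_norm_sub_add_norm_sub _ _ _
      _ < 1 := by linarith
  have := (hgh x).trans_le (min_le_left _ _)
  rw [hx, dist_zero_left] at this
  exact lt_irrefl _ this

theorem exists_continuous_approx_ne_zero_on_sphere {g : V → V} (hg : Continuous g) {ε : ℝ}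
    (hε : 0 < ε) : ∃ Q : V → V, Continuous Q ∧ (∀ x, ‖Q x - g x‖ < ε) ∧
      ∀ x ∈ sphere (0 : V) 1, Q x ≠ 0 := by
  borelize V
  let μ : Measure V := volume
  obtain ⟨P, hP, hPg, -⟩ := hg.exists_contDiff_approx 1 (ε := fun _ => ε / 2)
    continuous_const fun _ => half_pos hε
  have hnull : μ (P '' sphere 0 1) = 0 :=
    addHaar_image_eq_zero_of_differentiableOn_of_addHaar_eq_zero μ
      (hP.differentiable one_ne_zero).differentiableOn
      (Measure.addHaar_sphere_of_ne_zero μ 0 one_ne_zero)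
  obtain ⟨c, hc, hcP⟩ : ∃ c ∈ ball (0 : V) (ε / 2), c ∉ P '' sphere 0 1 := by
    by_contra! hsub
    exact (measure_ball_pos μ (0 : V) (half_pos hε)).ne' (measure_mono_null hsub hnull)
  refine ⟨fun x => P x - c, hP.continuous.sub continuous_const, fun x => ?_, fun x hx h0 =>
    hcP ⟨x, hx, sub_eq_zero.1 h0⟩⟩
  have h1 := hPg x
  rw [dist_eq_norm] at h1
  rw [mem_ball_zero_iff] at hc
  calc ‖P x - c - g x‖ = ‖(P x - g x) - c‖ := by congr 1; abel
    _ ≤ ‖P x - g x‖ + ‖c‖ := norm_sub_le _ _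
    _ < ε := by linarith

theorem surjOn_unit_sphere_of_injOn {f : V → V}
    (hmaps : MapsTo f (sphere 0 1) (sphere 0 1)) (hcont : ContinuousOn f (sphere 0 1))
    (hinj : InjOn f (sphere 0 1)) : SurjOn f (sphere 0 1) (sphere 0 1) := by
  intro v hv
  by_contra hvf
  have hv1 : ‖v‖ = 1 := by simpa using hv
  have hclosed : IsClosedEmbedding ((sphere (0 : V) 1).domRestrict f) :=
    (continuousOn_iff_continuous_domRestrict.1 hcont).isClosedEmbedding hinj.injective
  obtain ⟨g, hg⟩ := ContinuousMap.exists_extension' hclosed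
    (⟨Subtype.val, continuous_subtype_val⟩ : C(sphere (0 : V) 1, V))
  obtain ⟨F, hF⟩ := ContinuousMap.exists_restrict_eq isClosed_sphere
    (⟨_, continuousOn_iff_continuous_domRestrict.1 hcont⟩ : C(sphere (0 : V) 1, V))
  have hgf (x : V) (hx : x ∈ sphere (0 : V) 1) : g (f x) = x := congrFun hg ⟨x, hx⟩
  have hFf (x : V) (hx : x ∈ sphere (0 : V) 1) : F x = f x := DFunLike.congr_fun hF ⟨x, hx⟩
  obtain ⟨Q, hQ, hQg, hQ0⟩ := exists_continuous_approx_ne_zero_on_sphere g.continuous one_pos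
  let u : V → V := fun x => (max ‖x‖ (1 / 2))⁻¹ • x
  let a : V → ℝ := fun x => max 0 (2 * ‖x‖ - 1)
  let p : V → V := fun x => a x • F (u x) - (1 - a x) • v
  have hu : Continuous u :=
    ((continuous_norm.max continuous_const).inv₀ fun x => by positivity).smul continuous_id
  have ha : Continuous a := by fun_prop
  have hp : Continuous p := by fun_prop
  have hp0 (x : V) : p x ≠ 0 := by
    rcases le_or_gt ‖x‖ (1 / 2) with hx | hx
    · have h0 : a x = 0 := max_eq_left (by linarith)
      have : v ≠ 0 := norm_pos_iff.1 (hv1 ▸ one_pos)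
      simpa [p, h0] using this
    · have hux : u x ∈ sphere (0 : V) 1 := by
        rw [mem_sphere_zero_iff_norm]
        simp only [u]
        rw [max_eq_left hx.le]
        exact norm_smul_inv_norm (𝕜 := ℝ) (norm_pos_iff.1 (by linarith))
      have ha0 : 0 < a x := lt_max_of_lt_right (by linarith)
      intro h0
      have h1 : a x • f (u x) = (1 - a x) • v := by rw [← hFf _ hux]; exact sub_eq_zero.1 h0
      have hfu : ‖f (u x)‖ = 1 := by simpa using hmaps hux
      have h2 := congrArg norm h1
      rw [norm_smul, norm_smul, hfu, hv1, Real.norm_of_nonneg ha0.le, mul_one, mul_one,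
        Real.norm_eq_abs] at h2
      have h3 : 1 - a x = a x := by
        rcases abs_choice (1 - a x) with h | h <;> linarith
      rw [h3] at h1
      exact hvf ⟨u x, hux, smul_right_injective V ha0.ne' h1⟩
  obtain ⟨x, hx⟩ := exists_eq_zero_of_norm_sub_lt_one (h := fun x => Q (‖p x‖⁻¹ • p x))
    (hQ.comp ((hp.norm.inv₀ fun x => norm_ne_zero_iff.2 (hp0 x)).smul hp)) fun x hx => by
      have hx1 : ‖x‖ = 1 := by simpa using hx
      have hux : u x = x := by simp only [u, hx1]; norm_num
      have hax : a x = 1 := by simp only [a, hx1]; norm_num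
      have hpx : p x = f x := by simp [p, hax, hux, hFf x hx]
      have hfx : ‖f x‖ = 1 := by simpa using hmaps hx
      have := hQg (f x)
      rw [hgf x hx] at this
      simpa [hpx, hfx] using this
  exact hQ0 _ (by simp [norm_smul, hp0 x]) hx

end InnerProductSpace

/-- The homeomorphism between unit spheres induced by an isomorphism of normed spaces, as a map
defined on the whole space. -/
noncomputable def ContinuousLinearEquiv.sphereMap {E F : Type*} [NormedAddCommGroup E]
    [NormedSpace ℝ E] [NormedAddCommGroup F] [NormedSpace ℝ F] (e : E ≃L[ℝ] F) (x : E) : F :=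
  ‖e x‖⁻¹ • e x

namespace ContinuousLinearEquiv

variable {E F : Type*} [NormedAddCommGroup E] [NormedSpace ℝ E] [NormedAddCommGroup F]
  [NormedSpace ℝ F] (e : E ≃L[ℝ] F)

theorem apply_ne_zero_of_mem_unit_sphere {x : E} (hx : x ∈ sphere (0 : E) 1) : e x ≠ 0 := by
  rw [Ne, e.map_eq_zero_iff]
  rintro rfl
  simp at hx

theorem mapsTo_sphereMap : MapsTo e.sphereMap (sphere 0 1) (sphere 0 1) := fun x hx => by
  simp [sphereMap, norm_smul, e.apply_ne_zero_of_mem_unit_sphere hx]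

theorem continuousOn_sphereMap : ContinuousOn e.sphereMap (sphere 0 1) :=
  (e.continuous.norm.continuousOn.inv₀ fun _ hx =>
    norm_ne_zero_iff.2 (e.apply_ne_zero_of_mem_unit_sphere hx)).smul e.continuous.continuousOn

theorem leftInvOn_sphereMap : LeftInvOn e.symm.sphereMap e.sphereMap (sphere 0 1) := fun x hx => by
  have hx1 : ‖x‖ = 1 := by simpa using hx
  have h := norm_ne_zero_iff.2 (e.apply_ne_zero_of_mem_unit_sphere hx)
  simp [sphereMap, norm_smul, hx1, smul_smul, h]

end ContinuousLinearEquiv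

/-- invariance of domain consequence: for `k ≥ 1`, any continuous injective
map between the unit spheres of two `k`-dimensional real normed vector spaces is
surjective. -/
theorem stmt_12 (k : ℕ) (hk : 1 ≤ k)
    {E Y : Type*} [NormedAddCommGroup E] [NormedSpace ℝ E]
    [NormedAddCommGroup Y] [NormedSpace ℝ Y]
    (hE : Module.finrank ℝ E = k) (hY : Module.finrank ℝ Y = k)
    (f : E → Y)
    (hmaps : Set.MapsTo f (Metric.sphere (0 : E) 1) (Metric.sphere (0 : Y) 1))
    (hcont : ContinuousOn f (Metric.sphere (0 : E) 1))
    (hinj : Set.InjOn f (Metric.sphere (0 : E) 1)) :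
    Set.SurjOn f (Metric.sphere (0 : E) 1) (Metric.sphere (0 : Y) 1) := by
  have : FiniteDimensional ℝ E := FiniteDimensional.of_finrank_pos (by omega)
  have : FiniteDimensional ℝ Y := FiniteDimensional.of_finrank_pos (by omega)
  let e : E ≃L[ℝ] EuclideanSpace ℝ (Fin k) := .ofFinrankEq (by simp [hE])
  let d : Y ≃L[ℝ] EuclideanSpace ℝ (Fin k) := .ofFinrankEq (by simp [hY])
  have hfe := hmaps.comp e.symm.mapsTo_sphereMap
  have hsurj : SurjOn (d.sphereMap ∘ f ∘ e.symm.sphereMap) (sphere 0 1) (sphere 0 1) :=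
    surjOn_unit_sphere_of_injOn (d.mapsTo_sphereMap.comp hfe)
      (d.continuousOn_sphereMap.comp
        (hcont.comp e.symm.continuousOn_sphereMap e.symm.mapsTo_sphereMap) hfe)
      (d.leftInvOn_sphereMap.injOn.comp
        (hinj.comp e.symm.leftInvOn_sphereMap.injOn e.symm.mapsTo_sphereMap) hfe)
  intro y hy
  obtain ⟨x, hx, hxy⟩ := hsurj (d.mapsTo_sphereMap hy)
  exact ⟨e.symm.sphereMap x, e.symm.mapsTo_sphereMap hx,
    d.leftInvOn_sphereMap.injOn (hfe hx) hy hxy⟩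
end

section
/- Let k ∈ ℕ and let F : S_{ℓ∞^k} → S_{ℓ1^k} be an injective continuous map that does not increase support size. Then there exists a permutation π of {1,…,k} such that F ∘ P_π is support preserving. In particular, such an F preserves support size: |supp(F(x))| = |supp(x)| for all x ∈ S_{ℓ∞^k}. -/
/-- The `i`-th coordinate of a lattice point increased by one. -/
def latticeStep {ι : Type*} [DecidableEq ι] (i : ι) (x : ι → ℕ) : ι → ℕ :=
  Function.update x i (x i + 1)

/-- The cup product of the coboundaries of a list of `ZMod 2`-valued lattice functions, evaluated
on the unit cube at `x` with set of directions `D`. -/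
def cupCoboundary {ι : Type*} [DecidableEq ι] :
    List ((ι → ℕ) → ZMod 2) → Finset ι → (ι → ℕ) → ZMod 2
  | [], _, _ => 1
  | f :: fs, D, x =>
    ∑ i ∈ D, (f (latticeStep i x) + f x) * cupCoboundary fs (D.erase i) (latticeStep i x)

section Lattice

variable {ι : Type*} [DecidableEq ι]

lemma latticeStep_comm (i j : ι) (x : ι → ℕ) :
    latticeStep i (latticeStep j x) = latticeStep j (latticeStep i x) := by
  rcases eq_or_ne i j with rfl | h
  · rfl
  · ext l
    simp only [latticeStep, Function.update_apply]
    grind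

lemma sum_erase_comm {M : Type*} [AddCommMonoid M] (D : Finset ι) (h : ι → ι → M) :
    ∑ i ∈ D, ∑ j ∈ D.erase i, h i j = ∑ i ∈ D, ∑ j ∈ D.erase i, h j i := by
  refine Finset.sum_comm' fun i j => ?_
  simp only [Finset.mem_erase]
  tauto

/-- In characteristic two, off-diagonal sums of symmetric functions vanish. -/
lemma sum_erase_symm_eq_zero (D : Finset ι) (h : ι → ι → ZMod 2) (hs : ∀ i j, h i j = h j i) :
    ∑ i ∈ D, ∑ j ∈ D.erase i, h i j = 0 := by
  induction D using Finset.induction_on with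
  | empty => simp
  | insert a s ha ih =>
    rw [Finset.sum_insert ha, Finset.erase_insert ha]
    have : ∀ i ∈ s, ∑ j ∈ (insert a s).erase i, h i j = h a i + ∑ j ∈ s.erase i, h i j := by
      intro i hi
      have hia : a ≠ i := by rintro rfl; exact ha hi
      rw [Finset.erase_insert_of_ne hia, Finset.sum_insert (by simp [ha]), hs a i]
    rw [Finset.sum_congr rfl this, Finset.sum_add_distrib, ih, add_zero, CharTwo.add_self_eq_zero]

/-- The cup product of coboundaries is a cubical cocycle. -/
lemma sum_cupCoboundary_latticeStep (fs : List ((ι → ℕ) → ZMod 2)) :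
    ∀ (D : Finset ι) (x : ι → ℕ), D.card = fs.length + 1 →
      ∑ i ∈ D, cupCoboundary fs (D.erase i) (latticeStep i x) =
        ∑ i ∈ D, cupCoboundary fs (D.erase i) x := by
  induction fs with
  | nil => intro D x _; simp [cupCoboundary]
  | cons f fs ih =>
    intro D x hD
    rw [List.length_cons] at hD
    have hc : ∀ i ∈ D, (D.erase i).card = fs.length + 1 := by
      intro i hi; rw [Finset.card_erase_of_mem hi]; omega
    have h1 : ∑ i ∈ D, ∑ j ∈ D.erase i, f (latticeStep j (latticeStep i x)) *
        cupCoboundary fs ((D.erase i).erase j) (latticeStep j (latticeStep i x)) = 0 :=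
      sum_erase_symm_eq_zero D _ fun i j => by rw [latticeStep_comm, Finset.erase_right_comm]
    have h2 : ∑ i ∈ D, ∑ j ∈ D.erase i, f x * cupCoboundary fs ((D.erase i).erase j)
        (latticeStep j x) = 0 := by
      rw [← sum_erase_symm_eq_zero D
        (fun i j => f x * cupCoboundary fs ((D.erase i).erase j) x)
        fun i j => by rw [Finset.erase_right_comm]]
      refine Finset.sum_congr rfl fun i hi => ?_
      rw [← Finset.mul_sum, ← Finset.mul_sum, ih _ _ (hc i hi)]
    simp only [cupCoboundary, add_mul, Finset.sum_add_distrib]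
    rw [h1, h2, zero_add, add_zero,
      sum_erase_comm D fun i j => f (latticeStep j x) *
        cupCoboundary fs ((D.erase i).erase j) (latticeStep j x)]
    refine Finset.sum_congr rfl fun i hi => ?_
    rw [← Finset.mul_sum, ih _ _ (hc i hi), Finset.mul_sum]
    exact Finset.sum_congr rfl fun j _ => by rw [Finset.erase_right_comm]

/-- The cup product of coboundaries is the coboundary of the cup product in which the first
factor has been replaced by its primitive. -/
lemma cupCoboundary_cons_eq (f : (ι → ℕ) → ZMod 2) (fs : List ((ι → ℕ) → ZMod 2))
    (D : Finset ι) (x : ι → ℕ) (hD : D.card = fs.length + 1) :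
    cupCoboundary (f :: fs) D x = ∑ i ∈ D,
      (f (latticeStep i x) * cupCoboundary fs (D.erase i) (latticeStep i x) +
        f x * cupCoboundary fs (D.erase i) x) := by
  simp only [cupCoboundary, add_mul, Finset.sum_add_distrib]
  rw [← Finset.mul_sum, ← Finset.mul_sum, sum_cupCoboundary_latticeStep fs D x hD]

lemma cupCoboundary_eq_zero_of_const {fs : List ((ι → ℕ) → ZMod 2)} {f : (ι → ℕ) → ZMod 2}
    {i : ι} {c : ℕ} {v : ZMod 2} (hf : f ∈ fs) (hv : ∀ y, y i = c → f y = v) :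
    ∀ (D : Finset ι) (x : ι → ℕ), i ∉ D → x i = c → cupCoboundary fs D x = 0 := by
  induction fs with
  | nil => simp at hf
  | cons g fs ih =>
    intro D x hi hx
    refine Finset.sum_eq_zero fun j hj => ?_
    have hji : i ≠ j := by rintro rfl; exact hi hj
    have hs : latticeStep j x i = c := by simp [latticeStep, hji, hx]
    rcases List.mem_cons.1 hf with rfl | hf
    · rw [hv _ hs, hv _ hx, CharTwo.add_self_eq_zero, zero_mul]
    · rw [ih hf _ _ (by simp [hi]) hs, mul_zero]

lemma exists_ne_of_cupCoboundary_ne_zero (fs : List ((ι → ℕ) → ZMod 2)) :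
    ∀ (D : Finset ι) (x : ι → ℕ), cupCoboundary fs D x ≠ 0 → ∀ f ∈ fs, ∃ y z : ι → ℕ,
      f y ≠ f z ∧ ∀ i, x i ≤ y i ∧ x i ≤ z i ∧
        y i ≤ x i + (if i ∈ D then 1 else 0) ∧ z i ≤ x i + (if i ∈ D then 1 else 0) := by
  induction fs with
  | nil => simp
  | cons g fs ih =>
    intro D x h f hf
    obtain ⟨j, hj, hne⟩ := Finset.exists_ne_zero_of_sum_ne_zero h
    rcases List.mem_cons.1 hf with rfl | hf
    · refine ⟨latticeStep j x, x, fun he => left_ne_zero_of_mul hne ?_, fun i => ?_⟩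
      · rw [he, CharTwo.add_self_eq_zero]
      · simp only [latticeStep, Function.update_apply]
        grind
    · obtain ⟨y, z, hyz, hb⟩ := ih _ _ (right_ne_zero_of_mul hne) f hf
      refine ⟨y, z, hyz, fun i => ?_⟩
      have := hb i
      simp only [latticeStep, Function.update_apply, Finset.mem_erase] at this
      grind

variable [Fintype ι]

/-- The lower corners of the unit cubes with directions `D` tiling the face of `[0, N]^ι` on which
the coordinates outside `D` equal `N`. -/
def faceGrid (N : ℕ) (D : Finset ι) : Finset (ι → ℕ) :=
  Fintype.piFinset fun i => if i ∈ D then Finset.range N else {N}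

lemma mem_faceGrid {N : ℕ} {D : Finset ι} {x : ι → ℕ} :
    x ∈ faceGrid N D ↔ ∀ i, (i ∈ D → x i < N) ∧ (i ∉ D → x i = N) := by
  rw [faceGrid, Fintype.mem_piFinset]
  refine forall_congr' fun i => ?_
  split_ifs with h <;> simp [h]

lemma sum_faceGrid_telescope (N : ℕ) {D : Finset ι} {i : ι} (hi : i ∈ D)
    (g : (ι → ℕ) → ZMod 2) :
    ∑ x ∈ faceGrid N D, (g (latticeStep i x) + g x) =
      ∑ x ∈ faceGrid N (D.erase i), (g x + g (Function.update x i 0)) := by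
  have h : ∑ x ∈ faceGrid N D, (g (latticeStep i x) + g x) =
      ∑ q ∈ faceGrid N (D.erase i) ×ˢ Finset.range N,
        (g (Function.update q.1 i (q.2 + 1)) + g (Function.update q.1 i q.2)) := by
    refine Finset.sum_bij' (fun x _ => (Function.update x i N, x i))
      (fun q _ => Function.update q.1 i q.2) ?_ ?_ ?_ ?_ ?_
    · intro x hx
      rw [mem_faceGrid] at hx
      simp only [Finset.mem_product, mem_faceGrid, Finset.mem_range, Finset.mem_erase,
        Function.update_apply]
      grind
    · intro q hq
      simp only [Finset.mem_product, mem_faceGrid, Finset.mem_range, Finset.mem_erase] at hq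
      simp only [mem_faceGrid, Function.update_apply]
      grind
    · intro x _; simp
    · intro q hq
      have : q.1 i = N := by
        simp only [Finset.mem_product, mem_faceGrid] at hq
        exact (hq.1 i).2 (by simp)
      ext1
      · simp [← this]
      · simp
    · intro x _; simp [latticeStep]
  rw [h, Finset.sum_product]
  refine Finset.sum_congr rfl fun x hx => ?_
  have hxi : x i = N := (mem_faceGrid.1 hx i).2 (by simp)
  simp only [← CharTwo.sub_eq_add]
  rw [Finset.sum_range_sub (fun j => g (Function.update x i j)), ← hxi, Function.update_eq_self]

/-- The mod 2 degree of a lattice map which respects opposite faces of the cube is one. -/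
lemma sum_cupCoboundary_eq_one (N : ℕ) (f : ι → (ι → ℕ) → ZMod 2)
    (h0 : ∀ i x, x i = 0 → f i x = 0) (h1 : ∀ i x, x i = N → f i x = 1) :
    ∀ L : List ι, L.Nodup →
      ∑ x ∈ faceGrid N L.toFinset, cupCoboundary (L.map f) L.toFinset x = 1 := by
  intro L
  induction L with
  | nil =>
    intro _
    have : faceGrid N (∅ : Finset ι) = {fun _ => N} := by
      ext x; simp [mem_faceGrid, funext_iff]
    simp [this, cupCoboundary]
  | cons a L ih =>
    intro hL
    have haL : a ∉ L := (List.nodup_cons.1 hL).1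
    have hLn := (List.nodup_cons.1 hL).2
    set D := (a :: L).toFinset with hDdef
    have hcard : D.card = (L.map f).length + 1 := by
      rw [hDdef, List.toFinset_card_of_nodup hL]; simp
    have haD : a ∈ D := by simp [hDdef]
    have herase : D.erase a = L.toFinset := by
      rw [hDdef, List.toFinset_cons, Finset.erase_insert (by simpa using haL)]
    rw [List.map_cons, Finset.sum_congr rfl fun x _ => cupCoboundary_cons_eq _ _ D x hcard,
      Finset.sum_comm, Finset.sum_congr rfl fun i hi => sum_faceGrid_telescope N hi
        fun x => f a x * cupCoboundary (L.map f) (D.erase i) x, Finset.sum_eq_single_of_mem a haD]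
    · rw [herase, ← ih hLn]
      refine Finset.sum_congr rfl fun x hx => ?_
      rw [h1 a x ((mem_faceGrid.1 hx a).2 (by simpa using haL)), h0 a _ (by simp)]
      ring
    · intro i hi hia
      have hiL : f i ∈ L.map f := by
        refine List.mem_map_of_mem ?_
        simpa [hDdef, hia] using hi
      refine Finset.sum_eq_zero fun x hx => ?_
      rw [cupCoboundary_eq_zero_of_const hiL (h1 i) _ x (by simp)
          ((mem_faceGrid.1 hx i).2 (by simp)),
        cupCoboundary_eq_zero_of_const hiL (h0 i) _ (Function.update x i 0) (by simp) (by simp)]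
      ring

/-- The discrete Poincaré–Miranda theorem: some unit cube meets both classes of every labelling. -/
lemma exists_cube_forall_ne (N : ℕ) (f : ι → (ι → ℕ) → ZMod 2)
    (h0 : ∀ i x, x i = 0 → f i x = 0) (h1 : ∀ i x, x i = N → f i x = 1) :
    ∃ x : ι → ℕ, (∀ i, x i < N) ∧ ∀ i, ∃ y z : ι → ℕ, f i y ≠ f i z ∧
      ∀ j, x j ≤ y j ∧ x j ≤ z j ∧ y j ≤ x j + 1 ∧ z j ≤ x j + 1 := by
  have hsum := sum_cupCoboundary_eq_one N f h0 h1 Finset.univ.toList (Finset.nodup_toList _)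
  rw [Finset.toList_toFinset] at hsum
  obtain ⟨x, hx, hne⟩ := Finset.exists_ne_zero_of_sum_ne_zero (hsum.trans_ne one_ne_zero)
  refine ⟨x, fun i => (mem_faceGrid.1 hx i).1 (Finset.mem_univ i), fun i => ?_⟩
  simpa using exists_ne_of_cupCoboundary_ne_zero _ _ x hne (f i)
    (List.mem_map_of_mem (by simp))

/-- The Poincaré–Miranda theorem, with strict inequalities on the faces of the cube. -/
theorem poincare_miranda (g : (ι → ℝ) → ι → ℝ) (hg : ContinuousOn g (Set.Icc 0 1))
    (h0 : ∀ i, ∀ x ∈ Set.Icc (0 : ι → ℝ) 1, x i = 0 → g x i < 0)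
    (h1 : ∀ i, ∀ x ∈ Set.Icc (0 : ι → ℝ) 1, x i = 1 → 0 < g x i) :
    ∃ x ∈ Set.Icc (0 : ι → ℝ) 1, g x = 0 := by
  by_contra! hne
  have hK : IsCompact (Set.Icc (0 : ι → ℝ) 1) := isCompact_Icc
  obtain ⟨m, hm, hmin⟩ := hK.exists_isMinOn ⟨0, by simp⟩ hg.norm
  have hpos : 0 < ‖g m‖ := norm_pos_iff.2 (hne m hm)
  obtain ⟨δ, hδ, hu⟩ := Metric.uniformContinuousOn_iff.1
    (hK.uniformContinuousOn_of_continuous hg) _ hpos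
  obtain ⟨n, hn⟩ := exists_nat_one_div_lt hδ
  have hN : (0 : ℝ) < (n : ℝ) + 1 := by positivity
  let s : (ι → ℕ) → ι → ℝ := fun x i => x i / ((n : ℝ) + 1)
  have hs : ∀ x : ι → ℕ, (∀ i, x i ≤ n + 1) → s x ∈ Set.Icc (0 : ι → ℝ) 1 := by
    refine fun x hx => ⟨fun i => by simp only [s, Pi.zero_apply]; positivity, fun i => ?_⟩
    simp only [s, Pi.one_apply]
    rw [div_le_one hN]
    exact_mod_cast hx i
  classical
  let f : ι → (ι → ℕ) → ZMod 2 := fun i x =>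
    if x i = 0 then 0 else if x i = n + 1 then 1 else if 0 ≤ g (s x) i then 1 else 0
  have hf : ∀ i x, (∀ j, x j ≤ n + 1) → f i x = if 0 ≤ g (s x) i then 1 else 0 := by
    intro i x hx
    by_cases hx0 : x i = 0
    · simp [f, hx0, (h0 i _ (hs x hx) (by simp [s, hx0])).not_ge]
    by_cases hx1 : x i = n + 1
    · have := h1 i _ (hs x hx) (by simp only [s, hx1]; push_cast; exact div_self hN.ne')
      simp [f, hx1, this.le]
    · simp [f, hx0, hx1]
  obtain ⟨x, hx, hyz⟩ := exists_cube_forall_ne (n + 1) f (fun i x h => by simp [f, h])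
    (fun i x h => by simp [f, h])
  have hxI := hs x fun i => (hx i).le
  have hclose : ∀ y : ι → ℕ, (∀ j, x j ≤ y j ∧ y j ≤ x j + 1) → s y ∈ Set.Icc (0 : ι → ℝ) 1 ∧
      ∀ i, |g (s x) i - g (s y) i| < ‖g m‖ := by
    intro y hy
    have hyI := hs y fun i => (hy i).2.trans (hx i)
    refine ⟨hyI, fun i => ?_⟩
    have hd : dist (s x) (s y) < δ := by
      refine lt_of_le_of_lt ((dist_pi_le_iff (by positivity)).2 fun j => ?_) hn
      rw [Real.dist_eq, abs_sub_comm, ← sub_div, abs_div, abs_of_pos hN]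
      have h1 : (x j : ℝ) ≤ y j := by exact_mod_cast (hy j).1
      have h2 : (y j : ℝ) ≤ x j + 1 := by exact_mod_cast (hy j).2
      gcongr
      rw [abs_le]; constructor <;> linarith
    exact lt_of_le_of_lt (dist_le_pi_dist (g (s x)) (g (s y)) i) (hu _ hxI _ hyI hd)
  refine (hmin hxI).not_gt ((pi_norm_lt_iff hpos).2 fun i => ?_)
  have key : ∀ y z : ι → ℕ, (∀ j, x j ≤ y j ∧ y j ≤ x j + 1) → (∀ j, x j ≤ z j ∧ z j ≤ x j + 1) →
      0 ≤ g (s y) i → g (s z) i < 0 → ‖g (s x) i‖ < ‖g m‖ := by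
    intro y z hy hz hgy hgz
    have h1 := abs_lt.1 ((hclose y hy).2 i)
    have h2 := abs_lt.1 ((hclose z hz).2 i)
    rw [Real.norm_eq_abs, abs_lt]
    constructor <;> linarith
  obtain ⟨y, z, hne', hb⟩ := hyz i
  have hy : ∀ j, x j ≤ y j ∧ y j ≤ x j + 1 := fun j => ⟨(hb j).1, (hb j).2.2.1⟩
  have hz : ∀ j, x j ≤ z j ∧ z j ≤ x j + 1 := fun j => ⟨(hb j).2.1, (hb j).2.2.2⟩
  rw [hf i y fun j => (hy j).2.trans (hx j), hf i z fun j => (hz j).2.trans (hx j)] at hne'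
  by_cases hgy : 0 ≤ g (s y) i <;> by_cases hgz : 0 ≤ g (s z) i
  · simp [hgy, hgz] at hne'
  · exact key y z hy hz hgy (not_le.1 hgz)
  · exact key z y hz hy hgz (not_le.1 hgy)
  · simp [hgy, hgz] at hne'

end Lattice

section Cells

open Set Filter Topology SignType

variable {k : ℕ}

lemma supNorm_eq_norm (x : Fin k → ℝ) : supNorm x = ‖x‖ := by
  rcases isEmpty_or_nonempty (Fin k) with h | h
  · rw [Subsingleton.elim x 0, norm_zero]
    simp [supNorm]
  · refine le_antisymm (ciSup_le fun i => norm_le_pi_norm x i) ?_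
    exact (pi_norm_le_iff_of_nonempty _).2 fun i =>
      le_ciSup (f := fun i => |x i|) (Set.finite_range _).bddAbove i

lemma abs_le_l1Norm (x : Fin k → ℝ) (i : Fin k) : |x i| ≤ l1Norm x :=
  Finset.single_le_sum (f := fun i => |x i|) (fun _ _ => abs_nonneg _) (Finset.mem_univ i)

lemma eventually_sign_eq {X : Type*} [TopologicalSpace X] {f : X → ℝ} {s : Set X} {a : X}
    (hf : ContinuousWithinAt f s a) (ha : f a ≠ 0) : ∀ᶠ y in 𝓝[s] a, sign (f y) = sign (f a) := by
  have h := (continuousAt_sign_of_ne_zero ha).comp_continuousWithinAt hf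
  exact h.eventually (show ∀ᶠ z in 𝓝 (sign (f a)), z = sign (f a) from by simp)

lemma sign_signType_coe (σ : SignType) : sign (σ : ℝ) = σ := by
  cases σ <;> simp

lemma coe_sign_mul_pos {a b : ℝ} (hb : b ≠ 0) (h : sign a = sign b) : 0 < (sign b : ℝ) * a := by
  rcases lt_or_gt_of_ne hb with hb | hb
  · rw [sign_neg hb, sign_eq_neg_one_iff] at h
    simp [sign_neg hb, h]
  · rw [sign_pos hb, sign_eq_one_iff] at h
    simp [sign_pos hb, h]

lemma abs_coe_sign {a : ℝ} (ha : a ≠ 0) : |(sign a : ℝ)| = 1 := by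
  rcases lt_or_gt_of_ne ha with h | h <;> simp [sign_neg, sign_pos, h]

lemma ne_zero_iff_of_sign_eq {a b : ℝ} (h : sign a = sign b) : a ≠ 0 ↔ b ≠ 0 := by
  rw [← sign_ne_zero, h, sign_ne_zero]

lemma norm_inv_norm_smul {E : Type*} [NormedAddCommGroup E] [NormedSpace ℝ E] {w : E}
    (hw : w ≠ 0) : ‖‖w‖⁻¹ • w‖ = 1 := by
  rw [norm_smul, norm_inv, norm_norm, inv_mul_cancel₀ (norm_ne_zero_iff.2 hw)]

/-- If a continuous map has constant support size on an open cell of the cube, then it has constant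
sign pattern there, and this pattern controls the images of the vertices of the cell. -/
lemma sign_eq_of_const_ncard_support {G : (Fin k → ℝ) → Fin k → ℝ}
    (hG : ContinuousOn G {x | ‖x‖ = 1}) {x : Fin k → ℝ} (hx : ‖x‖ = 1)
    (hconst : ∀ y : Fin k → ℝ, ‖y‖ = 1 → (∀ j, sign (y j) = sign (x j)) →
      {j | G y j ≠ 0}.ncard = {j | G x j ≠ 0}.ncard)
    {i : Fin k} (hi : x i ≠ 0) {a : Fin k}
    (ha : G (Pi.single i (sign (x i) : ℝ)) a ≠ 0) :
    sign (G (Pi.single i (sign (x i) : ℝ)) a) = sign (G x a) := by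
  set v : Fin k → ℝ := Pi.single i (sign (x i) : ℝ) with hv
  let w : ℝ → Fin k → ℝ := fun s => (1 - s) • v + s • x
  have hvsign : ∀ j, v j = 0 ∨ sign (v j) = sign (x j) := by
    intro j
    rcases eq_or_ne j i with rfl | hj
    · right; simp [hv, sign_signType_coe]
    · left; simp [hv, hj]
  have hvn : ‖v‖ = 1 := by rw [hv, Pi.norm_single, Real.norm_eq_abs, abs_coe_sign hi]
  have hwsign : ∀ s ∈ Ioc (0 : ℝ) 1, ∀ j, sign (w s j) = sign (x j) := by
    intro s hs j
    have hs1 : 0 ≤ 1 - s := by linarith [hs.2]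
    have he : w s j = (1 - s) * v j + s * x j := rfl
    rw [he]
    rcases hvsign j with h | h
    · rw [h, mul_zero, zero_add, sign_mul, sign_pos hs.1, one_mul]
    · rcases lt_trichotomy (x j) 0 with hxj | hxj | hxj
      · rw [sign_neg hxj, sign_eq_neg_one_iff] at *
        nlinarith [mul_nonneg hs1 (neg_pos.2 h).le, mul_pos hs.1 (neg_pos.2 hxj)]
      · rw [hxj, sign_zero, sign_eq_zero_iff] at h
        rw [hxj, h, mul_zero, mul_zero, add_zero]
      · rw [sign_pos hxj, sign_eq_one_iff] at *
        nlinarith [mul_nonneg hs1 h.le, mul_pos hs.1 hxj]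
  have hw0 : w 0 = v := by simp [w]
  have hw1 : w 1 = x := by simp [w]
  have hwne : ∀ s ∈ Icc (0 : ℝ) 1, w s ≠ 0 := by
    intro s hs h0
    rcases hs.1.eq_or_lt with rfl | hs0
    · rw [hw0] at h0; simp [h0] at hvn
    · have := hwsign s ⟨hs0, hs.2⟩ i
      rw [h0] at this
      simp only [Pi.zero_apply, sign_zero] at this
      exact hi (sign_eq_zero_iff.1 this.symm)
  have hwc : Continuous w := by fun_prop
  let z : ℝ → Fin k → ℝ := fun s => ‖w s‖⁻¹ • w s
  have hzc : ContinuousOn z (Icc 0 1) :=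
    (hwc.norm.continuousOn.inv₀ fun s hs => norm_ne_zero_iff.2 (hwne s hs)).smul hwc.continuousOn
  have hzn : ∀ s ∈ Icc (0 : ℝ) 1, ‖z s‖ = 1 := fun s hs => norm_inv_norm_smul (hwne s hs)
  have hzsign : ∀ s ∈ Ioc (0 : ℝ) 1, ∀ j, sign (z s j) = sign (x j) := by
    intro s hs j
    have : 0 < ‖w s‖⁻¹ := inv_pos.2 (norm_pos_iff.2 (hwne s (Ioc_subset_Icc_self hs)))
    rw [← hwsign s hs j, show z s j = ‖w s‖⁻¹ * w s j from rfl, sign_mul, sign_pos this, one_mul]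
  have hz0 : z 0 = v := by simp [z, hw0, hvn]
  have hz1 : z 1 = x := by simp [z, hw1, hx]
  have hH : ∀ b, ContinuousOn (fun s => G (z s) b) (Icc 0 1) := fun b =>
    (continuous_apply b).comp_continuousOn (hG.comp hzc hzn)
  have hφ : ContinuousOn (fun s b => sign (G (z s) b)) (Ioc (0 : ℝ) 1) := by
    intro s hs
    have hev : ∀ᶠ r in 𝓝[Ioc 0 1] s, ∀ b, G (z s) b ≠ 0 →
        sign (G (z r) b) = sign (G (z s) b) := by
      refine eventually_all.2 fun b => ?_
      by_cases hb : G (z s) b = 0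
      · simp [hb]
      · filter_upwards [eventually_sign_eq (((hH b).mono Ioc_subset_Icc_self) s hs) hb] with r hr _
        exact hr
    refine tendsto_nhds_of_eventually_eq ?_
    filter_upwards [hev, self_mem_nhdsWithin] with r hr hrI
    have hcard : ∀ q ∈ Ioc (0 : ℝ) 1, {j | G (z q) j ≠ 0}.ncard = {j | G x j ≠ 0}.ncard :=
      fun q hq => hconst _ (hzn q (Ioc_subset_Icc_self hq)) (hzsign q hq)
    have hsub : {j | G (z s) j ≠ 0} ⊆ {j | G (z r) j ≠ 0} := fun b hb =>
      (ne_zero_iff_of_sign_eq (hr b hb)).2 hb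
    have heq := Set.eq_of_subset_of_ncard_le hsub (by rw [hcard r hrI, hcard s hs])
    funext b
    by_cases hb : G (z s) b = 0
    · have : b ∉ {j | G (z r) j ≠ 0} := by rw [← heq]; simpa using hb
      simp only [mem_ofPred_eq, not_not] at this
      rw [hb, this]
    · exact hr b hb
  have h0 : ∀ᶠ s in 𝓝[Ioc (0 : ℝ) 1] 0, sign (G (z s) a) = sign (G (z 0) a) :=
    eventually_sign_eq (((hH a) 0 (by simp)).mono Ioc_subset_Icc_self) (by rwa [hz0])
  have : (𝓝[Ioc (0 : ℝ) 1] 0).NeBot := by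
    rw [nhdsWithin_Ioc_eq_nhdsGT one_pos]; infer_instance
  obtain ⟨s, hs, hsI⟩ := (h0.and self_mem_nhdsWithin).exists
  have hsx := congrFun (isPreconnected_Ioc.constant hφ hsI (show (1 : ℝ) ∈ Ioc (0 : ℝ) 1 by simp)) a
  simp only [hz1] at hsx
  rw [← hsx, hs, hz0]

/-- The positively homogeneous extension of a bounded continuous map on the sphere. -/
lemma continuous_norm_smul_comp {G : (Fin k → ℝ) → Fin k → ℝ}
    (hG : ContinuousOn G {x | ‖x‖ = 1}) (hb : ∀ x, ‖x‖ = 1 → ‖G x‖ ≤ 1) :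
    Continuous fun w : Fin k → ℝ => ‖w‖ • G (‖w‖⁻¹ • w) := by
  have hmaps : ∀ w : Fin k → ℝ, w ≠ 0 → ‖‖w‖⁻¹ • w‖ = 1 := fun w hw => norm_inv_norm_smul hw
  refine continuous_iff_continuousAt.2 fun w => ?_
  rcases eq_or_ne w 0 with rfl | hw
  · have : Tendsto (fun w : Fin k → ℝ => ‖w‖ • G (‖w‖⁻¹ • w)) (𝓝 0) (𝓝 0) := by
      refine squeeze_zero_norm (a := fun w => ‖w‖) (fun w => ?_) tendsto_norm_zero
      rcases eq_or_ne w 0 with rfl | hw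
      · simp
      · rw [norm_smul, norm_norm]
        exact mul_le_of_le_one_right (norm_nonneg _) (hb _ (hmaps w hw))
    simpa [ContinuousAt] using this
  · have hc : ContinuousOn (fun w : Fin k → ℝ => ‖w‖ • G (‖w‖⁻¹ • w)) {0}ᶜ := by
      refine continuous_norm.continuousOn.smul (hG.comp ?_ fun w hw => hmaps w hw)
      exact (continuous_norm.continuousOn.inv₀ fun w hw => norm_ne_zero_iff.2 hw).smul
        continuousOn_id
    exact hc.continuousAt (isOpen_compl_singleton.mem_nhds hw)

lemma exists_pos_forall_lt {c : Fin k → ℝ} (hc : ∀ i, 0 < c i) : ∃ t, 0 < t ∧ ∀ i, t < c i := by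
  have h : ∀ᶠ t in 𝓝[>] (0 : ℝ), ∀ i, t < c i := eventually_all.2 fun i =>
    nhdsWithin_le_nhds (Iio_mem_nhds (hc i))
  obtain ⟨t, ht, ht0⟩ := (h.and self_mem_nhdsWithin).exists
  exact ⟨t, ht0, ht⟩

/-- A map which preserves signs on all vectors with support of size less than `m` hits every
vector with support of size less than `m`. -/
lemma exists_preimage_of_sign_eq {G : (Fin k → ℝ) → Fin k → ℝ}
    (hG : ContinuousOn G {x | ‖x‖ = 1}) (hl : ∀ x, ‖x‖ = 1 → l1Norm (G x) = 1) {m : ℕ}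
    (hsign : ∀ x, ‖x‖ = 1 → {j | x j ≠ 0}.ncard < m → ∀ i, sign (G x i) = sign (x i))
    {p : Fin k → ℝ} (hp : l1Norm p = 1) (hpm : {j | p j ≠ 0}.ncard < m) :
    ∃ y, ‖y‖ = 1 ∧ {j | y j ≠ 0}.ncard < m ∧ G y = p := by
  have hb : ∀ x, ‖x‖ = 1 → ‖G x‖ ≤ 1 := fun x hx =>
    (pi_norm_le_iff_of_nonneg zero_le_one).2 fun i => (abs_le_l1Norm _ i).trans (hl x hx).le
  let E : (Fin k → ℝ) → Fin k → ℝ := fun u i => (sign (p i) : ℝ) * u i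
  have hEc : Continuous E := by fun_prop
  have hE0 : ∀ u i, p i = 0 → E u i = 0 := fun u i h => by simp [E, h]
  have hm : ∀ y : Fin k → ℝ, (∀ i, p i = 0 → y i = 0) → {j | y j ≠ 0}.ncard < m := by
    refine fun y hy => lt_of_le_of_lt (Set.ncard_le_ncard fun j hj => ?_) hpm
    exact fun h => hj (hy j h)
  let R : (Fin k → ℝ) → Fin k → ℝ := fun u => ‖E u‖ • G (‖E u‖⁻¹ • E u)
  have hR : Continuous R := (continuous_norm_smul_comp hG hb).comp hEc
  have hc : ∀ i, ∃ c, 0 < c ∧ (p i ≠ 0 → ∀ u ∈ Icc (0 : Fin k → ℝ) 1, u i = 1 →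
      c ≤ (sign (p i) : ℝ) * R u i) := by
    intro i
    by_cases hpi : p i = 0
    · exact ⟨1, one_pos, fun h => absurd hpi h⟩
    have hK : IsCompact (Icc (0 : Fin k → ℝ) 1 ∩ {u | u i = 1}) :=
      isCompact_Icc.inter_right (isClosed_eq (continuous_apply i) continuous_const)
    obtain ⟨u, hu, hmin⟩ := hK.exists_isMinOn ⟨1, by simp, by simp⟩
      (f := fun u => (sign (p i) : ℝ) * R u i) (by fun_prop)
    refine ⟨(sign (p i) : ℝ) * R u i, ?_, fun _ v hv hvi => hmin ⟨hv, hvi⟩⟩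
    have hui : u i = 1 := hu.2
    have hEi : E u i = sign (p i) := by simp [E, hui]
    have hEn : ‖E u‖ = 1 := by
      refine le_antisymm ((pi_norm_le_iff_of_nonneg zero_le_one).2 fun j => ?_) ?_
      · by_cases hj : p j = 0
        · simp [hE0 u j hj]
        · rw [Real.norm_eq_abs, abs_mul, abs_coe_sign hj, one_mul, abs_of_nonneg (hu.1.1 j)]
          exact hu.1.2 j
      · rw [← abs_coe_sign hpi, ← hEi]
        exact norm_le_pi_norm (E u) i
    refine coe_sign_mul_pos hpi ?_
    simp only [R, hEn, inv_one, one_smul]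
    rw [hsign _ hEn (hm _ (hE0 u)), hEi, sign_signType_coe]
  choose c hc0 hc using hc
  obtain ⟨t, ht, htc⟩ := exists_pos_forall_lt hc0
  let h : (Fin k → ℝ) → Fin k → ℝ := fun u i =>
    if p i = 0 then u i - 1 / 2 else (sign (p i) : ℝ) * R u i - t * |p i|
  have hhc : Continuous h := by
    refine continuous_pi fun i => ?_
    by_cases hpi : p i = 0
    · simp only [h, hpi, if_true]; fun_prop
    · simp only [h, hpi, if_false]; fun_prop
  obtain ⟨u, hu, hu0⟩ := poincare_miranda h hhc.continuousOn
    (by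
      intro i u hu hui
      by_cases hpi : p i = 0
      · simp [h, hpi, hui]
      · simp only [h, hpi, if_false]
        have hRi : R u i = 0 := by
          by_cases hE : E u = 0
          · simp [R, hE]
          · have := hsign (‖E u‖⁻¹ • E u) (norm_inv_norm_smul hE)
              (hm _ fun j hj => by simp [hE0 u j hj]) i
            have hEi : E u i = 0 := by simp [E, hui]
            rw [Pi.smul_apply, hEi, smul_zero, sign_zero, sign_eq_zero_iff] at this
            simp [R, this]
        rw [hRi, mul_zero, zero_sub, neg_lt_zero]
        exact mul_pos ht (abs_pos.2 hpi))
    (by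
      intro i u hu hui
      by_cases hpi : p i = 0
      · simp only [h, hpi, hui, if_true]; norm_num
      · simp only [h, hpi, if_false]
        have h1 := hc i hpi u hu hui
        have h2 : t * |p i| ≤ t := mul_le_of_le_one_right ht.le ((abs_le_l1Norm p i).trans hp.le)
        linarith [htc i])
  have hRp : ∀ i, p i ≠ 0 → R u i = t * p i := by
    intro i hpi
    have := congrFun hu0 i
    simp only [h, hpi, if_false, Pi.zero_apply] at this
    rcases lt_or_gt_of_ne hpi with hn | hn
    · simp only [sign_neg hn, abs_of_neg hn, SignType.coe_neg_one] at this
      linarith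
    · simp only [sign_pos hn, abs_of_pos hn, SignType.coe_one] at this
      linarith
  have hE : E u ≠ 0 := by
    intro hE
    have hp0 : p = 0 := by
      funext i
      by_contra hpi
      have := hRp i hpi
      simp only [R, hE, norm_zero, zero_smul, Pi.zero_apply] at this
      exact mul_ne_zero ht.ne' hpi this.symm
    simp [hp0, l1Norm] at hp
  set y := ‖E u‖⁻¹ • E u with hy
  have hyn : ‖y‖ = 1 := norm_inv_norm_smul hE
  have hy0 : ∀ i, p i = 0 → y i = 0 := fun i hi => by simp [hy, hE0 u i hi]
  have hEpos : 0 < ‖E u‖ := norm_pos_iff.2 hE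
  have hGy : ∀ i, ‖E u‖ * G y i = t * p i := by
    intro i
    by_cases hpi : p i = 0
    · have := hsign y hyn (hm y hy0) i
      rw [hy0 i hpi, sign_zero, sign_eq_zero_iff] at this
      rw [this, hpi, mul_zero, mul_zero]
    · exact hRp i hpi
  have ht' : ‖E u‖ = t := by
    have h1 : ‖E u‖ * l1Norm (G y) = t * l1Norm p := by
      simp only [l1Norm, Finset.mul_sum]
      refine Finset.sum_congr rfl fun i _ => ?_
      have := congrArg abs (hGy i)
      rwa [abs_mul, abs_mul, abs_of_pos hEpos, abs_of_pos ht] at this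
    rwa [hl y hyn, hp, mul_one, mul_one] at h1
  refine ⟨y, hyn, hm y hy0, funext fun i => ?_⟩
  have := hGy i
  rw [ht'] at this
  exact mul_left_cancel₀ ht.ne' this

/-- An injective continuous map fixing all signed unit vectors and not increasing support size
preserves signs. -/
lemma sign_eq_of_fix_vertices {G : (Fin k → ℝ) → Fin k → ℝ}
    (hG : ContinuousOn G {x | ‖x‖ = 1}) (hinj : InjOn G {x | ‖x‖ = 1})
    (hl : ∀ x, ‖x‖ = 1 → l1Norm (G x) = 1)
    (hsupp : ∀ x, ‖x‖ = 1 → {i | G x i ≠ 0}.ncard ≤ {i | x i ≠ 0}.ncard)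
    (hfix : ∀ i (ε : ℝ), |ε| = 1 → G (Pi.single i ε) = Pi.single i ε)
    (x : Fin k → ℝ) (hx : ‖x‖ = 1) : ∀ i, sign (G x i) = sign (x i) := by
  induction hm : {j | x j ≠ 0}.ncard using Nat.strong_induction_on generalizing x with
  | _ m ih =>
  have hcard : ∀ y : Fin k → ℝ, ‖y‖ = 1 → (∀ j, sign (y j) = sign (x j)) →
      {j | G y j ≠ 0}.ncard = m := by
    intro y hy hyx
    have hym : {j | y j ≠ 0}.ncard = m := by
      rw [← hm]; simp only [ne_zero_iff_of_sign_eq (hyx _)]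
    refine le_antisymm ((hsupp y hy).trans hym.le) (not_lt.1 fun hlt => ?_)
    obtain ⟨z, hz, hzm, hzy⟩ := exists_preimage_of_sign_eq hG hl
      (fun x hx hxm => ih _ hxm x hx rfl) (hl y hy) hlt
    rw [hinj hz hy hzy, hym] at hzm
    exact lt_irrefl _ hzm
  have hxc := hcard x hx fun _ => rfl
  have hne : ∀ i, x i ≠ 0 → sign (G x i) = sign (x i) := by
    intro i hi
    have hv := hfix i (sign (x i)) (abs_coe_sign hi)
    have := sign_eq_of_const_ncard_support hG hx
      (fun y hy hyx => (hcard y hy hyx).trans hxc.symm) hi (a := i)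
      (by rw [hv, Pi.single_eq_same, ← abs_pos, abs_coe_sign hi]; exact one_pos)
    rw [← this, hv, Pi.single_eq_same, sign_signType_coe]
  have hsub : {j | x j ≠ 0} ⊆ {j | G x j ≠ 0} := fun j hj =>
    (ne_zero_iff_of_sign_eq (hne j hj)).2 hj
  have heq := Set.eq_of_subset_of_ncard_le hsub (by rw [hxc, hm])
  intro i
  by_cases hi : x i = 0
  · have : i ∉ {j | G x j ≠ 0} := by rw [← heq]; simpa using hi
    simp only [mem_ofPred_eq, not_not] at this
    rw [this, hi]
  · exact hne i hi

lemma exists_eq_single_of_ncard_le_one {y : Fin k → ℝ} (hy : l1Norm y = 1)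
    (hc : {j | y j ≠ 0}.ncard ≤ 1) : ∃ i ε, |ε| = 1 ∧ y = Pi.single i ε := by
  obtain ⟨a, ha⟩ : ∃ a, y a ≠ 0 := by
    by_contra! h
    simp [l1Norm, h] at hy
  have h : ∀ j, j ≠ a → y j = 0 := by
    intro j hj
    by_contra hyj
    exact hj ((Set.ncard_le_one (Set.toFinite _)).1 hc j hyj a ha)
  refine ⟨a, y a, ?_, ?_⟩
  · rw [← hy, l1Norm, Finset.sum_eq_single a (fun j _ hj => by simp [h j hj]) (by simp)]
  · funext j
    rcases eq_or_ne j a with rfl | hj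
    · simp
    · simp [h j hj, hj]

lemma ncard_support_single {i : Fin k} {ε : ℝ} (hε : |ε| = 1) :
    {j | (Pi.single i ε : Fin k → ℝ) j ≠ 0}.ncard = 1 := by
  have hε0 : ε ≠ 0 := by rintro rfl; simp at hε
  rw [Set.ncard_eq_one]
  refine ⟨i, ?_⟩
  ext j
  rcases eq_or_ne j i with rfl | hj <;> simp [*]

lemma norm_single_of_abs_eq_one {i : Fin k} {ε : ℝ} (hε : |ε| = 1) :
    ‖(Pi.single i ε : Fin k → ℝ)‖ = 1 := by rw [Pi.norm_single, Real.norm_eq_abs, hε]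

section Vertices

variable {F : (Fin k → ℝ) → Fin k → ℝ}

/-- The map permutes the signed unit vectors. -/
lemma exists_single_preimage (hinj : InjOn F {x | ‖x‖ = 1})
    (hl : ∀ x, ‖x‖ = 1 → l1Norm (F x) = 1)
    (hsupp : ∀ x, ‖x‖ = 1 → {i | F x i ≠ 0}.ncard ≤ {i | x i ≠ 0}.ncard)
    {a : Fin k} {δ : ℝ} (hδ : |δ| = 1) :
    ∃ i ε, |ε| = 1 ∧ F (Pi.single i ε) = Pi.single a δ := by
  let V : Set (Fin k → ℝ) := {v | ∃ i ε, |ε| = 1 ∧ v = Pi.single i ε}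
  have hfin : V.Finite := by
    refine (Set.finite_iUnion fun i : Fin k =>
      Set.toFinite {Pi.single i (1 : ℝ), Pi.single i (-1 : ℝ)}).subset ?_
    rintro v ⟨i, ε, hε, rfl⟩
    rw [Set.mem_iUnion]
    refine ⟨i, ?_⟩
    rcases eq_or_eq_neg_of_abs_eq hε with rfl | rfl <;> simp
  have hVn : V ⊆ {x | ‖x‖ = 1} := by
    rintro v ⟨i, ε, hε, rfl⟩
    exact norm_single_of_abs_eq_one hε
  have hmaps : MapsTo F V V := by
    rintro v ⟨i, ε, hε, rfl⟩
    have hn := norm_single_of_abs_eq_one (i := i) hε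
    exact exists_eq_single_of_ncard_le_one (hl _ hn)
      ((hsupp _ hn).trans (ncard_support_single hε).le)
  obtain ⟨v, ⟨i, ε, hε, rfl⟩, hv⟩ := Set.surj_on_of_inj_on_of_ncard_le (s := V) (t := V)
    (fun v _ => F v) (fun v hv => hmaps hv)
    (fun v w hv hw h => hinj (hVn hv) (hVn hw) h) le_rfl hfin (Pi.single a δ) ⟨a, δ, hδ, rfl⟩
  exact ⟨i, ε, hε, hv.symm⟩

lemma map_single_neg (hF : ContinuousOn F {x | ‖x‖ = 1}) (hinj : InjOn F {x | ‖x‖ = 1})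
    (hl : ∀ x, ‖x‖ = 1 → l1Norm (F x) = 1)
    (hsupp : ∀ x, ‖x‖ = 1 → {i | F x i ≠ 0}.ncard ≤ {i | x i ≠ 0}.ncard)
    {i : Fin k} {ε : ℝ} (hε : |ε| = 1) :
    F (Pi.single i (-ε)) = -F (Pi.single i ε) := by
  have hnv := norm_single_of_abs_eq_one (i := i) hε
  obtain ⟨a, α, hα, hv⟩ := exists_eq_single_of_ncard_le_one (hl _ hnv)
    ((hsupp _ hnv).trans (ncard_support_single hε).le)
  have hα0 : α ≠ 0 := by rintro rfl; simp at hα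
  obtain ⟨j, δ, hδ, hu⟩ := exists_single_preimage hinj hl hsupp (a := a) (δ := -α) (by simpa)
  rcases eq_or_ne j i with rfl | hji
  · rcases abs_eq_abs.1 (hδ.trans hε.symm) with rfl | rfl
    · rw [hv] at hu
      have := congrFun hu a
      simp only [Pi.single_eq_same] at this
      exact absurd (self_eq_neg.1 this) hα0
    · rw [hu, hv, Pi.single_neg]
  · exfalso
    have hsε : (sign ε : ℝ) = ε := by
      rcases eq_or_eq_neg_of_abs_eq hε with rfl | rfl <;> simp
    have hsδ : (sign δ : ℝ) = δ := by
      rcases eq_or_eq_neg_of_abs_eq hδ with rfl | rfl <;> simp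
    have hε0 : ε ≠ 0 := by rintro rfl; simp at hε
    have hδ0 : δ ≠ 0 := by rintro rfl; simp at hδ
    set x : Fin k → ℝ := Pi.single i ε + Pi.single j δ with hxdef
    have hxi : x i = ε := by simp [hxdef, hji.symm]
    have hxj : x j = δ := by simp [hxdef, hji]
    have hxl : ∀ l, l ≠ i → l ≠ j → x l = 0 := fun l h1 h2 => by simp [hxdef, h1, h2]
    have hx : ‖x‖ = 1 := by
      refine le_antisymm ((pi_norm_le_iff_of_nonneg zero_le_one).2 fun l => ?_) ?_
      · by_cases h1 : l = i
        · rw [h1, hxi, Real.norm_eq_abs, hε]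
        by_cases h2 : l = j
        · rw [h2, hxj, Real.norm_eq_abs, hδ]
        · simp [hxl l h1 h2]
      · rw [← hε, ← hxi]; exact norm_le_pi_norm x i
    have hxs : {l | x l ≠ 0} = {i, j} := by
      ext l
      by_cases h1 : l = i
      · simp [h1, hxi, hε0]
      by_cases h2 : l = j
      · simp [h2, hxj, hδ0]
      · simp [hxl l h1 h2, h1, h2]
    have hcard : ∀ y : Fin k → ℝ, ‖y‖ = 1 → (∀ l, sign (y l) = sign (x l)) →
        {l | F y l ≠ 0}.ncard = 2 := by
      intro y hy hyx
      have hy2 : {l | y l ≠ 0}.ncard = 2 := by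
        rw [← Set.ncard_pair hji.symm, ← hxs]
        simp only [ne_zero_iff_of_sign_eq (hyx _)]
      refine le_antisymm ((hsupp y hy).trans hy2.le) (not_lt.1 fun hlt => ?_)
      obtain ⟨b, β, hβ, hyb⟩ := exists_eq_single_of_ncard_le_one (hl y hy) (Nat.lt_succ_iff.1 hlt)
      obtain ⟨l, γ, hγ, hlγ⟩ := exists_single_preimage hinj hl hsupp (a := b) hβ
      rw [← hinj (norm_single_of_abs_eq_one hγ) hy (hlγ.trans hyb.symm),
        ncard_support_single hγ] at hy2
      omega
    have hconst : ∀ y : Fin k → ℝ, ‖y‖ = 1 → (∀ l, sign (y l) = sign (x l)) →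
        {l | F y l ≠ 0}.ncard = {l | F x l ≠ 0}.ncard := fun y hy hyx =>
      (hcard y hy hyx).trans (hcard x hx fun _ => rfl).symm
    have h1 := sign_eq_of_const_ncard_support hF hx hconst (i := i) (by rwa [hxi]) (a := a)
    have h2 := sign_eq_of_const_ncard_support hF hx hconst (i := j) (by rwa [hxj]) (a := a)
    rw [hxi, hsε, hv, Pi.single_eq_same] at h1
    rw [hxj, hsδ, hu, Pi.single_eq_same] at h2
    have h3 := (h1 hα0).trans (h2 (neg_ne_zero.2 hα0)).symm
    rcases lt_or_gt_of_ne hα0 with h | h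
    · rw [sign_neg h, sign_pos (neg_pos.2 h)] at h3; exact absurd h3 (by decide)
    · rw [sign_pos h, sign_neg (neg_lt_zero.2 h)] at h3; exact absurd h3 (by decide)

/-- Up to a permutation, the map preserves the vanishing of coordinates. -/
lemma exists_perm_ne_zero_iff (hF : ContinuousOn F {x | ‖x‖ = 1}) (hinj : InjOn F {x | ‖x‖ = 1})
    (hl : ∀ x, ‖x‖ = 1 → l1Norm (F x) = 1)
    (hsupp : ∀ x, ‖x‖ = 1 → {i | F x i ≠ 0}.ncard ≤ {i | x i ≠ 0}.ncard) :
    ∃ π : Equiv.Perm (Fin k), ∀ x, ‖x‖ = 1 → ∀ i, F x (π i) ≠ 0 ↔ x i ≠ 0 := by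
  have hv : ∀ i : Fin k, ∃ a α, |α| = 1 ∧ F (Pi.single i 1) = Pi.single a α := fun i =>
    have hn := norm_single_of_abs_eq_one (i := i) abs_one
    exists_eq_single_of_ncard_le_one (hl _ hn) ((hsupp _ hn).trans (ncard_support_single abs_one).le)
  choose π s hs hπ using hv
  have hs0 : ∀ i, s i ≠ 0 := fun i h => by simpa [h] using hs i
  have hneg : ∀ i : Fin k, F (Pi.single i (-1)) = -Pi.single (π i) (s i) := fun i => by
    rw [map_single_neg hF hinj hl hsupp abs_one, hπ]
  have hπinj : Function.Injective π := by
    intro i j hij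
    have key : ∀ ε : ℝ, |ε| = 1 → F (Pi.single i 1) = F (Pi.single j ε) → i = j := by
      intro ε hε h
      have h1 := congrFun (hinj (norm_single_of_abs_eq_one abs_one)
        (norm_single_of_abs_eq_one hε) h) i
      by_contra hne
      simp [hne] at h1
    rcases abs_eq_abs.1 ((hs i).trans (hs j).symm) with h | h
    · exact key 1 abs_one (by rw [hπ, hπ, hij, h])
    · exact key (-1) (by simp) (by rw [hπ, hneg, hij, h, Pi.single_neg])
  let e : Equiv.Perm (Fin k) := Equiv.ofBijective π (Finite.injective_iff_bijective.1 hπinj)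
  have he : ∀ i, e i = π i := fun _ => rfl
  let G : (Fin k → ℝ) → Fin k → ℝ := fun x i => s i * F x (e i)
  have hGc : ContinuousOn G {x | ‖x‖ = 1} := continuousOn_pi.2 fun i =>
    continuousOn_const.mul ((continuous_apply (e i)).comp_continuousOn hF)
  have hGinj : InjOn G {x | ‖x‖ = 1} := by
    intro x hx y hy h
    refine hinj hx hy (funext fun b => ?_)
    have := congrFun h (e.symm b)
    simp only [G, Equiv.apply_symm_apply] at this
    exact mul_left_cancel₀ (hs0 _) this
  have hGl : ∀ x, ‖x‖ = 1 → l1Norm (G x) = 1 := by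
    intro x hx
    simp only [l1Norm, G, abs_mul, hs, one_mul]
    rw [Equiv.sum_comp e fun b => |F x b|]
    exact hl x hx
  have hGsupp : ∀ x, ‖x‖ = 1 → {i | G x i ≠ 0}.ncard ≤ {i | x i ≠ 0}.ncard := by
    intro x hx
    refine le_trans ?_ (hsupp x hx)
    rw [← Set.ncard_image_of_injective _ e.injective]
    refine Set.ncard_le_ncard ?_
    rintro _ ⟨i, hi, rfl⟩
    exact right_ne_zero_of_mul hi
  have hGfix1 : ∀ i, G (Pi.single i 1) = Pi.single i 1 := by
    intro i
    funext j
    simp only [G, hπ, he]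
    rcases eq_or_ne j i with rfl | hj
    · rw [Pi.single_eq_same, Pi.single_eq_same, ← abs_mul_abs_self, hs, one_mul]
    · rw [Pi.single_eq_of_ne (hπinj.ne hj), Pi.single_eq_of_ne hj, mul_zero]
  have hGfix : ∀ i (ε : ℝ), |ε| = 1 → G (Pi.single i ε) = Pi.single i ε := by
    intro i ε hε
    rcases eq_or_eq_neg_of_abs_eq hε with rfl | rfl
    · exact hGfix1 i
    · have hsn : (Pi.single i (-1) : Fin k → ℝ) = -Pi.single i 1 := Pi.single_neg i 1
      funext j
      have hj := congrFun (hGfix1 i) j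
      simp only [G, hπ] at hj
      simp only [G, hneg, Pi.neg_apply, mul_neg, hj]
      rw [hsn, Pi.neg_apply]
  refine ⟨e, fun x hx i => ?_⟩
  rw [← ne_zero_iff_of_sign_eq (sign_eq_of_fix_vertices hGc hGinj hGl hGsupp hGfix x hx i)]
  simp [G, hs0]

end Vertices

end Cells

/-- Lemma 4.6 of the paper: if `F : S_{ℓ∞^k} → S_{ℓ1^k}` is injective,
continuous and does not increase support size, then for some permutation `π` the map
`F ∘ P_π` is support preserving; in particular `F` preserves support size. -/
theorem stmt_13 (k : ℕ) (F : (Fin k → ℝ) → (Fin k → ℝ))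
    (hFmaps : ∀ x, supNorm x = 1 → l1Norm (F x) = 1)
    (hcont : ContinuousOn F {x | supNorm x = 1})
    (hinj : Set.InjOn F {x | supNorm x = 1})
    (hsupp : ∀ x, supNorm x = 1 → {i | F x i ≠ 0}.ncard ≤ {i | x i ≠ 0}.ncard) :
    (∃ π : Equiv.Perm (Fin k), ∀ x : Fin k → ℝ, supNorm x = 1 →
      ∀ i, (F (x ∘ π) i ≠ 0 ↔ x i ≠ 0)) ∧
    ∀ x, supNorm x = 1 → {i | F x i ≠ 0}.ncard = {i | x i ≠ 0}.ncard := by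
  simp only [supNorm_eq_norm] at hFmaps hcont hinj hsupp
  obtain ⟨π, hπ⟩ := exists_perm_ne_zero_iff hcont hinj hFmaps hsupp
  refine ⟨⟨π, fun x hx i => ?_⟩, fun x hx => ?_⟩
  · have hxπ : ‖x ∘ π‖ = 1 := by
      rw [← supNorm_eq_norm, ← hx]
      exact π.iSup_comp (g := fun i => |x i|)
    simpa using hπ _ hxπ (π.symm i)
  · rw [supNorm_eq_norm] at hx
    rw [← Set.ncard_image_of_injective {i | x i ≠ 0} π.injective]
    congr 1
    ext i
    rw [← π.apply_symm_apply i]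
    simp only [Set.mem_ofPred_eq, π.injective.mem_set_image]
    exact hπ x hx _
end

section
/- Let d ∈ ℕ with d ≥ 1 and 1 ≤ q ≤ p < ∞. Let X be a real normed space and (e_i)_{i≥1} a normalized 1-unconditional sequence in X satisfying lower p and upper q estimates on block sequences with constant one. Let P ⊆ ℕ and M = {k_1 < k_2 < …} ⊆ ℕ satisfy Assumption A(d, 1/2). Then for any k > k_{2d} and any step preserving continuous map F : S_{ℓ∞^k} → S_{X_k} such that F(1,…,1) ≠ F(−1,…,−1), one has ω_F(1/d) ≥ 1/2, i.e., there exist x, y ∈ S_{ℓ∞^k} with ‖x − y‖_∞ ≤ 1/d and ‖F(x) − F(y)‖ ≥ 1/2. -/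
/-- `ψ(k) = ‖∑_{i=1}^k e_i‖`. -/
noncomputable def psi {X : Type*} [NormedAddCommGroup X] (e : ℕ → X) (k : ℕ) : ℝ :=
  ‖∑ i ∈ Finset.Icc 1 k, e i‖

/-- `ψ_P(k) = min(‖∑_{i ≤ k, i ∈ P} e_i‖, ‖∑_{i ≤ k, i ∉ P} e_i‖)`. -/
noncomputable def psiP {X : Type*} [NormedAddCommGroup X] (e : ℕ → X) (P : Set ℕ)
    (k : ℕ) : ℝ :=
  min ‖∑ i ∈ Finset.Icc 1 k, Set.indicator P e i‖
      ‖∑ i ∈ Finset.Icc 1 k, Set.indicator Pᶜ e i‖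

open Finset in
/-- Power-mean comparison of the `ℓ_q` and `ℓ_p` norms of a finite family. -/
theorem lq_norm_le_rpow_mul_lp_norm (n : ℕ) (hn : 1 ≤ n) {q p : ℝ} (hq : 1 ≤ q) (hqp : q ≤ p)
    (y : ℕ → ℝ) (hy : ∀ j, 0 ≤ y j) :
    (∑ j ∈ range n, y j ^ q) ^ (1 / q) ≤
      (n : ℝ) ^ (1 / q - 1 / p) * (∑ j ∈ range n, y j ^ p) ^ (1 / p) := by
  have hq0 : 0 < q := by linarith
  have hp0 : 0 < p := by linarith
  have hn0 : (0 : ℝ) ≤ n := by positivity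
  have h := Real.rpow_sum_le_const_mul_sum_rpow (range n) (fun j => y j ^ q)
    (p := p / q) (by rw [le_div_iff₀ hq0]; linarith)
  have hyq : ∀ j, 0 ≤ y j ^ q := fun j => Real.rpow_nonneg (hy j) _
  have hyp : ∀ j, 0 ≤ y j ^ p := fun j => Real.rpow_nonneg (hy j) _
  have hS : 0 ≤ ∑ j ∈ range n, y j ^ q := sum_nonneg fun j _ => hyq j
  have hS' : 0 ≤ ∑ j ∈ range n, y j ^ p := sum_nonneg fun j _ => hyp j
  have e1 : ∀ j, |y j ^ q| ^ (p / q) = y j ^ p := fun j => by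
    rw [abs_of_nonneg (hyq j), ← Real.rpow_mul (hy j)]
    congr 1; field_simp
  simp only [e1, card_range] at h
  rw [sum_congr rfl fun j _ => abs_of_nonneg (hyq j)] at h
  have h2 := Real.rpow_le_rpow (by positivity) h (z := 1 / p) (by positivity)
  rw [Real.mul_rpow (by positivity) hS', ← Real.rpow_mul hS, ← Real.rpow_mul hn0] at h2
  convert h2 using 2
  · field_simp
  · congr 1; field_simp

/-- `K` cuts `ℕ` into blocks `(K j, K (j+1)]`; `blockIndex K d m` is the index of the block
containing `m`, all blocks from the `d`-th on being identified. -/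
def blockIndex (K : ℕ → ℕ) (d m : ℕ) : ℕ := ((Finset.Icc 1 d).filter fun l => K l < m).card

theorem blockIndex_le (K : ℕ → ℕ) (d m : ℕ) : blockIndex K d m ≤ d :=
  (Finset.card_filter_le _ _).trans (by simp)

theorem blockIndex_eq {K : ℕ → ℕ} (hK : StrictMono K) {d j m : ℕ} (hj : j ≤ d)
    (h1 : K j < m) (h2 : m ≤ K (j + 1)) : blockIndex K d m = j := by
  have : ((Finset.Icc 1 d).filter fun l => K l < m) = Finset.Icc 1 j := by
    ext l
    simp only [Finset.mem_filter, Finset.mem_Icc]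
    constructor
    · rintro ⟨⟨h3, _⟩, h5⟩
      refine ⟨h3, Nat.lt_succ_iff.1 (hK.lt_iff_lt.1 (h5.trans_le h2))⟩
    · rintro ⟨h3, h4⟩
      exact ⟨⟨h3, h4.trans hj⟩, (hK.monotone h4).trans_lt h1⟩
  rw [blockIndex, this]; simp

open Classical in
/-- Points of `Q` carry the index of their block, the others that of the next block. -/
noncomputable def levelIndex (K : ℕ → ℕ) (d : ℕ) (Q : Set ℕ) (m : ℕ) : ℕ :=
  if m ∈ Q then blockIndex K d m else min (blockIndex K d m + 1) d

theorem levelIndex_le (K : ℕ → ℕ) (d : ℕ) (Q : Set ℕ) (m : ℕ) : levelIndex K d Q m ≤ d := by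
  unfold levelIndex
  split_ifs
  · exact blockIndex_le K d m
  · exact min_le_right _ _

theorem levelIndex_of_last_lt {K : ℕ → ℕ} (hK : StrictMono K) {d m : ℕ} (Q : Set ℕ)
    (h1 : K d < m) (h2 : m ≤ K (d + 1)) : levelIndex K d Q m = d := by
  simp [levelIndex, blockIndex_eq hK le_rfl h1 h2]

theorem sum_range_sum_Ioc {M : Type*} [AddCommMonoid M] {K : ℕ → ℕ} (hK : Monotone K)
    (f : ℕ → M) (n : ℕ) :
    ∑ j ∈ Finset.range n, ∑ m ∈ Finset.Ioc (K j) (K (j + 1)), f m =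
      ∑ m ∈ Finset.Ioc (K 0) (K n), f m := by
  induction n with
  | zero => simp
  | succ n ih =>
    rw [Finset.sum_range_succ, ih,
      Finset.sum_Ioc_consecutive f (hK (Nat.zero_le n)) (hK (Nat.le_succ n))]

section Unconditional

variable {X : Type*} [NormedAddCommGroup X] [NormedSpace ℝ X] {e : ℕ → X}

theorem norm_sum_le_of_subset
    (huncond : ∀ (s : Finset ℕ) (a b : ℕ → ℝ), (∀ i ∈ s, |a i| ≤ |b i|) →
      ‖∑ i ∈ s, a i • e i‖ ≤ ‖∑ i ∈ s, b i • e i‖)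
    {s t : Finset ℕ} (hst : s ⊆ t) (f : ℕ → ℝ) :
    ‖∑ i ∈ s, f i • e i‖ ≤ ‖∑ i ∈ t, f i • e i‖ := by
  have h := huncond t (fun i => if i ∈ s then f i else 0) f
    (fun i _ => by split_ifs <;> simp)
  simpa only [ite_smul, zero_smul, Finset.sum_ite_mem, Finset.inter_eq_right.2 hst] using h

theorem norm_sum_le_of_subset_one
    (huncond : ∀ (s : Finset ℕ) (a b : ℕ → ℝ), (∀ i ∈ s, |a i| ≤ |b i|) →
      ‖∑ i ∈ s, a i • e i‖ ≤ ‖∑ i ∈ s, b i • e i‖)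
    {s t : Finset ℕ} (hst : s ⊆ t) :
    ‖∑ i ∈ s, e i‖ ≤ ‖∑ i ∈ t, e i‖ := by
  simpa using norm_sum_le_of_subset huncond hst (fun _ => 1)

open Classical in
/-- If the coefficients depend only on the level and the part of each block lying in `Q` is large
compared to everything before it, then the part of the vector off `Q` and off the last block
is small. -/
theorem norm_sum_off_le {d : ℕ} (hd : 1 ≤ d) {q p : ℝ} (hq : 1 ≤ q) (hqp : q ≤ p)
    (huncond : ∀ (s : Finset ℕ) (a b : ℕ → ℝ), (∀ i ∈ s, |a i| ≤ |b i|) →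
      ‖∑ i ∈ s, a i • e i‖ ≤ ‖∑ i ∈ s, b i • e i‖)
    (hblock : ∀ (N : ℕ) (x : ℕ → X) (s : ℕ → ℕ),
      (∀ i, i < N → s i < s (i + 1)) →
      (∀ i, i < N → x i ∈ Submodule.span ℝ (e '' {j | s i ≤ j ∧ j < s (i + 1)})) →
      (∑ i ∈ Finset.range N, ‖x i‖ ^ p) ^ (1 / p) ≤ ‖∑ i ∈ Finset.range N, x i‖ ∧
        ‖∑ i ∈ Finset.range N, x i‖ ≤ (∑ i ∈ Finset.range N, ‖x i‖ ^ q) ^ (1 / q))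
    {K : ℕ → ℕ} (hK : StrictMono K) (hK0 : K 0 = 0) (Q : Set ℕ)
    (hQ : ∀ j, 1 ≤ j → j ≤ d → 8 * (d : ℝ) ^ (1 / q - 1 / p) * psi e (K j) ≤
      ‖∑ m ∈ (Finset.Ioc (K j) (K (j + 1))).filter (· ∈ Q), e m‖)
    (hne : ∀ j, 1 ≤ j → j ≤ d → ((Finset.Ioc (K j) (K (j + 1))).filter (· ∈ Q)).Nonempty)
    (f : ℕ → ℝ)
    (hf : ∀ m ∈ Finset.Ioc 0 (K (d + 1)), ∀ m' ∈ Finset.Ioc 0 (K (d + 1)),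
      levelIndex K d Q m = levelIndex K d Q m' → f m = f m') :
    ‖∑ m ∈ (Finset.Ioc 0 (K d)).filter (· ∉ Q), f m • e m‖ ≤
      1 / 8 * ‖∑ m ∈ Finset.Ioc 0 (K (d + 1)), f m • e m‖ := by
  have hq0 : 0 < q := by linarith
  have hD : 0 < (d : ℝ) ^ (1 / q - 1 / p) := by positivity
  have hsub : ∀ i j, i ≤ d → j ∈ Finset.Ioc (K i) (K (i + 1)) → j ∈ Finset.Ioc 0 (K (d + 1)) := by
    intro i j hi hj
    rw [Finset.mem_Ioc] at hj ⊢
    exact ⟨by omega, hj.2.trans (hK.monotone (by omega))⟩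
  have hspan : ∀ (R : ℕ → Prop) [DecidablePred R] (i : ℕ),
      (∑ m ∈ (Finset.Ioc (K i) (K (i + 1))).filter R, f m • e m) ∈
        Submodule.span ℝ (e '' {j | K i + 1 ≤ j ∧ j < K (i + 1) + 1}) := by
    intro R _ i
    refine Submodule.sum_mem _ fun m hm => Submodule.smul_mem _ _ (Submodule.subset_span ⟨m, ?_, rfl⟩)
    rw [Finset.mem_filter, Finset.mem_Ioc] at hm
    simp only [Set.mem_ofPred_eq]
    omega
  set x : ℕ → X := fun j => ∑ m ∈ (Finset.Ioc (K j) (K (j + 1))).filter (· ∉ Q), f m • e m with hx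
  set y : ℕ → X := fun j =>
    ∑ m ∈ (Finset.Ioc (K (j + 1)) (K (j + 1 + 1))).filter (· ∈ Q), f m • e m with hy
  have hxy : ∀ j, j < d → ‖x j‖ ≤ 1 / (8 * (d : ℝ) ^ (1 / q - 1 / p)) * ‖y j‖ := by
    intro j hj
    obtain ⟨m₀, hm₀⟩ := hne (j + 1) (by omega) hj
    have hyj : ∀ m ∈ (Finset.Ioc (K (j + 1)) (K (j + 1 + 1))).filter (· ∈ Q),
        levelIndex K d Q m = j + 1 := by
      intro m hm
      rw [Finset.mem_filter, Finset.mem_Ioc] at hm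
      simp [levelIndex, hm.2, blockIndex_eq hK (show j + 1 ≤ d from hj) hm.1.1 hm.1.2]
    have hxj : ∀ m ∈ (Finset.Ioc (K j) (K (j + 1))).filter (· ∉ Q),
        levelIndex K d Q m = j + 1 := by
      intro m hm
      rw [Finset.mem_filter, Finset.mem_Ioc] at hm
      simp only [levelIndex, hm.2, if_false, blockIndex_eq hK hj.le hm.1.1 hm.1.2]
      omega
    have hm₀' := hsub (j + 1) m₀ hj (Finset.mem_filter.1 hm₀).1
    have hx1 : x j = f m₀ • ∑ m ∈ (Finset.Ioc (K j) (K (j + 1))).filter (· ∉ Q), e m := by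
      rw [Finset.smul_sum]
      refine Finset.sum_congr rfl fun m hm => ?_
      rw [hf m (hsub j m hj.le (Finset.mem_filter.1 hm).1) m₀ hm₀' ((hxj m hm).trans (hyj m₀ hm₀).symm)]
    have hy1 : y j = f m₀ •
        ∑ m ∈ (Finset.Ioc (K (j + 1)) (K (j + 1 + 1))).filter (· ∈ Q), e m := by
      rw [Finset.smul_sum]
      refine Finset.sum_congr rfl fun m hm => ?_
      rw [hf m (hsub (j + 1) m hj (Finset.mem_filter.1 hm).1) m₀ hm₀'
        ((hyj m hm).trans (hyj m₀ hm₀).symm)]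
    have h1 : ‖∑ m ∈ (Finset.Ioc (K j) (K (j + 1))).filter (· ∉ Q), e m‖ ≤ psi e (K (j + 1)) := by
      refine norm_sum_le_of_subset_one huncond fun m hm => ?_
      rw [Finset.mem_filter, Finset.mem_Ioc] at hm
      rw [Finset.mem_Icc]
      omega
    have h2 := hQ (j + 1) (by omega) hj
    rw [hx1, hy1, norm_smul, norm_smul, one_div, le_inv_mul_iff₀ (by positivity)]
    calc 8 * (d : ℝ) ^ (1 / q - 1 / p) *
          (‖f m₀‖ * ‖∑ m ∈ (Finset.Ioc (K j) (K (j + 1))).filter (· ∉ Q), e m‖)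
        ≤ 8 * (d : ℝ) ^ (1 / q - 1 / p) * (‖f m₀‖ * psi e (K (j + 1))) := by gcongr
      _ = ‖f m₀‖ * (8 * (d : ℝ) ^ (1 / q - 1 / p) * psi e (K (j + 1))) := by ring
      _ ≤ _ := by gcongr
  have hxs := (hblock d x (fun j => K j + 1) (fun j _ => by simpa using hK (Nat.lt_succ_self j))
    (fun j _ => hspan (· ∉ Q) j)).2
  have hys := (hblock d y (fun j => K (j + 1) + 1)
    (fun j _ => by simpa using hK (Nat.lt_succ_self (j + 1))) (fun j _ => hspan (· ∈ Q) (j + 1))).1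
  have hxsum : ∑ j ∈ Finset.range d, x j =
      ∑ m ∈ (Finset.Ioc 0 (K d)).filter (· ∉ Q), f m • e m := by
    simp only [hx, Finset.sum_filter]
    rw [sum_range_sum_Ioc hK.monotone, hK0]
  have hysum : ∑ j ∈ Finset.range d, y j =
      ∑ m ∈ (Finset.Ioc (K 1) (K (d + 1))).filter (· ∈ Q), f m • e m := by
    simp only [hy, Finset.sum_filter]
    exact sum_range_sum_Ioc (K := fun j => K (j + 1))
      (fun a b hab => hK.monotone (by omega)) _ d
  have hyle : ‖∑ j ∈ Finset.range d, y j‖ ≤ ‖∑ m ∈ Finset.Ioc 0 (K (d + 1)), f m • e m‖ := by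
    rw [hysum]
    refine norm_sum_le_of_subset huncond (fun m hm => ?_) f
    rw [Finset.mem_filter, Finset.mem_Ioc] at hm
    rw [Finset.mem_Ioc]
    omega
  have hpm := lq_norm_le_rpow_mul_lp_norm d hd hq hqp (fun j => ‖y j‖) (fun j => norm_nonneg _)
  have hsum : (∑ j ∈ Finset.range d, ‖x j‖ ^ q) ^ (1 / q) ≤
      1 / (8 * (d : ℝ) ^ (1 / q - 1 / p)) * (∑ j ∈ Finset.range d, ‖y j‖ ^ q) ^ (1 / q) := by
    set C := 1 / (8 * (d : ℝ) ^ (1 / q - 1 / p)) with hC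
    have hC0 : 0 ≤ C := by positivity
    have hS : 0 ≤ ∑ j ∈ Finset.range d, ‖y j‖ ^ q :=
      Finset.sum_nonneg fun j _ => Real.rpow_nonneg (norm_nonneg _) _
    calc (∑ j ∈ Finset.range d, ‖x j‖ ^ q) ^ (1 / q)
        ≤ (∑ j ∈ Finset.range d, (C * ‖y j‖) ^ q) ^ (1 / q) := by
          refine Real.rpow_le_rpow
            (Finset.sum_nonneg fun j _ => Real.rpow_nonneg (norm_nonneg _) _)
            (Finset.sum_le_sum fun j hj => ?_) (by positivity)
          exact Real.rpow_le_rpow (norm_nonneg _) (hxy j (Finset.mem_range.1 hj)) hq0.le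
      _ = (C ^ q * ∑ j ∈ Finset.range d, ‖y j‖ ^ q) ^ (1 / q) := by
          rw [Finset.mul_sum]
          congr 1
          exact Finset.sum_congr rfl fun j _ => Real.mul_rpow hC0 (norm_nonneg _)
      _ = _ := by
          rw [Real.mul_rpow (Real.rpow_nonneg hC0 _) hS, ← Real.rpow_mul hC0,
            mul_one_div_cancel hq0.ne', Real.rpow_one]
  rw [← hxsum]
  calc ‖∑ j ∈ Finset.range d, x j‖
      ≤ 1 / (8 * (d : ℝ) ^ (1 / q - 1 / p)) * (∑ j ∈ Finset.range d, ‖y j‖ ^ q) ^ (1 / q) :=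
        hxs.trans hsum
    _ ≤ 1 / (8 * (d : ℝ) ^ (1 / q - 1 / p)) * ((d : ℝ) ^ (1 / q - 1 / p) *
          ‖∑ m ∈ Finset.Ioc 0 (K (d + 1)), f m • e m‖) := by
        gcongr
        exact hpm.trans (by gcongr; exact hys.trans hyle)
    _ = _ := by field_simp

end Unconditional

section SupNorm

variable {k : ℕ}

theorem supNorm_le (hk : 0 < k) {x : Fin k → ℝ} {r : ℝ} (h : ∀ i, |x i| ≤ r) : supNorm x ≤ r :=
  haveI : Nonempty (Fin k) := ⟨⟨0, hk⟩⟩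
  ciSup_le h

theorem supNorm_eq_one {x : Fin k → ℝ} (h : ∀ i, |x i| ≤ 1) (i : Fin k) (hi : |x i| = 1) :
    supNorm x = 1 := by
  refine le_antisymm (supNorm_le i.pos h) ?_
  rw [← hi]
  exact le_ciSup (f := fun j => |x j|) (Set.finite_range _).bddAbove i

end SupNorm

section Clamp

/-- Truncation of a real number to `[-1, 1]`. -/
noncomputable def clampUnit (a : ℝ) : ℝ := max (-1) (min 1 a)

theorem abs_clampUnit_le (a : ℝ) : |clampUnit a| ≤ 1 :=
  abs_le.2 ⟨le_max_left _ _, max_le (by norm_num) (min_le_left _ _)⟩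

theorem abs_clampUnit_sub_le (a b : ℝ) : |clampUnit a - clampUnit b| ≤ |a - b| := by
  unfold clampUnit
  refine (abs_max_sub_max_le_max _ _ _ _).trans (max_le (by simp) ?_)
  exact (abs_min_sub_min_le_max _ _ _ _).trans (max_le (by simp) le_rfl)

theorem clampUnit_of_one_le {a : ℝ} (h : 1 ≤ a) : clampUnit a = 1 := by
  simp [clampUnit, h]

theorem clampUnit_of_le_neg_one {a : ℝ} (h : a ≤ -1) : clampUnit a = -1 := by
  rw [clampUnit, min_eq_right (by linarith), max_eq_left h]

theorem continuous_clampUnit : Continuous clampUnit := by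
  unfold clampUnit; fun_prop

/-- The value of level `j` at time `τ`. The two zigzags `c = 0` and `c = 1` are interlaced: each
of them runs through both ends of `[-1, 1]`, and consecutive levels of different zigzags are
`1 / d`-close. -/
noncomputable def zigzag (d : ℕ) (τ : ℝ) (c j : ℕ) : ℝ :=
  clampUnit ((if Even (j + c) then (j : ℝ) - d - τ else d + 1 - j - τ) / d)

theorem continuous_zigzag (d c j : ℕ) : Continuous fun τ => zigzag d τ c j := by
  unfold zigzag
  refine continuous_clampUnit.comp ?_
  split_ifs <;> fun_prop

theorem abs_clampUnit_div_sub_le {d : ℕ} {a b : ℝ} (h : |a - b| ≤ 1) :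
    |clampUnit (a / d) - clampUnit (b / d)| ≤ 1 / d := by
  refine (abs_clampUnit_sub_le _ _).trans ?_
  rw [← sub_div, abs_div, Nat.abs_cast]
  gcongr

theorem abs_zigzag_zero_sub_succ_le (d : ℕ) (τ : ℝ) (j : ℕ) :
    |zigzag d τ 0 j - zigzag d τ 1 (j + 1)| ≤ 1 / d := by
  refine abs_clampUnit_div_sub_le ?_
  rcases Nat.even_or_odd j with h | h
  · have h' : Even (j + 1 + 1) := by grind
    rw [if_pos (by simpa using h), if_pos h', abs_le]
    push_cast; constructor <;> linarith
  · have h' : ¬ Even (j + 1 + 1) := by grind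
    rw [if_neg (by simpa using h), if_neg h', abs_le]
    push_cast; constructor <;> linarith

theorem abs_zigzag_succ_sub_one_le (d : ℕ) (τ : ℝ) (j : ℕ) :
    |zigzag d τ 0 (j + 1) - zigzag d τ 1 j| ≤ 1 / d := by
  refine abs_clampUnit_div_sub_le ?_
  rcases Nat.even_or_odd j with h | h
  · have h' : ¬ Even (j + 1) := by grind
    rw [if_neg (by simpa using h'), if_neg h', abs_le]
    push_cast; constructor <;> linarith
  · have h' : Even (j + 1) := by grind
    rw [if_pos (by simpa using h'), if_pos h', abs_le]
    push_cast; constructor <;> linarith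

theorem abs_zigzag_last_sub_le (d : ℕ) (τ : ℝ) :
    |zigzag d τ 0 d - zigzag d τ 1 d| ≤ 1 / d := by
  refine abs_clampUnit_div_sub_le ?_
  rcases Nat.even_or_odd d with h | h
  · have h' : ¬ Even (d + 1) := by grind
    rw [if_pos (by simpa using h), if_neg h', abs_le]
    constructor <;> linarith
  · have h' : Even (d + 1) := by grind
    rw [if_neg (by simpa using h), if_pos h', abs_le]
    constructor <;> linarith

theorem abs_zigzag_sub_levelIndex_le (K : ℕ → ℕ) (d : ℕ) (P : Set ℕ) (τ : ℝ) (m : ℕ) :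
    |zigzag d τ 0 (levelIndex K d P m) - zigzag d τ 1 (levelIndex K d Pᶜ m)| ≤ 1 / d := by
  rcases (blockIndex_le K d m).lt_or_eq with h | h <;> by_cases hm : m ∈ P
  · simpa [levelIndex, hm, Nat.min_eq_left (show blockIndex K d m + 1 ≤ d from h)] using
      abs_zigzag_zero_sub_succ_le d τ (blockIndex K d m)
  · simpa [levelIndex, hm, Nat.min_eq_left (show blockIndex K d m + 1 ≤ d from h)] using
      abs_zigzag_succ_sub_one_le d τ (blockIndex K d m)
  · simpa [levelIndex, hm, h] using abs_zigzag_last_sub_le d τ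
  · simpa [levelIndex, hm, h] using abs_zigzag_last_sub_le d τ

theorem abs_zigzag_zero_eq_one {d : ℕ} (hd : 1 ≤ d) (τ : ℝ) :
    |zigzag d τ 0 0| = 1 ∨ |zigzag d τ 0 1| = 1 := by
  have hd0 : (0 : ℝ) < d := by exact_mod_cast hd
  rcases le_total 0 τ with h | h
  · left
    rw [zigzag, if_pos (by simp), clampUnit_of_le_neg_one]
    · simp
    · rw [div_le_iff₀ hd0]; push_cast; linarith
  · right
    rw [zigzag, if_neg (by simp), clampUnit_of_one_le]
    · simp
    · rw [le_div_iff₀ hd0]; push_cast; linarith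

theorem abs_zigzag_one_eq_one {d : ℕ} (hd : 1 ≤ d) (τ : ℝ) :
    |zigzag d τ 1 0| = 1 ∨ |zigzag d τ 1 1| = 1 := by
  have hd0 : (0 : ℝ) < d := by exact_mod_cast hd
  rcases le_total 1 τ with h | h
  · right
    rw [zigzag, if_pos (by decide), clampUnit_of_le_neg_one]
    · simp
    · rw [div_le_iff₀ hd0]; push_cast; linarith
  · left
    rw [zigzag, if_neg (by decide), clampUnit_of_one_le]
    · simp
    · rw [le_div_iff₀ hd0]; push_cast; linarith

theorem zigzag_start {d : ℕ} (hd : 1 ≤ d) {j : ℕ} (hj : j ≤ d) (c : ℕ) :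
    zigzag d (-(2 * d)) c j = 1 := by
  have hd0 : (0 : ℝ) < d := by exact_mod_cast hd
  have hj' : (j : ℝ) ≤ d := by exact_mod_cast hj
  have hj0 : (0 : ℝ) ≤ j := by positivity
  refine clampUnit_of_one_le ?_
  rw [le_div_iff₀ hd0]
  split_ifs <;> linarith

theorem zigzag_end {d : ℕ} (hd : 1 ≤ d) {j : ℕ} (hj : j ≤ d) (c : ℕ) :
    zigzag d (3 * d) c j = -1 := by
  have hd1 : (1 : ℝ) ≤ d := by exact_mod_cast hd
  have hd0 : (0 : ℝ) < d := by linarith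
  have hj' : (j : ℝ) ≤ d := by exact_mod_cast hj
  have hj0 : (0 : ℝ) ≤ j := by positivity
  refine clampUnit_of_le_neg_one ?_
  rw [div_le_iff₀ hd0]
  split_ifs <;> linarith

end Clamp

/-- The vector whose coordinate at the point `i + 1` is the value of its level. -/
noncomputable def zigzagVector (K : ℕ → ℕ) (d k : ℕ) (Q : Set ℕ) (c : ℕ) (τ : ℝ) : Fin k → ℝ :=
  fun i => zigzag d τ c (levelIndex K d Q (i + 1))

theorem continuous_zigzagVector (K : ℕ → ℕ) (d k : ℕ) (Q : Set ℕ) (c : ℕ) :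
    Continuous (zigzagVector K d k Q c) :=
  continuous_pi fun _ => continuous_zigzag _ _ _

theorem supNorm_zigzagVector {K : ℕ → ℕ} (hK : StrictMono K) (hK0 : K 0 = 0) {d k : ℕ}
    (hd : 1 ≤ d) (hKk : K (d + 1) = k) {Q : Set ℕ} {m₀ m₁ : ℕ}
    (hm₀ : 1 ≤ m₀ ∧ m₀ ≤ K 1 ∧ m₀ ∈ Q) (hm₁ : 1 ≤ m₁ ∧ m₁ ≤ K 1 ∧ m₁ ∉ Q) {c : ℕ} {τ : ℝ}
    (h : |zigzag d τ c 0| = 1 ∨ |zigzag d τ c 1| = 1) :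
    supNorm (zigzagVector K d k Q c τ) = 1 := by
  have hK1 : K 1 ≤ k := hKk ▸ hK.monotone (by omega)
  have hb : ∀ m, 1 ≤ m → m ≤ K 1 → blockIndex K d m = 0 := fun m h1 h2 =>
    blockIndex_eq hK (Nat.zero_le d) (by omega) h2
  rcases h with h | h
  · refine supNorm_eq_one (fun i => abs_clampUnit_le _) ⟨m₀ - 1, by omega⟩ ?_
    have : levelIndex K d Q (m₀ - 1 + 1) = 0 := by
      rw [Nat.sub_add_cancel hm₀.1, levelIndex, if_pos hm₀.2.2, hb _ hm₀.1 hm₀.2.1]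
    simp only [zigzagVector, this, h]
  · refine supNorm_eq_one (fun i => abs_clampUnit_le _) ⟨m₁ - 1, by omega⟩ ?_
    have : levelIndex K d Q (m₁ - 1 + 1) = 1 := by
      rw [Nat.sub_add_cancel hm₁.1, levelIndex, if_neg hm₁.2.2, hb _ hm₁.1 hm₁.2.1]
      omega
    simp only [zigzagVector, this, h]

/-- A vector of `ℝ^k` as a function of the points `1, …, k`, extended by zero. -/
def extendByZero {k : ℕ} (v : Fin k → ℝ) (m : ℕ) : ℝ := if h : m - 1 < k then v ⟨m - 1, h⟩ else 0

theorem extendByZero_succ {k : ℕ} (v : Fin k → ℝ) (i : Fin k) :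
    extendByZero v (i + 1) = v i := by
  simp [extendByZero]

theorem sum_fin_smul_eq {X : Type*} [AddCommGroup X] [Module ℝ X] (e : ℕ → X) {k : ℕ}
    (v : Fin k → ℝ) :
    ∑ i : Fin k, v i • e ((i : ℕ) + 1) = ∑ m ∈ Finset.Ioc 0 k, extendByZero v m • e m := by
  have h := Fin.sum_univ_eq_sum_range (fun i => extendByZero v (i + 1) • e (i + 1)) k
  simp only [extendByZero_succ] at h
  rw [h, Finset.sum_bij (fun i _ => i + 1)]
  · intro a ha; rw [Finset.mem_range] at ha; rw [Finset.mem_Ioc]; omega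
  · intro a _ b _ h; omega
  · intro b hb; rw [Finset.mem_Ioc] at hb
    exact ⟨b - 1, by rw [Finset.mem_range]; omega, by omega⟩
  · intro a _; rfl

theorem half_le_norm_sub_of_chain {E : Type*} [NormedAddCommGroup E] {a b c d : E} (h : ‖a - d‖ = 2) :
    1 / 2 ≤ ‖a - b‖ ∨ 1 / 2 ≤ ‖b - c‖ ∨ 1 / 2 ≤ ‖c - d‖ := by
  by_contra! h'
  have h1 := norm_sub_le_norm_sub_add_norm_sub a b d
  have h2 := norm_sub_le_norm_sub_add_norm_sub b c d
  linarith [h'.1, h'.2.1, h'.2.2]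

section SphereMap

variable {X : Type*} [NormedAddCommGroup X] [NormedSpace ℝ X] {e : ℕ → X} {k : ℕ}

theorem abs_coord_le_norm (hnorm : ∀ i, 1 ≤ i → ‖e i‖ = 1)
    (huncond : ∀ (s : Finset ℕ) (a b : ℕ → ℝ), (∀ i ∈ s, |a i| ≤ |b i|) →
      ‖∑ i ∈ s, a i • e i‖ ≤ ‖∑ i ∈ s, b i • e i‖) (v : Fin k → ℝ) (i : Fin k) :
    |v i| ≤ ‖∑ i : Fin k, v i • e ((i : ℕ) + 1)‖ := by
  rw [sum_fin_smul_eq]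
  have h := norm_sum_le_of_subset huncond (s := {(i : ℕ) + 1}) (t := Finset.Ioc 0 k)
    (by simp) (extendByZero v)
  simpa [extendByZero_succ, norm_smul, hnorm] using h

theorem continuous_coord (hnorm : ∀ i, 1 ≤ i → ‖e i‖ = 1)
    (huncond : ∀ (s : Finset ℕ) (a b : ℕ → ℝ), (∀ i ∈ s, |a i| ≤ |b i|) →
      ‖∑ i ∈ s, a i • e i‖ ≤ ‖∑ i ∈ s, b i • e i‖) {T : Type*} [TopologicalSpace T]
    {v : T → Fin k → ℝ} (hv : Continuous fun t => ∑ i : Fin k, v t i • e ((i : ℕ) + 1))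
    (i : Fin k) : Continuous fun t => v t i := by
  rw [continuous_iff_continuousAt]
  intro t
  have h := continuous_iff_continuousAt.1 hv t
  rw [ContinuousAt, tendsto_iff_norm_sub_tendsto_zero] at h ⊢
  refine squeeze_zero (fun _ => norm_nonneg _) (fun s => ?_) h
  rw [← Finset.sum_sub_distrib]
  simp only [← sub_smul]
  exact abs_coord_le_norm hnorm huncond (v s - v t) i

/-- A step preserving map sends the two constant vectors to opposite vectors if it separates
them. -/
theorem coord_neg_one_eq_neg {F : (Fin k → ℝ) → (Fin k → ℝ)} (hk : 0 < k)
    (hFmaps : ∀ x, supNorm x = 1 → ‖∑ i : Fin k, F x i • e ((i : ℕ) + 1)‖ = 1)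
    (hstep : ∀ x, supNorm x = 1 → ∀ i j, x i = x j → F x i = F x j)
    (hne : (∑ i : Fin k, F (fun _ => (1 : ℝ)) i • e ((i : ℕ) + 1)) ≠
      ∑ i : Fin k, F (fun _ => (-1 : ℝ)) i • e ((i : ℕ) + 1)) (i j : Fin k) :
    F (fun _ => -1) i = -F (fun _ => 1) j := by
  have h1 : supNorm (fun _ : Fin k => (1 : ℝ)) = 1 := supNorm_eq_one (by simp) ⟨0, hk⟩ (by simp)
  have h2 : supNorm (fun _ : Fin k => (-1 : ℝ)) = 1 := supNorm_eq_one (by simp) ⟨0, hk⟩ (by simp)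
  have e1 : ∀ l, F (fun _ => 1) l = F (fun _ => 1) j := fun l => hstep _ h1 _ _ rfl
  have e2 : ∀ l, F (fun _ => -1) l = F (fun _ => -1) i := fun l => hstep _ h2 _ _ rfl
  have n1 := hFmaps _ h1
  have n2 := hFmaps _ h2
  simp only [e1, e2, ← Finset.smul_sum, norm_smul, Real.norm_eq_abs] at n1 n2 hne
  have h3 : ‖∑ l : Fin k, e ((l : ℕ) + 1)‖ ≠ 0 := fun h => by simp [h] at n1
  have h4 := mul_right_cancel₀ h3 (n2.trans n1.symm)
  rcases abs_eq_abs.1 h4 with h | h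
  · exact absurd (by rw [h]) hne
  · exact h

/-- The case of radius one: three steps lead from one constant vector to the other. -/
theorem exists_half_le_norm_sub_of_supNorm_sub_le_one {F : (Fin k → ℝ) → (Fin k → ℝ)}
    (hk : 2 ≤ k)
    (hFmaps : ∀ x, supNorm x = 1 → ‖∑ i : Fin k, F x i • e ((i : ℕ) + 1)‖ = 1)
    (hstep : ∀ x, supNorm x = 1 → ∀ i j, x i = x j → F x i = F x j)
    (hne : (∑ i : Fin k, F (fun _ => (1 : ℝ)) i • e ((i : ℕ) + 1)) ≠
      ∑ i : Fin k, F (fun _ => (-1 : ℝ)) i • e ((i : ℕ) + 1)) :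
    ∃ x y : Fin k → ℝ, supNorm x = 1 ∧ supNorm y = 1 ∧ supNorm (x - y) ≤ 1 ∧
      1 / 2 ≤ ‖(∑ i : Fin k, F x i • e ((i : ℕ) + 1)) -
        ∑ i : Fin k, F y i • e ((i : ℕ) + 1)‖ := by
  have hk0 : 0 < k := by omega
  let u : Fin k → ℝ := fun i => if (i : ℕ) = 0 then 1 else 0
  let v : Fin k → ℝ := fun i => if (i : ℕ) = 0 then 0 else -1
  have h1 : supNorm (fun _ : Fin k => (1 : ℝ)) = 1 := supNorm_eq_one (by simp) ⟨0, hk0⟩ (by simp)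
  have h2 : supNorm (fun _ : Fin k => (-1 : ℝ)) = 1 := supNorm_eq_one (by simp) ⟨0, hk0⟩ (by simp)
  have hu : supNorm u = 1 :=
    supNorm_eq_one (fun i => by dsimp only [u]; split_ifs <;> simp) ⟨0, hk0⟩ (by simp [u])
  have hv : supNorm v = 1 :=
    supNorm_eq_one (fun i => by dsimp only [v]; split_ifs <;> simp) ⟨1, by omega⟩ (by simp [v])
  have hneg : ∑ i : Fin k, F (fun _ => -1) i • e ((i : ℕ) + 1) =
      -∑ i : Fin k, F (fun _ => 1) i • e ((i : ℕ) + 1) := by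
    rw [← Finset.sum_neg_distrib]
    exact Finset.sum_congr rfl fun i _ => by
      rw [coord_neg_one_eq_neg hk0 hFmaps hstep hne i i, neg_smul]
  have hdist : ‖(∑ i : Fin k, F (fun _ => 1) i • e ((i : ℕ) + 1)) -
      ∑ i : Fin k, F (fun _ => -1) i • e ((i : ℕ) + 1)‖ = 2 := by
    rw [hneg, sub_neg_eq_add, ← two_smul ℝ, norm_smul, hFmaps _ h1]; norm_num
  rcases half_le_norm_sub_of_chain (b := ∑ i : Fin k, F u i • e ((i : ℕ) + 1))
    (c := ∑ i : Fin k, F v i • e ((i : ℕ) + 1)) hdist with h | h | h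
  · refine ⟨_, _, h1, hu, supNorm_le hk0 fun i => ?_, h⟩
    simp only [Pi.sub_apply, u]; split_ifs <;> norm_num
  · refine ⟨_, _, hu, hv, supNorm_le hk0 fun i => ?_, h⟩
    simp only [Pi.sub_apply, u, v]; split_ifs <;> norm_num
  · refine ⟨_, _, hv, h2, supNorm_le hk0 fun i => ?_, h⟩
    simp only [Pi.sub_apply, v]; split_ifs <;> norm_num

open Classical in
theorem norm_sum_filter_le_add_sub
    (huncond : ∀ (s : Finset ℕ) (a b : ℕ → ℝ), (∀ i ∈ s, |a i| ≤ |b i|) →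
      ‖∑ i ∈ s, a i • e i‖ ≤ ‖∑ i ∈ s, b i • e i‖)
    {s t : Finset ℕ} (hst : s ⊆ t) (P : Set ℕ) (f g : ℕ → ℝ)
    (hf : ∀ m ∈ t, m ∉ s → f m = 0) :
    ‖∑ m ∈ t, f m • e m‖ ≤ ‖∑ m ∈ t, f m • e m - ∑ m ∈ t, g m • e m‖ +
      ‖∑ m ∈ s.filter (· ∉ P), f m • e m‖ + ‖∑ m ∈ s.filter (· ∈ P), g m • e m‖ := by
  have h1 : ∑ m ∈ t, f m • e m =
      ∑ m ∈ s.filter (· ∈ P), (f m - g m) • e m + ∑ m ∈ s.filter (· ∉ P), f m • e m +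
        ∑ m ∈ s.filter (· ∈ P), g m • e m := by
    rw [← Finset.sum_subset hst fun m hm hm' => by rw [hf m hm hm', zero_smul],
      ← Finset.sum_filter_add_sum_filter_not s (· ∈ P)]
    simp only [sub_smul, Finset.sum_sub_distrib]
    abel
  have h2 : ‖∑ m ∈ s.filter (· ∈ P), (f m - g m) • e m‖ ≤
      ‖∑ m ∈ t, f m • e m - ∑ m ∈ t, g m • e m‖ := by
    rw [← Finset.sum_sub_distrib]
    simp only [← sub_smul]
    exact norm_sum_le_of_subset huncond ((Finset.filter_subset _ _).trans hst) (f - g)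
  conv_lhs => rw [h1]
  exact norm_add₃_le.trans (by gcongr)

open Classical in
theorem half_le_norm_sub_of_interlaced {d : ℕ} (hd : 1 ≤ d) {q p : ℝ} (hq : 1 ≤ q) (hqp : q ≤ p)
    (hnorm : ∀ i, 1 ≤ i → ‖e i‖ = 1)
    (huncond : ∀ (s : Finset ℕ) (a b : ℕ → ℝ), (∀ i ∈ s, |a i| ≤ |b i|) →
      ‖∑ i ∈ s, a i • e i‖ ≤ ‖∑ i ∈ s, b i • e i‖)
    (hblock : ∀ (N : ℕ) (x : ℕ → X) (s : ℕ → ℕ),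
      (∀ i, i < N → s i < s (i + 1)) →
      (∀ i, i < N → x i ∈ Submodule.span ℝ (e '' {j | s i ≤ j ∧ j < s (i + 1)})) →
      (∑ i ∈ Finset.range N, ‖x i‖ ^ p) ^ (1 / p) ≤ ‖∑ i ∈ Finset.range N, x i‖ ∧
        ‖∑ i ∈ Finset.range N, x i‖ ≤ (∑ i ∈ Finset.range N, ‖x i‖ ^ q) ^ (1 / q))
    {P : Set ℕ} {K : ℕ → ℕ} (hK : StrictMono K) (hK0 : K 0 = 0) (hKk : K (d + 1) = k)
    (hP : ∀ j, j ≤ d → (∃ m, K j < m ∧ m ≤ K (j + 1) ∧ m ∈ P) ∧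
      ∃ m, K j < m ∧ m ≤ K (j + 1) ∧ m ∉ P)
    (hlarge : ∀ Q : Set ℕ, Q = P ∨ Q = Pᶜ → ∀ j, 1 ≤ j → j ≤ d →
      8 * (d : ℝ) ^ (1 / q - 1 / p) * psi e (K j) ≤
        ‖∑ m ∈ (Finset.Ioc (K j) (K (j + 1))).filter (· ∈ Q), e m‖)
    {F : (Fin k → ℝ) → (Fin k → ℝ)}
    (hFmaps : ∀ x, supNorm x = 1 → ‖∑ i : Fin k, F x i • e ((i : ℕ) + 1)‖ = 1)
    (hFcont : ContinuousOn (fun x => ∑ i : Fin k, F x i • e ((i : ℕ) + 1))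
      {x | supNorm x = 1})
    (hstep : ∀ x, supNorm x = 1 → ∀ i j, x i = x j → F x i = F x j)
    (hne : (∑ i : Fin k, F (fun _ => (1 : ℝ)) i • e ((i : ℕ) + 1)) ≠
      ∑ i : Fin k, F (fun _ => (-1 : ℝ)) i • e ((i : ℕ) + 1)) :
    ∃ x y : Fin k → ℝ, supNorm x = 1 ∧ supNorm y = 1 ∧ supNorm (x - y) ≤ 1 / (d : ℝ) ∧
      1 / 2 ≤ ‖(∑ i : Fin k, F x i • e ((i : ℕ) + 1)) -
        ∑ i : Fin k, F y i • e ((i : ℕ) + 1)‖ := by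
  have hKd : K d < k := hKk ▸ hK (Nat.lt_succ_self d)
  have hk0 : 0 < k := by omega
  obtain ⟨⟨m₀, hm₀⟩, ⟨m₁, hm₁⟩⟩ := hP 0 (Nat.zero_le d)
  rw [hK0] at hm₀ hm₁
  set G := zigzagVector K d k P 0 with hG
  set H := zigzagVector K d k Pᶜ 1 with hH
  have hGn : ∀ τ, supNorm (G τ) = 1 := fun τ =>
    supNorm_zigzagVector hK hK0 hd hKk hm₀ hm₁ (abs_zigzag_zero_eq_one hd τ)
  have hHn : ∀ τ, supNorm (H τ) = 1 := fun τ =>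
    supNorm_zigzagVector hK hK0 hd hKk (m₀ := m₁) (m₁ := m₀) ⟨hm₁.1, hm₁.2.1, hm₁.2.2⟩
      ⟨hm₀.1, hm₀.2.1, not_not.2 hm₀.2.2⟩ (abs_zigzag_one_eq_one hd τ)
  have hsmall : ∀ Q : Set ℕ, Q = P ∨ Q = Pᶜ → ∀ c τ,
      supNorm (zigzagVector K d k Q c τ) = 1 →
      ‖∑ m ∈ (Finset.Ioc 0 (K d)).filter (· ∉ Q),
        extendByZero (F (zigzagVector K d k Q c τ)) m • e m‖ ≤ 1 / 8 := by
    intro Q hQ c τ hn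
    have h := norm_sum_off_le hd hq hqp huncond hblock hK hK0 Q (hlarge Q hQ)
      (fun j _ hj => ?_) (extendByZero (F (zigzagVector K d k Q c τ))) (fun m hm m' hm' hmm' => ?_)
    · rwa [hKk, ← sum_fin_smul_eq, hFmaps _ hn, mul_one] at h
    · obtain ⟨⟨m, hm⟩, ⟨m', hm'⟩⟩ := hP j hj
      rcases hQ with rfl | rfl
      · exact ⟨m, by simp [hm]⟩
      · exact ⟨m', by simp [hm']⟩
    · rw [hKk, Finset.mem_Ioc] at hm hm'
      rw [extendByZero, extendByZero, dif_pos (by omega), dif_pos (by omega)]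
      refine hstep _ hn _ _ ?_
      simp only [zigzagVector, Nat.sub_add_cancel (show 1 ≤ m from hm.1),
        Nat.sub_add_cancel (show 1 ≤ m' from hm'.1), hmm']
  set i₀ : Fin k := ⟨k - 1, by omega⟩ with hi₀
  have hcont : Continuous fun τ => F (G τ) i₀ := by
    refine continuous_coord hnorm huncond (v := fun τ => F (G τ)) ?_ i₀
    exact hFcont.comp_continuous (continuous_zigzagVector K d k P 0) hGn
  have hstart : G (-(2 * d)) = fun _ => 1 :=
    funext fun i => zigzag_start hd (levelIndex_le _ _ _ _) 0
  have hend : G (3 * d) = fun _ => -1 :=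
    funext fun i => zigzag_end hd (levelIndex_le _ _ _ _) 0
  obtain ⟨τ, hτ⟩ : ∃ τ, F (G τ) i₀ = 0 := by
    have hneg := coord_neg_one_eq_neg hk0 hFmaps hstep hne i₀ i₀
    rw [← hstart, ← hend] at hneg
    refine mem_range_of_exists_le_of_exists_ge hcont ?_ ?_ <;>
      rcases le_total (F (G (-(2 * d))) i₀) 0 with h | h
    · exact ⟨_, h⟩
    · exact ⟨3 * d, by linarith⟩
    · exact ⟨3 * d, by linarith⟩
    · exact ⟨_, h⟩
  have hzero : ∀ m ∈ Finset.Ioc 0 k, m ∉ Finset.Ioc 0 (K d) →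
      extendByZero (F (G τ)) m = 0 := by
    intro m hm hm'
    rw [Finset.mem_Ioc] at hm hm'
    rw [extendByZero, dif_pos (by omega), ← hτ]
    refine hstep _ (hGn τ) _ _ ?_
    simp only [hG, zigzagVector, hi₀]
    rw [levelIndex_of_last_lt hK P (by omega) (by omega),
      levelIndex_of_last_lt hK P (by omega) (by omega)]
  refine ⟨G τ, H τ, hGn τ, hHn τ, supNorm_le hk0 fun i =>
    abs_zigzag_sub_levelIndex_le K d P τ _, ?_⟩
  have h1 := hsmall P (Or.inl rfl) 0 τ (hGn τ)
  have h2 := hsmall Pᶜ (Or.inr rfl) 1 τ (hHn τ)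
  simp only [Set.mem_compl_iff, not_not] at h2
  have h3 := norm_sum_filter_le_add_sub huncond (Finset.Ioc_subset_Ioc_right hKd.le) P
    (extendByZero (F (G τ))) (extendByZero (F (H τ))) hzero
  rw [← sum_fin_smul_eq, ← sum_fin_smul_eq, hFmaps _ (hGn τ)] at h3
  linarith

open Classical in
theorem mul_psi_le_norm_sum_filter
    (huncond : ∀ (s : Finset ℕ) (a b : ℕ → ℝ), (∀ i ∈ s, |a i| ≤ |b i|) →
      ‖∑ i ∈ s, a i • e i‖ ≤ ‖∑ i ∈ s, b i • e i‖)
    {P : Set ℕ} (hA1 : ∀ k, (psi e k - 1) / 2 ≤ psiP e P k) {D : ℝ} {a b c : ℕ} (hab : a ≤ b)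
    (hbc : b ≤ c) (hA3 : (8 * D / (1 / 2 : ℝ) + 2) * psi e a + 1 ≤ psi e b)
    (Q : Set ℕ) (hQ : Q = P ∨ Q = Pᶜ) :
    8 * D * psi e a ≤ ‖∑ m ∈ (Finset.Ioc a c).filter (· ∈ Q), e m‖ := by
  have hIcc : Finset.Icc 1 b = Finset.Ioc 0 b := by ext; simp [Nat.succ_le_iff]
  have h1 : psiP e P b ≤ ‖∑ m ∈ (Finset.Ioc 0 b).filter (· ∈ Q), e m‖ := by
    rw [← hIcc, Finset.sum_filter]
    rcases hQ with rfl | rfl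
    · exact min_le_left _ _
    · exact min_le_right _ _
  have h2 : ∑ m ∈ (Finset.Ioc 0 b).filter (· ∈ Q), e m =
      ∑ m ∈ (Finset.Ioc 0 a).filter (· ∈ Q), e m + ∑ m ∈ (Finset.Ioc a b).filter (· ∈ Q), e m := by
    simp only [Finset.sum_filter]
    exact (Finset.sum_Ioc_consecutive _ (Nat.zero_le a) hab).symm
  have h3 : ‖∑ m ∈ (Finset.Ioc 0 a).filter (· ∈ Q), e m‖ ≤ psi e a := by
    refine norm_sum_le_of_subset_one huncond fun m hm => ?_
    rw [Finset.mem_filter, Finset.mem_Ioc] at hm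
    rw [Finset.mem_Icc]
    omega
  have h4 : ‖∑ m ∈ (Finset.Ioc a b).filter (· ∈ Q), e m‖ ≤
      ‖∑ m ∈ (Finset.Ioc a c).filter (· ∈ Q), e m‖ :=
    norm_sum_le_of_subset_one huncond
      (Finset.filter_subset_filter _ (Finset.Ioc_subset_Ioc_right hbc))
  have h5 := norm_add_le (∑ m ∈ (Finset.Ioc 0 a).filter (· ∈ Q), e m)
    (∑ m ∈ (Finset.Ioc a b).filter (· ∈ Q), e m)
  rw [← h2] at h5
  have h6 := hA1 b
  linarith

end SphereMap

/-- The endpoints `0, kseq 2, …, kseq (d + 1), k`, continued by `k + 1, k + 2, …`. -/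
def cutPoints (kseq : ℕ → ℕ) (d k j : ℕ) : ℕ :=
  if j = 0 then 0 else if j ≤ d then kseq (j + 1) else k + (j - (d + 1))

theorem strictMono_cutPoints {kseq : ℕ → ℕ} (hkmono : ∀ j, 1 ≤ j → kseq j < kseq (j + 1))
    {d k : ℕ} (hk : kseq (d + 1) < k) : StrictMono (cutPoints kseq d k) := by
  refine strictMono_nat_of_lt_succ fun j => ?_
  unfold cutPoints
  have h1 := hkmono (j + 1) (by omega)
  rcases lt_trichotomy j d with h | rfl | h
  · rw [if_neg (Nat.succ_ne_zero j), if_pos (show j + 1 ≤ d from h)]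
    split_ifs <;> omega
  · rw [if_neg (Nat.succ_ne_zero j), if_neg (show ¬ j + 1 ≤ j by omega)]
    split_ifs <;> omega
  · rw [if_neg (show ¬ j = 0 by omega), if_neg (show ¬ j ≤ d by omega),
      if_neg (show ¬ j + 1 = 0 by omega), if_neg (show ¬ j + 1 ≤ d by omega)]
    omega

theorem monotoneOn_of_lt_succ {kseq : ℕ → ℕ} (hkmono : ∀ j, 1 ≤ j → kseq j < kseq (j + 1))
    {i j : ℕ} (hi : 1 ≤ i) (hij : i ≤ j) : kseq i ≤ kseq j := by
  induction j, hij using Nat.le_induction with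
  | base => exact le_rfl
  | succ j hj ih => exact ih.trans (hkmono j (hi.trans hj)).le

/-- Theorem 5.1 of the paper: under Assumption A(d, 1/2), any step
preserving continuous map `F : S_{ℓ∞^k} → S_{X_k}` with `k > k_{2d}` and
`F(1,…,1) ≠ F(-1,…,-1)` satisfies `ω_F(1/d) ≥ 1/2`. -/
theorem stmt_14 {X : Type*} [NormedAddCommGroup X] [NormedSpace ℝ X]
    (d : ℕ) (hd : 1 ≤ d) (q p : ℝ) (hq : 1 ≤ q) (hqp : q ≤ p)
    (e : ℕ → X)
    (hnorm : ∀ i, 1 ≤ i → ‖e i‖ = 1)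
    (huncond : ∀ (s : Finset ℕ) (a b : ℕ → ℝ), (∀ i ∈ s, |a i| ≤ |b i|) →
      ‖∑ i ∈ s, a i • e i‖ ≤ ‖∑ i ∈ s, b i • e i‖)
    (hblock : ∀ (N : ℕ) (x : ℕ → X) (s : ℕ → ℕ),
      (∀ i, i < N → s i < s (i + 1)) →
      (∀ i, i < N → x i ∈ Submodule.span ℝ (e '' {j | s i ≤ j ∧ j < s (i + 1)})) →
      (∑ i ∈ Finset.range N, ‖x i‖ ^ p) ^ (1 / p) ≤ ‖∑ i ∈ Finset.range N, x i‖ ∧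
        ‖∑ i ∈ Finset.range N, x i‖ ≤ (∑ i ∈ Finset.range N, ‖x i‖ ^ q) ^ (1 / q))
    -- `P` and `M = {kseq 1 < kseq 2 < …}` satisfy Assumption A(d, 1/2):
    (P : Set ℕ) (kseq : ℕ → ℕ)
    (hkmono : ∀ j, 1 ≤ j → kseq j < kseq (j + 1))
    (hA1 : ∀ k, (psi e k - 1) / 2 ≤ psiP e P k)
    (hA2 : ∀ j, 1 ≤ j → (∃ i, kseq j < i ∧ i ≤ kseq (j + 1) ∧ i ∈ P) ∧
      (∃ i, kseq j < i ∧ i ≤ kseq (j + 1) ∧ i ∉ P))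
    (hA3 : ∀ j, 1 ≤ j →
      (8 * (d : ℝ) ^ ((1 : ℝ) / q - 1 / p) / (1 / 2 : ℝ) + 2) * psi e (kseq j) + 1 ≤
        psi e (kseq (j + 1)))
    (k : ℕ) (hk : kseq (2 * d) < k)
    (F : (Fin k → ℝ) → (Fin k → ℝ))
    (hFmaps : ∀ x, supNorm x = 1 → ‖∑ i : Fin k, F x i • e ((i : ℕ) + 1)‖ = 1)
    (hFcont : ContinuousOn (fun x => ∑ i : Fin k, F x i • e ((i : ℕ) + 1))
      {x | supNorm x = 1})
    (hstep : ∀ x, supNorm x = 1 → ∀ i j, x i = x j → F x i = F x j)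
    (hne : (∑ i : Fin k, F (fun _ => (1 : ℝ)) i • e ((i : ℕ) + 1)) ≠
      ∑ i : Fin k, F (fun _ => (-1 : ℝ)) i • e ((i : ℕ) + 1)) :
    ∃ x y : Fin k → ℝ, supNorm x = 1 ∧ supNorm y = 1 ∧ supNorm (x - y) ≤ 1 / (d : ℝ) ∧
      1 / 2 ≤ ‖(∑ i : Fin k, F x i • e ((i : ℕ) + 1)) -
        ∑ i : Fin k, F y i • e ((i : ℕ) + 1)‖ := by
  rcases Nat.lt_or_ge d 2 with hd2 | hd2
  · obtain rfl : d = 1 := by omega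
    have h1 : kseq 1 < kseq 2 := hkmono 1 le_rfl
    have h2 : kseq 2 < k := hk
    simpa using exists_half_le_norm_sub_of_supNorm_sub_le_one (by omega) hFmaps hstep hne
  have hlast : kseq (d + 2) < k := (monotoneOn_of_lt_succ hkmono (by omega) (by omega)).trans_lt hk
  have hlt := hkmono (d + 1) (by omega)
  have hcut : ∀ j, 1 ≤ j → j ≤ d → cutPoints kseq d k j = kseq (j + 1) := fun j h1 h2 => by
    rw [cutPoints, if_neg (by omega), if_pos h2]
  have hcut_last : cutPoints kseq d k (d + 1) = k := by simp [cutPoints]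
  have hcut_le : ∀ j, j ≤ d → kseq (j + 2) ≤ cutPoints kseq d k (j + 1) := by
    intro j hj
    rcases hj.lt_or_eq with h | rfl
    · rw [hcut (j + 1) (by omega) h]
    · rw [hcut_last]; exact hlast.le
  have hle_cut : ∀ j, j ≤ d → cutPoints kseq d k j ≤ kseq (j + 1) := by
    intro j hj
    rcases Nat.eq_zero_or_pos j with rfl | h
    · simp [cutPoints]
    · exact (hcut j h hj).le
  refine half_le_norm_sub_of_interlaced hd hq hqp hnorm huncond hblock
    (strictMono_cutPoints hkmono (hlt.trans hlast)) (P := P) (by simp [cutPoints]) hcut_last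
    (fun j hj => ?_) (fun Q hQ j hj1 hj => ?_) hFmaps hFcont hstep hne
  · obtain ⟨⟨m, hm1, hm2, hm3⟩, ⟨m', hm1', hm2', hm3'⟩⟩ := hA2 (j + 1) (by omega)
    have h1 := hcut_le j hj
    have h2 := hle_cut j hj
    exact ⟨⟨m, by omega, hm2.trans h1, hm3⟩, ⟨m', by omega, hm2'.trans h1, hm3'⟩⟩
  · have h := mul_psi_le_norm_sum_filter huncond hA1 (hkmono (j + 1) (by omega)).le
      (hcut_le j hj) (hA3 (j + 1) (by omega)) Q hQ
    rw [← hcut j hj1 hj] at h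
    convert h
end
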